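/- arXiv:1305.3461 — 2 statements merged into one kernel-verified Lean document; each statement's English description precedes it below -/
import Mathlib

section
/- Let (M,J) be an almost complex manifold realized as an open set 0 ∈ M ⊂ ℝ^{2n}, and let k, k' ≥ 1. For all vectors v₀, v₁, …, v_k ∈ ℝ^{2n} sufficiently close to 0 there exists a J-holomorphic map λ : 𝔻 → M such that λ(0) = v₀ and ∂^l λ/∂x^l (0) = v_l for l = 1, …, k. Moreover λ can be chosen to depend C¹-smoothly on the parameters (v₀, …, v_k) ∈ (ℝ^{2n})^{k+1}, where the space of J-holomorphic maps is equipped with the C^{k'} norm. -/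
/-!
# `J`-holomorphic discs with prescribed jets

Write `J₀ = J(0)`. Near the origin the Cauchy–Riemann equation `∂_yλ = J(λ) ∂ₓλ` is equivalent to
`∂ₓλ + J₀ ∂_yλ = 2 B(λ) ∂ₓλ`, where `B = (id + J₀ J) / 2` vanishes at `0` and can be cut off to a
compactly supported field (`exists_coefficient`). A solution is sought in the form
`λ = e_c + T f`, with `e_c(z) = ∑ z^l c_l` a `J₀`-holomorphic polynomial (cut off outside a larger
disc), `T` the Cauchy transform and `f` a density in the Banach space `Hol` of bounded
`1/2`-Hölder maps on the plane. The equation becomes the fixed point problem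
`f = χ B(e_c + T f) ∂ₓ(e_c + T f)`, whose right-hand side has vanishing derivative in `(c, f)` at
`0` because `B(0) = 0`. The inverse function theorem solves it for small `c` (`fixed_point`,
`exists_family`).

Two analytic facts make this work. First, `T` and its first derivatives are bounded on `Hol`: the
(truncated) Cauchy kernel is a sum of rescaled copies of one smooth shell supported away from `0`,
and the corresponding averages of a Hölder map against a kernel of mean zero decay geometrically
(`potL`, `sumAvg`, `hasFDerivAt_potL`). A telescoping argument over the shells gives
`(∂ₓ + J₀ ∂_y) T f = 2 f` on the disc of radius `2` when `f` vanishes outside it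
(`dbar_cau_of_support`). Second, superposition operators with smooth compactly supported symbol are
smooth on `Hol` (`contDiff_nem`).

Elliptic regularity is not needed. The fixed point problem is set up with an additional
parameter `t : ℂ` that translates the plane; uniqueness shows that the solution for `(t, c)` is the
translate by `t` of the solution for `(0, c)` (`eqOp_trans`), so that smoothness of the solution in
`(t, c)` is smoothness of `λ` jointly in `(c, z)`.

The map sending `c` to the `x`-jet of the disc at `0` has derivative `(c_l) ↦ (l! c_l)` at `c = 0`
(`hasFDerivAt_jet`), hence is locally invertible, and reparametrising by the inverse prescribes the
jet. Joint smoothness in `(v, z)` gives `C¹` dependence, uniformly over the compact disc, of each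
`z`-derivative on `v` (`contDiffOn_jets`, `contDiffOn_one_sup`).
-/

open MeasureTheory Metric Filter Topology Set
open scoped Classical

noncomputable section

/-- `ℝ^{2n}`, the model space of an almost complex manifold of complex dimension `n`. -/
abbrev ESp (n : ℕ) : Type := EuclideanSpace ℝ (Fin (2 * n))

/-- The standard basis vectors of `ℝ^{2n}`. -/
def sb (n : ℕ) (i : Fin (2 * n)) : ESp n := EuclideanSpace.single i (1 : ℝ)

/-- An almost complex structure on a set `M ⊆ ℝ^{2n}`:
a smooth field of endomorphisms of the tangent bundle squaring to `-id`. -/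
structure ACStruct (n : ℕ) (M : Set (ESp n)) : Type where
  J : ESp n → ESp n →L[ℝ] ESp n
  smooth : ContDiffOn ℝ (⊤ : ℕ∞) J M
  sq : ∀ x ∈ M, ∀ v : ESp n, J x (J x v) = -v

/-- The open unit disc in `ℂ`. -/
def unitDisc : Set ℂ := Metric.ball 0 1

/-- Average of `f` over the circle of radius `r` centred at `c`. -/
def circAvg (f : ℂ → ℝ) (c : ℂ) (r : ℝ) : ℝ :=
  (2 * Real.pi)⁻¹ * ∫ t in (0:ℝ)..(2 * Real.pi), f (c + r * Complex.exp (t * Complex.I))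

/-- Subharmonicity on a set `U ⊆ ℂ`: upper semicontinuity together with
the sub-mean value inequality on discs contained in `U`. -/
structure SubhOn (f : ℂ → ℝ) (U : Set ℂ) : Prop where
  usc : UpperSemicontinuousOn f U
  submean : ∀ c r, 0 < r → Metric.closedBall c r ⊆ U → f c ≤ circAvg f c r

/-- A `J`-holomorphic disc in `M`: smooth on the unit disc, mapping the unit disc into `M`,
and satisfying `λ'(∂/∂z̄) ∈ T^{0,1}M`, i.e. `∂λ/∂y = J(λ)(∂λ/∂x)`. -/
structure IsJHoloDisc {n : ℕ} {M : Set (ESp n)} (S : ACStruct n M) (lam : ℂ → ESp n) : Prop where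
  smooth : ∀ z ∈ unitDisc, ContDiffAt ℝ (⊤ : ℕ∞) lam z
  maps : Set.MapsTo lam unitDisc M
  CR : ∀ z ∈ unitDisc, fderiv ℝ lam z Complex.I = S.J (lam z) (fderiv ℝ lam z 1)

/-- `J`-plurisubharmonicity on `Ω`: upper semicontinuous on `Ω`, and subharmonic along
every `J`-holomorphic disc with image in `Ω`. -/
def JPsh {n : ℕ} {M : Set (ESp n)} (S : ACStruct n M) (Ω : Set (ESp n)) (u : ESp n → ℝ) : Prop :=
  UpperSemicontinuousOn u Ω ∧
  ∀ lam : ℂ → ESp n, IsJHoloDisc S lam → Set.MapsTo lam unitDisc Ω →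
    SubhOn (fun z => u (lam z)) unitDisc

/-- Strict `J`-plurisubharmonicity on `Ω`: `u` is `J`-plurisubharmonic, and for every
`D ⋐ Ω` and every `C²` function `φ` on a neighbourhood of `D̄` there is `ε > 0` with
`u + εφ` `J`-plurisubharmonic on `D`. -/
def StrictJPsh {n : ℕ} {M : Set (ESp n)} (S : ACStruct n M) (Ω : Set (ESp n))
    (u : ESp n → ℝ) : Prop :=
  JPsh S Ω u ∧
  ∀ D : Set (ESp n), IsOpen D → closure D ⊆ Ω → IsCompact (closure D) →
    ∀ φ : ESp n → ℝ,
      (∃ V : Set (ESp n), IsOpen V ∧ closure D ⊆ V ∧ ContDiffOn ℝ 2 φ V) →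
      ∃ ε : ℝ, 0 < ε ∧ JPsh S D (fun x => u x + ε * φ x)

instance : CompactSpace (Metric.closedBall (0:ℂ) 1) :=
  isCompact_iff_compactSpace.mp (isCompact_closedBall 0 1)

namespace JDisc

set_option maxSynthPendingDepth 3
set_option linter.unusedSectionVars false

section

/-! ### The Banach space of bounded `1/2`-Hölder maps on the plane -/

variable {V W Z : Type} [NormedAddCommGroup V] [NormedSpace ℝ V] [NormedAddCommGroup W]
  [NormedSpace ℝ W] [NormedAddCommGroup Z] [NormedSpace ℝ Z]

/-- Pairs of distinct points of the plane. -/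
abbrev OffDiag : Type := {p : ℂ × ℂ // p.1 ≠ p.2}

/-- The space `C^{1/2}_b(ℂ, V)` of bounded `1/2`-Hölder maps. An element is encoded as a pair
consisting of the map `f` and of its Hölder quotient `(f x - f y) / √‖x - y‖` off the diagonal,
both bounded; the norm is the larger of the two sup norms. -/
def HolSub (V : Type) [NormedAddCommGroup V] [NormedSpace ℝ V] :
    Submodule ℝ (BoundedContinuousFunction ℂ V × BoundedContinuousFunction OffDiag V) where
  carrier := {q | ∀ p : OffDiag, √‖p.1.1 - p.1.2‖ • q.2 p = q.1 p.1.1 - q.1 p.1.2}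
  add_mem' := by
    intro a b ha hb p
    simp only [mem_ofPred_eq] at ha hb
    simp only [Prod.fst_add, Prod.snd_add, BoundedContinuousFunction.add_apply, smul_add, ha, hb]
    abel
  zero_mem' := by intro p; simp
  smul_mem' := by
    intro c a ha p
    simp only [mem_ofPred_eq] at ha
    simp only [Prod.smul_fst, Prod.smul_snd, BoundedContinuousFunction.smul_apply]
    rw [smul_comm, ha, smul_sub]

/-- The Banach space `C^{1/2}_b(ℂ, V)`. -/
def Hol (V : Type) [NormedAddCommGroup V] [NormedSpace ℝ V] : Type := HolSub V

namespace Hol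

instance : NormedAddCommGroup (Hol V) := inferInstanceAs (NormedAddCommGroup (HolSub V))

instance : NormedSpace ℝ (Hol V) := inferInstanceAs (NormedSpace ℝ (HolSub V))

/-- The map underlying an element of `Hol V`. -/
def toFn (u : Hol V) : ℂ → V := fun x => (show HolSub V from u).1.1 x

instance : CoeFun (Hol V) (fun _ => ℂ → V) := ⟨toFn⟩

theorem isClosed_holSub : IsClosed (HolSub V : Set (BoundedContinuousFunction ℂ V ×
    BoundedContinuousFunction OffDiag V)) := by
  have : (HolSub V : Set (BoundedContinuousFunction ℂ V × BoundedContinuousFunction OffDiag V))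
      = ⋂ p : OffDiag, {q | √‖p.1.1 - p.1.2‖ • q.2 p = q.1 p.1.1 - q.1 p.1.2} := by
    ext q; simp [HolSub]
  rw [this]
  refine isClosed_iInter fun p => isClosed_eq ?_ ?_
  · exact ((continuous_eval_const p).comp
      continuous_snd).const_smul _
  · exact ((continuous_eval_const p.1.1).comp
      continuous_fst).sub ((continuous_eval_const p.1.2).comp
      continuous_fst)

instance [CompleteSpace V] : CompleteSpace (Hol V) :=
  isClosed_holSub.completeSpace_coe

theorem norm_apply_le (u : Hol V) (x : ℂ) : ‖u x‖ ≤ ‖u‖ :=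
  (u.1.1.norm_coe_le_norm x).trans (norm_fst_le u.1)

theorem norm_sub_le (u : Hol V) (x y : ℂ) : ‖u x - u y‖ ≤ ‖u‖ * √‖x - y‖ := by
  by_cases h : x = y
  · subst h; simp
  · have h1 : √‖x - y‖ • u.1.2 ⟨(x, y), h⟩ = u x - u y := u.2 ⟨(x, y), h⟩
    rw [← h1, norm_smul, Real.norm_of_nonneg (Real.sqrt_nonneg _), mul_comm]
    gcongr
    exact (u.1.2.norm_coe_le_norm _).trans (norm_snd_le u.1)

theorem continuous (u : Hol V) : Continuous (u : ℂ → V) := u.1.1.continuous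

theorem ext {u v : Hol V} (h : ∀ x, u x = v x) : u = v := by
  have h1 : u.1.1 = v.1.1 := BoundedContinuousFunction.ext h
  have h2 : u.1.2 = v.1.2 := by
    ext p
    have hu : √‖p.1.1 - p.1.2‖ • u.1.2 p = u.1.1 p.1.1 - u.1.1 p.1.2 := u.2 p
    have hv : √‖p.1.1 - p.1.2‖ • v.1.2 p = v.1.1 p.1.1 - v.1.1 p.1.2 := v.2 p
    rw [h1, ← hv] at hu
    have hp : √‖p.1.1 - p.1.2‖ ≠ 0 := by
      rw [Real.sqrt_ne_zero']
      exact norm_pos_iff.2 (sub_ne_zero.2 p.2)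
    exact smul_right_injective V hp hu
  exact Subtype.ext (Prod.ext h1 h2)

theorem norm_le {u : Hol V} {A : ℝ} (hA : 0 ≤ A) (h1 : ∀ x, ‖u x‖ ≤ A)
    (h2 : ∀ x y, ‖u x - u y‖ ≤ A * √‖x - y‖) : ‖u‖ ≤ A := by
  refine max_le ((BoundedContinuousFunction.norm_le hA).2 h1)
    ((BoundedContinuousFunction.norm_le hA).2 fun p => ?_)
  have hp : 0 < √‖p.1.1 - p.1.2‖ := Real.sqrt_pos.2 (norm_pos_iff.2 (sub_ne_zero.2 p.2))
  have h := h2 p.1.1 p.1.2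
  have hu : √‖p.1.1 - p.1.2‖ • u.1.2 p = u p.1.1 - u p.1.2 := u.2 p
  rw [← hu, norm_smul, Real.norm_of_nonneg hp.le, mul_comm] at h
  exact le_of_mul_le_mul_right h hp

/-- A map with a `1/2`-Hölder bound is continuous. -/
theorem continuous_of_bound {f : ℂ → V} {A : ℝ}
    (h2 : ∀ x y, ‖f x - f y‖ ≤ A * √‖x - y‖) : Continuous f := by
  rw [continuous_iff_continuousAt]
  intro y
  rw [ContinuousAt, tendsto_iff_norm_sub_tendsto_zero]
  refine squeeze_zero (fun _ => norm_nonneg _) (fun x => h2 x y) ?_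
  have : Continuous fun x : ℂ => A * √‖x - y‖ := by fun_prop
  simpa using this.tendsto y

/-- The element of `Hol V` given by a map with a common bound `A` for its size and its Hölder
quotient. -/
def mk (f : ℂ → V) (A : ℝ) (h1 : ∀ x, ‖f x‖ ≤ A)
    (h2 : ∀ x y, ‖f x - f y‖ ≤ A * √‖x - y‖) : Hol V :=
  ⟨(BoundedContinuousFunction.ofNormedAddCommGroup f (continuous_of_bound h2) A h1,
    BoundedContinuousFunction.ofNormedAddCommGroup
      (fun p : OffDiag => (√‖p.1.1 - p.1.2‖)⁻¹ • (f p.1.1 - f p.1.2))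
      (by
        have hf := continuous_of_bound h2
        refine Continuous.smul (Continuous.inv₀ (by fun_prop) fun p => ?_) (by fun_prop)
        exact (Real.sqrt_pos.2 (norm_pos_iff.2 (sub_ne_zero.2 p.2))).ne') A
      (by
        intro p
        have hp : 0 < √‖p.1.1 - p.1.2‖ := Real.sqrt_pos.2 (norm_pos_iff.2 (sub_ne_zero.2 p.2))
        rw [norm_smul, norm_inv, Real.norm_of_nonneg hp.le, inv_mul_le_iff₀ hp, mul_comm]
        exact h2 _ _)), by
    intro p
    have hp : √‖p.1.1 - p.1.2‖ ≠ 0 :=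
      (Real.sqrt_pos.2 (norm_pos_iff.2 (sub_ne_zero.2 p.2))).ne'
    exact smul_inv_smul₀ hp _⟩

@[simp] theorem mk_apply (f : ℂ → V) (A : ℝ) (h1 : ∀ x, ‖f x‖ ≤ A)
    (h2 : ∀ x y, ‖f x - f y‖ ≤ A * √‖x - y‖) (x : ℂ) : mk f A h1 h2 x = f x := rfl

theorem norm_mk_le (f : ℂ → V) (A : ℝ) (h1 : ∀ x, ‖f x‖ ≤ A)
    (h2 : ∀ x y, ‖f x - f y‖ ≤ A * √‖x - y‖) : ‖mk f A h1 h2‖ ≤ A :=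
  norm_le ((norm_nonneg _).trans (h1 0)) h1 h2

@[simp] theorem add_apply (u v : Hol V) (x : ℂ) : (u + v) x = u x + v x := rfl
@[simp] theorem sub_apply (u v : Hol V) (x : ℂ) : (u - v) x = u x - v x := rfl
@[simp] theorem smul_apply (c : ℝ) (u : Hol V) (x : ℂ) : (c • u) x = c • u x := rfl
@[simp] theorem zero_apply (x : ℂ) : (0 : Hol V) x = 0 := rfl

/-- A linear map into `Hol V` prescribed pointwise, with a bound for sizes and Hölder quotients. -/
def lift {X : Type} [NormedAddCommGroup X] [NormedSpace ℝ X] (L : X → ℂ → V) (C : ℝ)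
    (hadd : ∀ a b x, L (a + b) x = L a x + L b x)
    (hsmul : ∀ (c : ℝ) a x, L (c • a) x = c • L a x)
    (h1 : ∀ a x, ‖L a x‖ ≤ C * ‖a‖)
    (h2 : ∀ a x y, ‖L a x - L a y‖ ≤ C * ‖a‖ * √‖x - y‖) : X →L[ℝ] Hol V :=
  LinearMap.mkContinuous
    { toFun := fun a => mk (L a) (C * ‖a‖) (h1 a) (h2 a)
      map_add' := fun a b => ext (hadd a b)
      map_smul' := fun c a => ext (hsmul c a) } C
    (fun a => norm_mk_le (L a) (C * ‖a‖) (h1 a) (h2 a))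

@[simp] theorem lift_apply {X : Type} [NormedAddCommGroup X] [NormedSpace ℝ X] (L : X → ℂ → V)
    (C : ℝ) (hadd) (hsmul) (h1) (h2) (a : X) (x : ℂ) :
    lift L C hadd hsmul h1 h2 a x = L a x := rfl

theorem norm_lift_le {X : Type} [NormedAddCommGroup X] [NormedSpace ℝ X] (L : X → ℂ → V)
    (C : ℝ) (hadd) (hsmul) (h1) (h2) (a : X) :
    ‖lift L C hadd hsmul h1 h2 a‖ ≤ C * ‖a‖ := norm_mk_le _ _ (h1 a) (h2 a)

/-- Evaluation at a point. -/
def evalL (x : ℂ) : Hol V →L[ℝ] V :=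
  LinearMap.mkContinuous
    { toFun := fun u => u x
      map_add' := fun _ _ => rfl
      map_smul' := fun _ _ => rfl } 1 (fun u => by rw [one_mul]; exact norm_apply_le u x)

@[simp] theorem evalL_apply (x : ℂ) (u : Hol V) : evalL x u = u x := rfl

/-- Constant maps. -/
def constL : V →L[ℝ] Hol V :=
  lift (fun a _ => a) 1 (fun _ _ _ => rfl) (fun _ _ _ => rfl) (fun a _ => by simp)
    (fun a x y => by simp; positivity)

@[simp] theorem constL_apply (a : V) (x : ℂ) : constL a x = a := rfl

/-- Composition with a continuous linear map. -/
def postL (L : V →L[ℝ] W) : Hol V →L[ℝ] Hol W :=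
  lift (fun u x => L (u x)) ‖L‖ (fun u v x => by simp) (fun c u x => by simp)
    (fun u x => (L.le_opNorm _).trans (by gcongr; exact norm_apply_le u x))
    (fun u x y => by
      rw [← map_sub, mul_assoc]
      exact (L.le_opNorm _).trans (by gcongr; exact norm_sub_le u x y))

@[simp] theorem postL_apply (L : V →L[ℝ] W) (u : Hol V) (x : ℂ) : postL L u x = L (u x) := rfl

/-- Translation by `s`. -/
def transL (s : ℂ) : Hol V →L[ℝ] Hol V :=
  lift (fun u x => u (x + s)) 1 (fun u v x => rfl) (fun c u x => rfl)
    (fun u x => by simpa using norm_apply_le u (x + s))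
    (fun u x y => by simpa using norm_sub_le u (x + s) (y + s))

@[simp] theorem transL_apply (s : ℂ) (u : Hol V) (x : ℂ) : transL s u x = u (x + s) := rfl

theorem norm_transL_le (s : ℂ) (u : Hol V) : ‖transL s u‖ ≤ ‖u‖ :=
  norm_le (norm_nonneg _) (fun x => norm_apply_le u (x + s))
    (fun x y => by simpa using norm_sub_le u (x + s) (y + s))

theorem norm_pair_le (a : Hol (V →L[ℝ] W)) (u : Hol V) (x y : ℂ) :
    ‖a x (u x) - a y (u y)‖ ≤ 2 * ‖a‖ * ‖u‖ * √‖x - y‖ := by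
  have h : a x (u x) - a y (u y) = a x (u x - u y) + (a x - a y) (u y) := by simp
  rw [h]
  have h1 : ‖a x (u x - u y)‖ ≤ ‖a‖ * (‖u‖ * √‖x - y‖) :=
    ((a x).le_opNorm _).trans (by gcongr; exacts [norm_apply_le a x, norm_sub_le u x y])
  have h2 : ‖(a x - a y) (u y)‖ ≤ (‖a‖ * √‖x - y‖) * ‖u‖ :=
    ((a x - a y).le_opNorm _).trans (by gcongr; exacts [norm_sub_le a x y, norm_apply_le u y])
  refine (norm_add_le _ _).trans ((add_le_add h1 h2).trans (le_of_eq (by ring)))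

theorem norm_pair_le' (a : Hol (V →L[ℝ] W)) (u : Hol V) (x : ℂ) :
    ‖a x (u x)‖ ≤ 2 * ‖a‖ * ‖u‖ := by
  have h1 : ‖a x (u x)‖ ≤ ‖a‖ * ‖u‖ :=
    ((a x).le_opNorm _).trans (by gcongr; exacts [norm_apply_le a x, norm_apply_le u x])
  have : 0 ≤ ‖a‖ * ‖u‖ := by positivity
  linarith

/-- The pointwise application of a field of operators to a field of vectors, as a bounded
bilinear map. -/
def pairL : Hol (V →L[ℝ] W) →L[ℝ] Hol V →L[ℝ] Hol W :=
  LinearMap.mkContinuous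
    { toFun := fun a => lift (fun u x => a x (u x)) (2 * ‖a‖) (fun u v x => by simp)
        (fun c u x => by simp) (norm_pair_le' a) (norm_pair_le a)
      map_add' := fun a b => by
        ext1 u
        exact ext fun x => rfl
      map_smul' := fun c a => by
        ext1 u
        exact ext fun x => rfl } 2
    (fun a => ContinuousLinearMap.opNorm_le_bound _ (by positivity) fun u =>
      norm_le (by positivity) (norm_pair_le' a u) (norm_pair_le a u))

@[simp] theorem pairL_apply (a : Hol (V →L[ℝ] W)) (u : Hol V) (x : ℂ) :
    pairL a u x = a x (u x) := rfl

/-! ### Superposition operators -/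

/-- Far apart points are handled by the sup bound, nearby points by the Lipschitz bound. -/
theorem holder_of_near {f : ℂ → V} {A B : ℝ} (h1 : ∀ x, ‖f x‖ ≤ A) (hA : 0 ≤ A) (hB : 0 ≤ B)
    (h2 : ∀ x y, ‖x - y‖ ≤ 1 → ‖f x - f y‖ ≤ B * √‖x - y‖) (x y : ℂ) :
    ‖f x - f y‖ ≤ (2 * A + B) * √‖x - y‖ := by
  by_cases h : ‖x - y‖ ≤ 1
  · refine (h2 x y h).trans ?_
    gcongr
    linarith
  · have h3 : 1 ≤ √‖x - y‖ := Real.one_le_sqrt.2 (le_of_not_ge h)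
    have h4 := norm_sub_le_of_le (h1 x) (h1 y)
    nlinarith

theorem le_sqrt_of_le_one {r : ℝ} (h0 : 0 ≤ r) (h : r ≤ 1) : r ≤ √r := by
  exact Real.le_sqrt_of_sq_le (by nlinarith)

/-- The unbounded part `b` of the argument of a superposition operator is `1`-Lipschitz. -/
def IsBase (b : ℂ → V) : Prop := ∀ x y, ‖b x - b y‖ ≤ ‖x - y‖

theorem base_near {b : ℂ → V} (hb : IsBase b) (u : Hol V) (x y : ℂ) (h : ‖x - y‖ ≤ 1) :
    ‖(b x + u x) - (b y + u y)‖ ≤ (1 + ‖u‖) * √‖x - y‖ := by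
  have h1 : (b x + u x) - (b y + u y) = (b x - b y) + (u x - u y) := by abel
  rw [h1, add_mul, one_mul]
  exact (norm_add_le _ _).trans (add_le_add
    ((hb x y).trans (le_sqrt_of_le_one (norm_nonneg _) h)) (norm_sub_le u x y))

theorem lip_of_fderiv {g : V → W} (hg : Differentiable ℝ g) {C : ℝ}
    (hC : ∀ v, ‖fderiv ℝ g v‖ ≤ C) (v w : V) : ‖g v - g w‖ ≤ C * ‖v - w‖ :=
  Convex.norm_image_sub_le_of_norm_fderiv_le (s := univ) (fun x _ => hg x) (fun x _ => hC x)
    convex_univ (mem_univ _) (mem_univ _)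

theorem exists_bound {g : V → W} (hg : Continuous g) (hc : HasCompactSupport g) :
    ∃ C, 0 ≤ C ∧ ∀ v, ‖g v‖ ≤ C := by
  obtain ⟨C, hC⟩ := hg.bounded_above_of_compact_support hc
  exact ⟨C, (norm_nonneg _).trans (hC 0), hC⟩

theorem nem_exists {b : ℂ → V} (hb : IsBase b) {g : V → W} (hg : ContDiff ℝ (⊤ : ℕ∞) g)
    (hc : HasCompactSupport g) (u : Hol V) : ∃ A, (∀ x, ‖g (b x + u x)‖ ≤ A) ∧
    ∀ x y, ‖g (b x + u x) - g (b y + u y)‖ ≤ A * √‖x - y‖ := by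
  obtain ⟨C, hC0, hC⟩ := exists_bound hg.continuous hc
  obtain ⟨D, hD0, hD⟩ := exists_bound (hg.continuous_fderiv (by simp)) (hc.fderiv ℝ)
  refine ⟨2 * C + D * (1 + ‖u‖), fun x => (hC _).trans ?_, ?_⟩
  · have : 0 ≤ D * (1 + ‖u‖) := by positivity
    linarith
  · refine holder_of_near (fun x => hC (b x + u x)) hC0 (by positivity) fun x y h => ?_
    refine (lip_of_fderiv (hg.differentiable (by simp)) hD _ _).trans ?_
    rw [mul_assoc]
    gcongr
    exact base_near hb u x y h

/-- The superposition operator `u ↦ g ∘ (b + u)`. -/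
def nem {b : ℂ → V} (hb : IsBase b) {g : V → W} (hg : ContDiff ℝ (⊤ : ℕ∞) g)
    (hc : HasCompactSupport g) (u : Hol V) : Hol W :=
  mk (fun x => g (b x + u x)) _ (nem_exists hb hg hc u).choose_spec.1
    (nem_exists hb hg hc u).choose_spec.2

@[simp] theorem nem_apply {b : ℂ → V} (hb : IsBase b) {g : V → W}
    (hg : ContDiff ℝ (⊤ : ℕ∞) g) (hc : HasCompactSupport g) (u : Hol V) (x : ℂ) :
    nem hb hg hc u x = g (b x + u x) := rfl

/-- The first order Taylor remainder of `g`, with its quadratic bounds. The second bound holds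
since `h ↦ rem v h - rem v' h` vanishes at `0` and has derivative
`(g' (v + h) - g' (v' + h)) - (g' v - g' v')`. -/
theorem rem_bounds {g : V → W} (hg : ContDiff ℝ (⊤ : ℕ∞) g) {C D : ℝ}
    (hD0 : 0 ≤ D) (hC0 : 0 ≤ C)
    (hC : ∀ v, ‖fderiv ℝ (fderiv ℝ g) v‖ ≤ C)
    (hD : ∀ v, ‖fderiv ℝ (fderiv ℝ (fderiv ℝ g)) v‖ ≤ D) :
    (∀ v h h' : V, ∀ r : ℝ, ‖h‖ ≤ r → ‖h'‖ ≤ r →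
      ‖(g (v + h) - g v - fderiv ℝ g v h) - (g (v + h') - g v - fderiv ℝ g v h')‖
        ≤ C * r * ‖h - h'‖) ∧
    (∀ v v' h : V, ‖(g (v + h) - g v - fderiv ℝ g v h) -
        (g (v' + h) - g v' - fderiv ℝ g v' h)‖ ≤ D * ‖v - v'‖ * ‖h‖ * ‖h‖) := by
  have hg1 : ContDiff ℝ (⊤ : ℕ∞) (fderiv ℝ g) := hg.fderiv_right (by simp)
  have hg2 : ContDiff ℝ (⊤ : ℕ∞) (fderiv ℝ (fderiv ℝ g)) := hg1.fderiv_right (by simp)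
  have d0 : Differentiable ℝ g := hg.differentiable (by simp)
  have d1 : Differentiable ℝ (fderiv ℝ g) := hg1.differentiable (by simp)
  have d2 : Differentiable ℝ (fderiv ℝ (fderiv ℝ g)) := hg2.differentiable (by simp)
  have hd : ∀ v h : V, HasFDerivAt (fun h => g (v + h) - g v - fderiv ℝ g v h)
      (fderiv ℝ g (v + h) - fderiv ℝ g v) h := by
    intro v h
    have h1 : HasFDerivAt (fun h => g (v + h)) (fderiv ℝ g (v + h)) h := by
      have := (d0 (v + h)).hasFDerivAt.comp h ((hasFDerivAt_id h).const_add v)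
      simpa [Function.comp_def] using this
    exact (h1.sub_const _).sub (fderiv ℝ g v).hasFDerivAt
  constructor
  · intro v h h' r hr hr'
    refine Convex.norm_image_sub_le_of_norm_hasFDerivWithin_le
      (s := closedBall (0 : V) r) (fun x _ => (hd v x).hasFDerivWithinAt) (fun x hx => ?_)
      (convex_closedBall 0 r) (by simpa using hr') (by simpa using hr)
    refine (lip_of_fderiv d1 hC _ _).trans ?_
    gcongr
    simpa using hx
  · intro v v' h
    have key : ∀ x, ‖x‖ ≤ ‖h‖ →
        ‖(fderiv ℝ g (v + x) - fderiv ℝ g v) - (fderiv ℝ g (v' + x) - fderiv ℝ g v')‖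
          ≤ D * ‖v - v'‖ * ‖h‖ := by
      intro x hx
      have hd2 : ∀ x, HasFDerivAt (fun x => fderiv ℝ g (v + x) - fderiv ℝ g (v' + x))
          (fderiv ℝ (fderiv ℝ g) (v + x) - fderiv ℝ (fderiv ℝ g) (v' + x)) x := by
        intro x
        have h1 : ∀ v, HasFDerivAt (fun x => fderiv ℝ g (v + x))
            (fderiv ℝ (fderiv ℝ g) (v + x)) x := by
          intro v
          have := (d1 (v + x)).hasFDerivAt.comp x ((hasFDerivAt_id x).const_add v)
          simpa [Function.comp_def] using this
        exact (h1 v).sub (h1 v')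
      have := Convex.norm_image_sub_le_of_norm_hasFDerivWithin_le (C := D * ‖v - v'‖)
        (s := univ) (fun x _ => (hd2 x).hasFDerivWithinAt) (fun x _ => by
          simpa using lip_of_fderiv d2 hD (v + x) (v' + x))
        convex_univ (mem_univ 0) (mem_univ x)
      simp only [add_zero, sub_zero] at this
      refine le_trans (le_of_eq ?_) (this.trans (by gcongr))
      congr 1
      abel
    have := Convex.norm_image_sub_le_of_norm_hasFDerivWithin_le (C := D * ‖v - v'‖ * ‖h‖)
        (s := closedBall (0 : V) ‖h‖)
        (fun x _ => ((hd v x).sub (hd v' x)).hasFDerivWithinAt)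
        (fun x hx => key x (by simpa using hx))
        (convex_closedBall 0 _) (mem_closedBall_self (norm_nonneg _)) (y := h) (by simp)
    simpa using this

theorem hasFDerivAt_nem {b : ℂ → V} (hb : IsBase b) {g : V → W}
    (hg : ContDiff ℝ (⊤ : ℕ∞) g) (hc : HasCompactSupport g) (u : Hol V) :
    HasFDerivAt (nem hb hg hc)
      (pairL (nem hb (hg.fderiv_right (m := (⊤ : ℕ∞)) (by simp)) (hc.fderiv ℝ) u)) u := by
  have hg1 : ContDiff ℝ (⊤ : ℕ∞) (fderiv ℝ g) := hg.fderiv_right (by simp)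
  have hg2 : ContDiff ℝ (⊤ : ℕ∞) (fderiv ℝ (fderiv ℝ g)) := hg1.fderiv_right (by simp)
  obtain ⟨C, hC0, hC⟩ := exists_bound (hg1.continuous_fderiv (by simp))
    ((hc.fderiv ℝ).fderiv ℝ)
  obtain ⟨D, hD0, hD⟩ := exists_bound (hg2.continuous_fderiv (by simp))
    (((hc.fderiv ℝ).fderiv ℝ).fderiv ℝ)
  obtain ⟨r1, r2⟩ := rem_bounds hg hD0 hC0 hC hD
  set K : ℝ := 2 * C + (C + D * (1 + ‖u‖)) with hK
  have bound : ∀ h : Hol V, ‖nem hb hg hc (u + h) - nem hb hg hc u -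
      pairL (nem hb hg1 (hc.fderiv ℝ) u) h‖ ≤ K * ‖h‖ ^ 2 := by
    intro h
    have s1 : ∀ x, ‖g (b x + u x + h x) - g (b x + u x) - fderiv ℝ g (b x + u x) (h x)‖
        ≤ C * ‖h‖ ^ 2 := by
      intro x
      have := r1 (b x + u x) (h x) 0 ‖h‖ (norm_apply_le h x) (by simp)
      simp only [add_zero, map_zero, sub_zero, sub_self] at this
      refine this.trans ?_
      rw [pow_two, ← mul_assoc]
      gcongr
      exact norm_apply_le h x
    have s2 := holder_of_near s1 (by positivity)
      (B := (C + D * (1 + ‖u‖)) * ‖h‖ ^ 2) (by positivity) (fun x y hxy => by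
        have e1 := r1 (b x + u x) (h x) (h y) ‖h‖ (norm_apply_le h x) (norm_apply_le h y)
        have e2 := r2 (b x + u x) (b y + u y) (h y)
        have e1' : C * ‖h‖ * ‖h x - h y‖ ≤ C * ‖h‖ * (‖h‖ * √‖x - y‖) := by
          gcongr; exact norm_sub_le h x y
        have e2' : D * ‖(b x + u x) - (b y + u y)‖ * ‖h y‖ * ‖h y‖ ≤
            D * ((1 + ‖u‖) * √‖x - y‖) * ‖h‖ * ‖h‖ := by
          gcongr
          exacts [base_near hb u x y hxy, norm_apply_le h y, norm_apply_le h y]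
        have e3 := norm_add_le_of_le (e1.trans e1') (e2.trans e2')
        rw [sub_add_sub_cancel] at e3
        refine e3.trans (le_of_eq (by ring)))
    refine norm_le (by positivity) (fun x => ?_) (fun x y => ?_)
    · have e := s1 x
      simp only [sub_apply, nem_apply, pairL_apply, add_apply]
      rw [← add_assoc]
      refine e.trans ?_
      gcongr
      have : 0 ≤ D * (1 + ‖u‖) := by positivity
      linarith
    · have e := s2 x y
      simp only [sub_apply, nem_apply, pairL_apply, add_apply]
      rw [← add_assoc, ← add_assoc]
      refine e.trans (le_of_eq ?_)
      rw [hK]; ring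
  rw [hasFDerivAt_iff_isLittleO_nhds_zero]
  refine (Asymptotics.IsBigO.of_bound K (Eventually.of_forall fun h => ?_)).trans_isLittleO
    (Asymptotics.isLittleO_norm_pow_id one_lt_two)
  simpa using bound h

theorem contDiff_nem_nat (n : ℕ) : ∀ {W : Type} [NormedAddCommGroup W] [NormedSpace ℝ W]
    {b : ℂ → V} (hb : IsBase b) {g : V → W} (hg : ContDiff ℝ (⊤ : ℕ∞) g)
    (hc : HasCompactSupport g), ContDiff ℝ n (nem hb hg hc) := by
  induction n with
  | zero =>
    intro W _ _ b hb g hg hc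
    exact contDiff_zero.2 (continuous_iff_continuousAt.2 fun u =>
      (hasFDerivAt_nem hb hg hc u).continuousAt)
  | succ n ih =>
    intro W _ _ b hb g hg hc
    have hg1 : ContDiff ℝ (⊤ : ℕ∞) (fderiv ℝ g) := hg.fderiv_right (m := (⊤ : ℕ∞)) (by simp)
    have h1 : ContDiff ℝ n (nem hb hg1 (hc.fderiv ℝ)) := ih hb hg1 (hc.fderiv ℝ)
    have h2 : ContDiff ℝ n fun u => pairL (nem hb hg1 (hc.fderiv ℝ) u) :=
      (pairL (V := V) (W := W)).contDiff.comp h1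
    have h3 : ∀ u, HasFDerivAt (nem hb hg hc) (pairL (nem hb hg1 (hc.fderiv ℝ) u)) u :=
      hasFDerivAt_nem hb hg hc
    push_cast
    exact contDiff_succ_iff_hasFDerivAt.2 ⟨_, h2, h3⟩

/-- Superposition with a smooth compactly supported map is a smooth operator on `C^{1/2}`. -/
theorem contDiff_nem {b : ℂ → V} (hb : IsBase b) {g : V → W} (hg : ContDiff ℝ (⊤ : ℕ∞) g)
    (hc : HasCompactSupport g) : ContDiff ℝ (⊤ : ℕ∞) (nem hb hg hc) :=
  contDiff_infty.2 fun n => contDiff_nem_nat n hb hg hc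

end Hol

end

section

/-! ### Averaging operators and the dyadic sums built from them -/

variable {V W Z : Type} [NormedAddCommGroup V] [NormedSpace ℝ V] [NormedAddCommGroup W]
  [NormedSpace ℝ W] [NormedAddCommGroup Z] [NormedSpace ℝ Z]

theorem integrable_ker {ψ : ℂ → V →L[ℝ] W} (hψ : Continuous ψ) (hc : HasCompactSupport ψ)
    {f : ℂ → V} (hf : Continuous f) : Integrable fun w => ψ w (f w) := by
  refine Continuous.integrable_of_hasCompactSupport (hψ.clm_apply hf) (hc.mono fun w hw => ?_)
  rw [Function.mem_support] at hw ⊢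
  intro h
  simp [h] at hw

theorem integrable_ker_norm {ψ : ℂ → V →L[ℝ] W} (hψ : Continuous ψ) (hc : HasCompactSupport ψ)
    {f : ℂ → ℝ} (hf : Continuous f) : Integrable fun w => ‖ψ w‖ * f w := by
  refine Continuous.integrable_of_hasCompactSupport (hψ.norm.mul hf) (hc.mono fun w hw => ?_)
  rw [Function.mem_support] at hw ⊢
  intro h
  simp [h] at hw

/-- The averaging operator `f ↦ (z ↦ ∫ ψ(w) f(z - s w) dw)` at scale `s`, with operator-valued
kernel `ψ`. -/
def avg {ψ : ℂ → V →L[ℝ] W} (hψ : Continuous ψ) (hc : HasCompactSupport ψ) (s : ℝ) :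
    Hol V →L[ℝ] Hol W :=
  Hol.lift (fun f z => ∫ w, ψ w (f (z - s • w))) (∫ w, ‖ψ w‖)
    (fun f g z => by
      rw [← integral_add]
      · simp
      · exact integrable_ker hψ hc (f := fun w => f (z - s • w))
          (f.continuous.comp (by fun_prop))
      · exact integrable_ker hψ hc (f := fun w => g (z - s • w))
          (g.continuous.comp (by fun_prop)))
    (fun c f z => by
      rw [← integral_smul]
      simp)
    (fun f z => by
      rw [← integral_mul_const]
      refine norm_integral_le_of_norm_le (integrable_ker_norm hψ hc continuous_const)
        (Eventually.of_forall fun w => ?_)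
      exact ((ψ w).le_opNorm _).trans (by gcongr; exact Hol.norm_apply_le f _))
    (fun f x y => by
      rw [← integral_sub, mul_assoc, ← integral_mul_const]
      · refine norm_integral_le_of_norm_le (integrable_ker_norm hψ hc continuous_const)
          (Eventually.of_forall fun w => ?_)
        rw [← map_sub]
        refine ((ψ w).le_opNorm _).trans ?_
        gcongr
        simpa using Hol.norm_sub_le f (x - s • w) (y - s • w)
      · exact integrable_ker hψ hc (f := fun w => f (x - s • w))
          (f.continuous.comp (by fun_prop))
      · exact integrable_ker hψ hc (f := fun w => f (y - s • w))
          (f.continuous.comp (by fun_prop)))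

theorem avg_apply {ψ : ℂ → V →L[ℝ] W} (hψ : Continuous ψ) (hc : HasCompactSupport ψ) (s : ℝ)
    (f : Hol V) (z : ℂ) : avg hψ hc s f z = ∫ w, ψ w (f (z - s • w)) := rfl

theorem norm_avg_le {ψ : ℂ → V →L[ℝ] W} (hψ : Continuous ψ) (hc : HasCompactSupport ψ) (s : ℝ)
    (f : Hol V) : ‖avg hψ hc s f‖ ≤ (∫ w, ‖ψ w‖) * ‖f‖ := by
  unfold avg
  exact Hol.norm_lift_le ..

/-- A kernel of mean zero gains a factor `√s` in sup norm. -/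
theorem norm_avg_apply_le [CompleteSpace V] [CompleteSpace W] {ψ : ℂ → V →L[ℝ] W}
    (hψ : Continuous ψ) (hc : HasCompactSupport ψ) (h0 : ∀ c, ∫ w, ψ w c = 0) {s : ℝ}
    (hs : 0 ≤ s) (f : Hol V) (z : ℂ) :
    ‖avg hψ hc s f z‖ ≤ (∫ w, ‖ψ w‖ * √‖w‖) * √s * ‖f‖ := by
  have h1 : avg hψ hc s f z = ∫ w, ψ w (f (z - s • w) - f z) := by
    simp only [map_sub]
    rw [integral_sub, h0, sub_zero, avg_apply]
    · exact integrable_ker hψ hc (f := fun w => f (z - s • w)) (f.continuous.comp (by fun_prop))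
    · exact integrable_ker hψ hc continuous_const
  rw [h1, mul_assoc, ← integral_mul_const]
  have hi : Integrable fun w => ‖ψ w‖ * √‖w‖ * (√s * ‖f‖) :=
    (integrable_ker_norm hψ hc (f := fun w => √‖w‖) (by fun_prop)).mul_const _
  refine norm_integral_le_of_norm_le hi (Eventually.of_forall fun w => ?_)
  refine ((ψ w).le_opNorm _).trans ?_
  rw [mul_assoc]
  gcongr
  refine (Hol.norm_sub_le f _ _).trans (le_of_eq ?_)
  rw [sub_sub_cancel_left, norm_neg, norm_smul, Real.norm_of_nonneg hs, Real.sqrt_mul hs]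
  ring

/-- The kernel of the derivative of an averaging operator. -/
def dker (ψ : ℂ → V →L[ℝ] W) (w : ℂ) : V →L[ℝ] ℂ →L[ℝ] W := (fderiv ℝ ψ w).flip

theorem contDiff_dker {ψ : ℂ → V →L[ℝ] W} (hψ : ContDiff ℝ (⊤ : ℕ∞) ψ) :
    ContDiff ℝ (⊤ : ℕ∞) (dker ψ) :=
  (ContinuousLinearMap.flipₗᵢ ℝ ℂ V W).contDiff.comp (hψ.fderiv_right (by simp))

theorem hasCompactSupport_dker {ψ : ℂ → V →L[ℝ] W} (hc : HasCompactSupport ψ) :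
    HasCompactSupport (dker ψ) := by
  refine (hc.fderiv ℝ).mono fun w hw => ?_
  rw [Function.mem_support] at hw ⊢
  intro h
  apply hw
  ext
  simp [dker, h]

theorem hasFDerivAt_avg [CompleteSpace V] [CompleteSpace W] {ψ : ℂ → V →L[ℝ] W}
    (hψ : ContDiff ℝ (⊤ : ℕ∞) ψ) (hc : HasCompactSupport ψ) {s : ℝ} (hs : 0 < s) (f : Hol V)
    (z : ℂ) : HasFDerivAt (fun z => avg hψ.continuous hc s f z)
      (s⁻¹ • avg (contDiff_dker hψ).continuous (hasCompactSupport_dker hc) s f z) z := by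
  -- rescaling turns the average into a convolution with a smooth kernel
  have key : ∀ {Y : Type} [NormedAddCommGroup Y] [NormedSpace ℝ Y] (χ : ℂ → V →L[ℝ] Y) (z : ℂ),
      ∫ w, χ w (f (z - s • w)) = (s ^ 2)⁻¹ • ∫ t, χ (s⁻¹ • t) (f (z - t)) := by
    intro Y _ _ χ z
    have := Measure.integral_comp_smul (volume : Measure ℂ)
      (fun t => χ (s⁻¹ • t) (f (z - t))) s
    simp only [inv_smul_smul₀ hs.ne', Complex.finrank_real_complex] at this
    rw [this, abs_of_nonneg (by positivity)]
  set ψs : ℂ → V →L[ℝ] W := fun t => ψ (s⁻¹ • t) with hψs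
  have hd : ContDiff ℝ (⊤ : ℕ∞) ψs := hψ.comp (contDiff_const_smul _)
  have hcs : HasCompactSupport ψs :=
    hc.comp_homeomorph (Homeomorph.smulOfNeZero s⁻¹ (inv_ne_zero hs.ne'))
  have hfd : ∀ t, fderiv ℝ ψs t = s⁻¹ • fderiv ℝ ψ (s⁻¹ • t) := by
    intro t
    exact fderiv_comp_smul _
  have hconv := hcs.hasFDerivAt_convolution_left (μ := volume)
    (ContinuousLinearMap.id ℝ (V →L[ℝ] W)) (hd.of_le (by simp))
    f.continuous.locallyIntegrable z
  have h2 := hconv.const_smul ((s ^ 2)⁻¹)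
  have e1 : (fun z => avg hψ.continuous hc s f z) = (s ^ 2)⁻¹ • (convolution ψs f
      (ContinuousLinearMap.id ℝ (V →L[ℝ] W)) volume) := by
    ext z
    rw [avg_apply, key ψ z]
    rfl
  rw [e1]
  refine h2.congr_fderiv ?_
  rw [avg_apply, key (dker ψ) z, smul_comm]
  congr 1
  rw [convolution, ← integral_smul]
  congr 1
  ext t v
  rw [hfd]
  rfl

/-- The derivative kernel has mean zero, as constants are averaged to constants. -/
theorem integral_dker [CompleteSpace V] [CompleteSpace W] {ψ : ℂ → V →L[ℝ] W}
    (hψ : ContDiff ℝ (⊤ : ℕ∞) ψ) (hc : HasCompactSupport ψ) (c : V) :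
    ∫ w, dker ψ w c = 0 := by
  have h := hasFDerivAt_avg hψ hc one_pos (Hol.constL c) 0
  have h' : (fun z => avg hψ.continuous hc 1 (Hol.constL c) z) = fun _ => ∫ w, ψ w c := by
    ext z
    simp [avg_apply]
  rw [h'] at h
  have h3 := h.unique (hasFDerivAt_const (∫ w, ψ w c) (0 : ℂ))
  simpa [avg_apply] using h3

/-- The comparison of a dyadic sum with its critical scale: the terms of large scale are
controlled by the second bound, those of small scale by the first. -/
theorem norm_tsum_le_of_dyadic [CompleteSpace V] {a : ℕ → V} {K h : ℝ} (hK : 0 ≤ K)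
    (hh : 0 ≤ h) (h1 : ∀ j, ‖a j‖ ≤ K * (1 / 2) ^ j) (h2 : ∀ j, ‖a j‖ ≤ K * (2 ^ j * h ^ 2)) :
    ‖∑' j, a j‖ ≤ 4 * K * h := by
  have hs : Summable fun j : ℕ => K * (1 / 2 : ℝ) ^ j := summable_geometric_two.mul_left K
  have hsa : Summable a := Summable.of_norm_bounded hs h1
  rcases hh.eq_or_lt with rfl | hpos
  · have : ∀ j, a j = 0 := fun j => by simpa using h2 j
    simp [this]
  by_cases h1h : h ≤ 1
  · obtain ⟨n, hn1, hn2⟩ := exists_nat_pow_near_of_lt_one hpos h1h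
      (show (0 : ℝ) < 1 / 2 by norm_num) (by norm_num)
    rw [← hsa.sum_add_tsum_nat_add (n + 1)]
    have e1 : ‖∑ i ∈ Finset.range (n + 1), a i‖ ≤ 2 * K * h := by
      have : ∑ i ∈ Finset.range (n + 1), K * ((2 : ℝ) ^ i * h ^ 2) = K * h ^ 2 * (2 ^ (n + 1) - 1)
          := by
        rw [← Finset.mul_sum, ← Finset.sum_mul, geom_sum_eq (by norm_num)]
        ring
      refine (norm_sum_le_of_le _ fun i _ => h2 i).trans ?_
      rw [this]
      have h3 : (2 : ℝ) ^ n * h ≤ 1 := by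
        calc (2 : ℝ) ^ n * h ≤ 2 ^ n * (1 / 2) ^ n := by gcongr
          _ = 1 := by rw [← mul_pow]; norm_num
      calc K * h ^ 2 * (2 ^ (n + 1) - 1) ≤ K * h ^ 2 * 2 ^ (n + 1) := by gcongr; linarith
        _ = 2 * K * h * (2 ^ n * h) := by ring
        _ ≤ 2 * K * h * 1 := by gcongr
        _ = 2 * K * h := by ring
    have e2 : ‖∑' i, a (i + (n + 1))‖ ≤ 2 * K * h := by
      have hs2 : HasSum (fun i : ℕ => K * (1 / 2 : ℝ) ^ (i + (n + 1)))
          (K * (1 / 2) ^ (n + 1) * 2) := by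
        have := hasSum_geometric_two.mul_left (K * (1 / 2) ^ (n + 1))
        refine this.congr_fun ?_ |> id
        intro i
        ring
      refine (tsum_of_norm_bounded hs2 fun i => h1 _).trans ?_
      calc K * (1 / 2) ^ (n + 1) * 2 ≤ K * h * 2 := by gcongr
        _ = 2 * K * h := by ring
    linarith [norm_add_le_of_le e1 e2]
  · have hs2 : HasSum (fun i : ℕ => K * (1 / 2 : ℝ) ^ i) (K * 2) := hasSum_geometric_two.mul_left K
    refine (tsum_of_norm_bounded hs2 h1).trans ?_
    nlinarith

theorem sqrt_quarter_pow (j : ℕ) : √((1 / 4 : ℝ) ^ j) = (1 / 2) ^ j := by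
  rw [show (1 / 4 : ℝ) ^ j = ((1 / 2) ^ j) ^ 2 by rw [← pow_mul, mul_comm, pow_mul]; norm_num]
  exact Real.sqrt_sq (by positivity)

/-- Constant controlling `sumAvg`. -/
def sumC (ψ : ℂ → V →L[ℝ] W) : ℝ :=
  2 * (∫ w, ‖ψ w‖ * √‖w‖) + ∫ w, ‖dker ψ w‖ * √‖w‖

theorem int_nonneg (ψ : ℂ → V →L[ℝ] W) : 0 ≤ ∫ w, ‖ψ w‖ * √‖w‖ :=
  integral_nonneg fun w => by positivity

theorem sumC_nonneg (ψ : ℂ → V →L[ℝ] W) : 0 ≤ sumC ψ := by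
  have h1 := int_nonneg ψ
  have h2 := int_nonneg (dker ψ)
  unfold sumC
  linarith

section
variable [CompleteSpace V] [CompleteSpace W] {ψ : ℂ → V →L[ℝ] W}
    (hψ : ContDiff ℝ (⊤ : ℕ∞) ψ) (hc : HasCompactSupport ψ)

theorem avg_scale_le (h0 : ∀ c, ∫ w, ψ w c = 0) (j : ℕ) (f : Hol V)
    (z : ℂ) :
    ‖avg hψ.continuous hc ((1 / 4) ^ j) f z‖ ≤ (∫ w, ‖ψ w‖ * √‖w‖) * ‖f‖ * (1 / 2) ^ j := by
  have := norm_avg_apply_le hψ.continuous hc h0 (s := (1 / 4) ^ j) (by positivity) f z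
  rw [sqrt_quarter_pow] at this
  linarith

theorem summable_avg (h0 : ∀ c, ∫ w, ψ w c = 0) (f : Hol V) (z : ℂ) :
    Summable fun j : ℕ => avg hψ.continuous hc ((1 / 4) ^ j) f z :=
  Summable.of_norm_bounded (summable_geometric_two.mul_left _) fun j =>
    avg_scale_le hψ hc h0 j f z

theorem avg_scale_sub_le (j : ℕ) (f : Hol V) (x y : ℂ) :
    ‖avg hψ.continuous hc ((1 / 4) ^ j) f x - avg hψ.continuous hc ((1 / 4) ^ j) f y‖
      ≤ (∫ w, ‖dker ψ w‖ * √‖w‖) * ‖f‖ * (2 ^ j * ‖x - y‖) := by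
  have hs : (0 : ℝ) < (1 / 4) ^ j := by positivity
  have hd := fun z => hasFDerivAt_avg hψ hc hs f z
  have hb : ∀ z, ‖((1 / 4 : ℝ) ^ j)⁻¹ • avg (contDiff_dker hψ).continuous
      (hasCompactSupport_dker hc) ((1 / 4) ^ j) f z‖
      ≤ (∫ w, ‖dker ψ w‖ * √‖w‖) * ‖f‖ * 2 ^ j := by
    intro z
    rw [norm_smul, norm_inv, Real.norm_of_nonneg hs.le]
    refine (mul_le_mul_of_nonneg_left (avg_scale_le (contDiff_dker hψ)
      (hasCompactSupport_dker hc) (integral_dker hψ hc) j f z) (by positivity)).trans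
      (le_of_eq ?_)
    have : ((1 / 4 : ℝ) ^ j)⁻¹ * (1 / 2) ^ j = 2 ^ j := by
      rw [← inv_pow, ← mul_pow]; norm_num
    rw [← this]
    ring
  have := Convex.norm_image_sub_le_of_norm_hasFDerivWithin_le (s := univ)
    (fun z _ => (hd z).hasFDerivWithinAt) (fun z _ => hb z) convex_univ (mem_univ y) (mem_univ x)
  rw [← mul_assoc]
  exact this

/-- The singular integral operator `∑ⱼ avg ψ 4⁻ʲ` for a smooth kernel of mean zero. It is bounded
on `C^{1/2}`. -/
def sumAvg (h0 : ∀ c, ∫ w, ψ w c = 0) : Hol V →L[ℝ] Hol W :=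
  Hol.lift (fun f z => ∑' j : ℕ, avg hψ.continuous hc ((1 / 4) ^ j) f z) (4 * sumC ψ)
    (fun f g z => by
      rw [← (summable_avg hψ hc h0 f z).tsum_add (summable_avg hψ hc h0 g z)]
      simp)
    (fun c f z => by
      rw [← (summable_avg hψ hc h0 f z).tsum_const_smul c]
      simp)
    (fun f z => by
      refine (tsum_of_norm_bounded (hasSum_geometric_two.mul_left _)
        fun j => avg_scale_le hψ hc h0 j f z).trans ?_
      have h1 := mul_nonneg (int_nonneg ψ) (norm_nonneg f)
      have h2 := mul_nonneg (int_nonneg (dker ψ)) (norm_nonneg f)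
      unfold sumC
      nlinarith)
    (fun f x y => by
      rw [← (summable_avg hψ hc h0 f x).tsum_sub (summable_avg hψ hc h0 f y)]
      have h1 := mul_nonneg (int_nonneg ψ) (norm_nonneg f)
      have h2 := mul_nonneg (int_nonneg (dker ψ)) (norm_nonneg f)
      rw [mul_assoc 4]
      refine norm_tsum_le_of_dyadic (mul_nonneg (sumC_nonneg ψ) (norm_nonneg f))
        (Real.sqrt_nonneg _) (fun j => ?_) (fun j => ?_)
      · refine (norm_sub_le_of_le (avg_scale_le hψ hc h0 j f x)
          (avg_scale_le hψ hc h0 j f y)).trans ?_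
        rw [← two_mul, ← mul_assoc, ← mul_assoc]
        have h4 := int_nonneg (dker ψ)
        gcongr
        unfold sumC
        linarith
      · rw [Real.sq_sqrt (norm_nonneg _)]
        refine (avg_scale_sub_le hψ hc j f x y).trans ?_
        have h3 := int_nonneg ψ
        have h4 := int_nonneg (dker ψ)
        gcongr
        unfold sumC
        linarith)

theorem sumAvg_apply (h0 : ∀ c, ∫ w, ψ w c = 0) (f : Hol V) (z : ℂ) :
    sumAvg hψ hc h0 f z = ∑' j : ℕ, avg hψ.continuous hc ((1 / 4) ^ j) f z := rfl

end

section
variable [CompleteSpace V] [CompleteSpace W] {ψ : ℂ → V →L[ℝ] W}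
    (hψ : ContDiff ℝ (⊤ : ℕ∞) ψ) (hc : HasCompactSupport ψ)

/-- The weakly singular integral operator `∑ⱼ 4⁻ʲ avg ψ 4⁻ʲ`. -/
def potL : Hol V →L[ℝ] Hol W := ∑' j : ℕ, (1 / 4 : ℝ) ^ j • avg hψ.continuous hc ((1 / 4) ^ j)

theorem summable_pot :
    Summable fun j : ℕ => (1 / 4 : ℝ) ^ j • avg hψ.continuous hc ((1 / 4) ^ j) := by
  refine Summable.of_norm_bounded (g := fun j : ℕ => (1 / 4 : ℝ) ^ j * ∫ w, ‖ψ w‖)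
    ((summable_geometric_of_lt_one (by norm_num) (by norm_num)).mul_right _) fun j => ?_
  rw [norm_smul, Real.norm_of_nonneg (by positivity)]
  gcongr
  exact ContinuousLinearMap.opNorm_le_bound _ (integral_nonneg fun _ => norm_nonneg _)
    (norm_avg_le _ _ _)

theorem hasSum_potL_apply (f : Hol V) (z : ℂ) :
    HasSum (fun j : ℕ => (1 / 4 : ℝ) ^ j • avg hψ.continuous hc ((1 / 4) ^ j) f z)
      (potL hψ hc f z) := by
  have h := (summable_pot hψ hc).hasSum
  have h2 := ((Hol.evalL z).comp (ContinuousLinearMap.apply ℝ (Hol W) f)).hasSum h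
  exact h2

theorem hasFDerivAt_potL (f : Hol V) (z : ℂ) :
    HasFDerivAt (fun z => potL hψ hc f z) (sumAvg (contDiff_dker hψ)
      (hasCompactSupport_dker hc) (integral_dker hψ hc) f z) z := by
  have e : (fun z => potL hψ hc f z) =
      fun z => ∑' j : ℕ, (1 / 4 : ℝ) ^ j • avg hψ.continuous hc ((1 / 4) ^ j) f z :=
    funext fun z => ((hasSum_potL_apply hψ hc f z).tsum_eq).symm
  rw [e]
  have h0 := integral_dker hψ hc
  have hd : ∀ (j : ℕ) (z : ℂ), HasFDerivAt
      (fun z => (1 / 4 : ℝ) ^ j • avg hψ.continuous hc ((1 / 4) ^ j) f z)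
      (avg (contDiff_dker hψ).continuous (hasCompactSupport_dker hc) ((1 / 4) ^ j) f z) z := by
    intro j z
    have hs : (0 : ℝ) < (1 / 4) ^ j := by positivity
    have := (hasFDerivAt_avg hψ hc hs f z).const_smul ((1 / 4 : ℝ) ^ j)
    rw [smul_inv_smul₀ hs.ne'] at this
    exact this
  have hb : ∀ (j : ℕ) (z : ℂ), ‖avg (contDiff_dker hψ).continuous (hasCompactSupport_dker hc)
      ((1 / 4) ^ j) f z‖ ≤ (∫ w, ‖dker ψ w‖ * √‖w‖) * ‖f‖ * (1 / 2) ^ j := fun j z =>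
    avg_scale_le (contDiff_dker hψ) (hasCompactSupport_dker hc) h0 j f z
  have h1 := hasFDerivAt_tsum (x₀ := 0) (summable_geometric_two.mul_left _) hd hb
    (hasSum_potL_apply hψ hc f 0).summable z
  rw [sumAvg_apply]
  exact h1

theorem avg_trans (hψ : Continuous ψ) (s : ℝ) (t : ℂ) (f : Hol V) :
    avg hψ hc s (Hol.transL t f) = Hol.transL t (avg hψ hc s f) := by
  refine Hol.ext fun z => ?_
  rw [Hol.transL_apply, avg_apply, avg_apply]
  simp only [Hol.transL_apply]
  congr! 4
  ring

theorem potL_trans (t : ℂ) (f : Hol V) :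
    potL hψ hc (Hol.transL t f) = Hol.transL t (potL hψ hc f) := by
  refine Hol.ext fun z => ?_
  refine (hasSum_potL_apply hψ hc _ z).unique ?_
  simp only [avg_trans]
  exact hasSum_potL_apply hψ hc f (z + t)

theorem sumAvg_trans (h0 : ∀ c, ∫ w, ψ w c = 0) (t : ℂ) (f : Hol V) :
    sumAvg hψ hc h0 (Hol.transL t f) = Hol.transL t (sumAvg hψ hc h0 f) := by
  refine Hol.ext fun z => ?_
  rw [Hol.transL_apply, sumAvg_apply, sumAvg_apply]
  simp only [avg_trans, Hol.transL_apply]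

end

end

section

/-! ### The Cauchy kernel -/

/-- A smooth cutoff on the line, equal to `1` on `[-16, 16]` and to `0` off `(-25, 25)`. -/
def cut : ContDiffBump (0 : ℝ) := ⟨16, 25, by norm_num, by norm_num⟩

theorem contDiff_cut : ContDiff ℝ (⊤ : ℕ∞) cut := cut.contDiff

theorem cut_one {r : ℝ} (h : |r| ≤ 16) : cut r = 1 :=
  cut.one_of_mem_closedBall (by simpa [cut] using h)

theorem cut_zero {r : ℝ} (h : 25 ≤ |r|) : cut r = 0 :=
  cut.zero_of_le_dist (by simpa [cut] using h)

theorem deriv_cut_small {r : ℝ} (h : |r| < 16) : deriv cut r = 0 := by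
  have : (cut : ℝ → ℝ) =ᶠ[𝓝 r] fun _ => 1 := by
    filter_upwards [(isOpen_lt continuous_abs continuous_const).mem_nhds h] with x hx
    exact cut_one (le_of_lt hx)
  rw [this.deriv_eq, deriv_const]

theorem deriv_cut_large {r : ℝ} (h : 25 < |r|) : deriv cut r = 0 := by
  have : (cut : ℝ → ℝ) =ᶠ[𝓝 r] fun _ => 0 := by
    filter_upwards [(isOpen_lt continuous_const continuous_abs).mem_nhds h] with x hx
    exact cut_zero (le_of_lt hx)
  rw [this.deriv_eq, deriv_const]

theorem continuous_deriv_cut : Continuous (deriv cut) :=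
  contDiff_cut.continuous_deriv (by simp)

/-- The radial profile of the Cauchy kernel, localised to one dyadic shell. -/
def prof (r : ℝ) : ℝ := (cut r - cut (16 * r)) / r

theorem prof_mul (r : ℝ) : r * prof r = cut r - cut (16 * r) := by
  by_cases h : r = 0
  · simp [h]
  · unfold prof; field_simp

theorem prof_small {r : ℝ} (h : |r| < 1) : prof r = 0 := by
  have h1 : |16 * r| ≤ 16 := by rw [abs_mul]; norm_num; linarith
  rw [prof, cut_one (by linarith), cut_one h1, sub_self, zero_div]

theorem prof_large {r : ℝ} (h : 25 ≤ |r|) : prof r = 0 := by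
  have h1 : 25 ≤ |16 * r| := by rw [abs_mul]; norm_num; linarith
  rw [prof, cut_zero h, cut_zero h1, sub_self, zero_div]

theorem contDiff_prof : ContDiff ℝ (⊤ : ℕ∞) prof := by
  rw [contDiff_iff_contDiffAt]
  intro r
  by_cases h : |r| < 1
  · have : prof =ᶠ[𝓝 r] fun _ => 0 := by
      filter_upwards [(isOpen_lt continuous_abs continuous_const).mem_nhds h] with x hx
      exact prof_small hx
    exact contDiffAt_const.congr_of_eventuallyEq this
  · have hr : r ≠ 0 := by rintro rfl; simp at h
    have h1 : ContDiff ℝ (⊤ : ℕ∞) fun r : ℝ => cut r - cut (16 * r) :=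
      contDiff_cut.sub (contDiff_cut.comp (contDiff_const.mul contDiff_id))
    exact h1.contDiffAt.div contDiffAt_id hr

theorem prof_deriv (r : ℝ) : prof r + r * deriv prof r = deriv cut r - 16 * deriv cut (16 * r) := by
  have h1 : HasDerivAt (fun r => r * prof r) (1 * prof r + r * deriv prof r) r :=
    (hasDerivAt_id r).mul ((contDiff_prof.differentiable (by simp)) r).hasDerivAt
  have hd := fun r => ((contDiff_cut.differentiable (by simp)) r).hasDerivAt
  have h2 : HasDerivAt (fun r : ℝ => cut r - cut (16 * r))
      (deriv cut r - deriv cut (16 * r) * 16) r := by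
    have := (hd (16 * r)).comp r (((hasDerivAt_id r).const_mul (16 : ℝ)))
    simp only [mul_one] at this
    exact (hd r).sub this
  rw [show (fun r : ℝ => cut r - cut (16 * r)) = fun r => r * prof r from
    funext fun r => (prof_mul r).symm] at h2
  have := h1.unique h2
  linarith

theorem integral_cut : ∫ w : ℂ, deriv cut (‖w‖ ^ 2) = -Real.pi := by
  rw [integral_fun_norm_addHaar (volume : Measure ℂ) (fun r => deriv cut (r ^ 2))]
  have h1 : ∫ y in Ioi (0 : ℝ), y ^ (Module.finrank ℝ ℂ - 1) • deriv cut (y ^ 2)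
      = 0 - 1 / 2 * cut (0 ^ 2) := by
    have hderiv : ∀ y : ℝ, HasDerivAt (fun y : ℝ => 1 / 2 * cut (y ^ 2))
        (y ^ (Module.finrank ℝ ℂ - 1) • deriv cut (y ^ 2)) y := by
      intro y
      have hd := ((contDiff_cut.differentiable (by simp)) (y ^ 2)).hasDerivAt
      have := (HasDerivAt.comp (h := fun y : ℝ => y ^ 2) y hd (hasDerivAt_pow 2 y)).const_mul (1 / 2 : ℝ)
      refine this.congr_deriv ?_
      simp [Complex.finrank_real_complex]
      ring
    refine integral_Ioi_of_hasDerivAt_of_tendsto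
      (hderiv 0).continuousAt.continuousWithinAt (fun y _ => hderiv y) ?_ ?_
    · have hc : Continuous fun y : ℝ => y ^ (Module.finrank ℝ ℂ - 1) • deriv cut (y ^ 2) :=
        (continuous_pow _).smul (continuous_deriv_cut.comp (continuous_pow 2))
      refine (hc.integrable_of_hasCompactSupport ?_).integrableOn
      refine HasCompactSupport.intro (isCompact_closedBall (0 : ℝ) 5) fun y hy => ?_
      have : 5 < |y| := by simpa using hy
      rw [deriv_cut_large, smul_zero]
      rw [abs_pow]
      nlinarith
    · refine tendsto_const_nhds.congr' ?_
      filter_upwards [eventually_ge_atTop (5 : ℝ)] with y hy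
      rw [cut_zero, mul_zero]
      rw [abs_pow, abs_of_nonneg (by linarith)]
      nlinarith
  rw [h1, cut_one (by norm_num)]
  have hv : volume.real (ball (0 : ℂ) 1) = Real.pi := by
    simp [Measure.real, Complex.volume_ball]
  rw [hv, Complex.finrank_real_complex]
  simp
  ring

variable {E : Type} [NormedAddCommGroup E] [NormedSpace ℝ E]

/-- The complex scalar `a + b i` acting as `a + b J₀`. -/
def cs (J0 : E →L[ℝ] E) : ℂ →L[ℝ] E →L[ℝ] E :=
  Complex.reCLM.smulRight (ContinuousLinearMap.id ℝ E) + Complex.imCLM.smulRight J0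

theorem cs_apply (J0 : E →L[ℝ] E) (z : ℂ) (v : E) : cs J0 z v = z.re • v + z.im • J0 v := rfl

/-- One dyadic shell of the Cauchy kernel `1 / (π w)`. -/
def kap (J0 : E →L[ℝ] E) (w : ℂ) : E →L[ℝ] E :=
  (Real.pi⁻¹ * prof (‖w‖ ^ 2)) • cs J0 (Complex.conjCLE w)

theorem contDiff_kap (J0 : E →L[ℝ] E) : ContDiff ℝ (⊤ : ℕ∞) (kap J0) := by
  have h1 : ContDiff ℝ (⊤ : ℕ∞) fun w : ℂ => prof (‖w‖ ^ 2) :=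
    contDiff_prof.comp (contDiff_norm_sq ℝ)
  exact (contDiff_const.mul h1).smul ((cs J0).contDiff.comp Complex.conjCLE.contDiff)

theorem hasCompactSupport_kap (J0 : E →L[ℝ] E) : HasCompactSupport (kap J0) := by
  refine HasCompactSupport.intro (isCompact_closedBall (0 : ℂ) 5) fun w hw => ?_
  have : 5 < ‖w‖ := by simpa using hw
  rw [kap, prof_large, mul_zero, zero_smul]
  rw [abs_pow, abs_norm]
  nlinarith

/-- `∂ₓκ + J₀ ∂ᵧκ` for a shell `κ` of the Cauchy kernel: a difference of two consecutive
rescalings of an approximate identity. -/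
theorem dbar_kap {J0 : E →L[ℝ] E} (hJ : ∀ v, J0 (J0 v) = -v) (w : ℂ) (v : E) :
    (fderiv ℝ (kap J0) w 1) v + J0 ((fderiv ℝ (kap J0) w Complex.I) v) =
      (2 / Real.pi * (deriv cut (‖w‖ ^ 2) - 16 * deriv cut (‖(4 : ℝ) • w‖ ^ 2))) • v := by
  have hp : HasDerivAt prof (deriv prof (‖w‖ ^ 2)) (‖w‖ ^ 2) :=
    ((contDiff_prof.differentiable (by simp)) _).hasDerivAt
  have h1 : HasFDerivAt (fun w : ℂ => ‖w‖ ^ 2) (2 • innerSL ℝ w) w :=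
    (hasStrictFDerivAt_norm_sq w).hasFDerivAt
  have h2 := (hp.comp_hasFDerivAt w h1).const_mul Real.pi⁻¹
  have h3 : HasFDerivAt (fun w : ℂ => cs J0 (Complex.conjCLE w))
      ((cs J0).comp (Complex.conjCLE : ℂ →L[ℝ] ℂ)) w :=
    ((cs J0).comp (Complex.conjCLE : ℂ →L[ℝ] ℂ)).hasFDerivAt
  have h4 : HasFDerivAt (kap J0) _ w := h2.smul h3
  rw [h4.fderiv]
  have hn : ‖w‖ ^ 2 = w.re ^ 2 + w.im ^ 2 := by
    rw [Complex.sq_norm, Complex.normSq_apply]; ring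
  have h16 : ‖(4 : ℝ) • w‖ ^ 2 = 16 * ‖w‖ ^ 2 := by
    rw [norm_smul, mul_pow]; norm_num
  rw [h16]
  have key := prof_deriv (‖w‖ ^ 2)
  rw [← key]
  simp [cs_apply, hJ, smul_smul, Complex.inner]
  set p := prof (‖w‖ ^ 2)
  set p' := deriv prof (‖w‖ ^ 2)
  rw [hn]
  module

variable [CompleteSpace E]

/-- The Cauchy transform, a right inverse of `(∂ₓ + J₀ ∂ᵧ) / 2` up to a smoothing error. -/
def cau (J0 : E →L[ℝ] E) : Hol E →L[ℝ] Hol E := potL (contDiff_kap J0) (hasCompactSupport_kap J0)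

/-- The derivative of the Cauchy transform. -/
def cau' (J0 : E →L[ℝ] E) : Hol E →L[ℝ] Hol (ℂ →L[ℝ] E) :=
  sumAvg (contDiff_dker (contDiff_kap J0)) (hasCompactSupport_dker (hasCompactSupport_kap J0))
    (integral_dker (contDiff_kap J0) (hasCompactSupport_kap J0))

theorem hasFDerivAt_cau (J0 : E →L[ℝ] E) (f : Hol E) (z : ℂ) :
    HasFDerivAt (cau J0 f) (cau' J0 f z) z := hasFDerivAt_potL _ _ f z

theorem cau_trans (J0 : E →L[ℝ] E) (t : ℂ) (f : Hol E) :
    cau J0 (Hol.transL t f) = Hol.transL t (cau J0 f) := potL_trans _ _ t f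

theorem cau'_trans (J0 : E →L[ℝ] E) (t : ℂ) (f : Hol E) :
    cau' J0 (Hol.transL t f) = Hol.transL t (cau' J0 f) := sumAvg_trans _ _ _ t f

/-- The averages of `f` against the approximate identity `-deriv cut (‖w‖ ^ 2) / π`, up to the
constant. -/
def cutAvg (f : Hol E) (z : ℂ) (s : ℝ) : E := ∫ w : ℂ, deriv cut (‖w‖ ^ 2) • f (z - s • w)

theorem cut_support {w : ℂ} (h : 5 < ‖w‖) : deriv cut (‖w‖ ^ 2) = 0 := by
  apply deriv_cut_large
  rw [abs_pow, abs_norm]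
  nlinarith

theorem continuous_cut_norm : Continuous fun w : ℂ => deriv cut (‖w‖ ^ 2) :=
  continuous_deriv_cut.comp (by fun_prop)

theorem hasCompactSupport_cut_norm : HasCompactSupport fun w : ℂ => deriv cut (‖w‖ ^ 2) :=
  HasCompactSupport.intro (isCompact_closedBall (0 : ℂ) 5) fun w hw =>
    cut_support (by simpa using hw)

theorem integrable_cutAvg (f : Hol E) (z : ℂ) (s : ℝ) :
    Integrable fun w : ℂ => deriv cut (‖w‖ ^ 2) • f (z - s • w) :=
  Continuous.integrable_of_hasCompactSupport
    (continuous_cut_norm.smul (f.continuous.comp (by fun_prop)))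
    hasCompactSupport_cut_norm.smul_right

theorem continuous_cutAvg (f : Hol E) (z : ℂ) : Continuous (cutAvg f z) := by
  refine continuous_of_dominated (bound := fun w => ‖deriv cut (‖w‖ ^ 2)‖ * ‖f‖)
    (fun s => (integrable_cutAvg f z s).aestronglyMeasurable)
    (fun s => Eventually.of_forall fun w => ?_) ?_ (Eventually.of_forall fun w => ?_)
  · rw [norm_smul]
    gcongr
    exact Hol.norm_apply_le f _
  · exact (continuous_cut_norm.integrable_of_hasCompactSupport
      hasCompactSupport_cut_norm).norm.mul_const _
  · exact (f.continuous.comp (by fun_prop)).const_smul _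

theorem cutAvg_zero (f : Hol E) (z : ℂ) : cutAvg f z 0 = -Real.pi • f z := by
  simp only [cutAvg, zero_smul, sub_zero]
  rw [integral_smul_const, integral_cut]

theorem cutAvg_quarter (f : Hol E) (z : ℂ) (s : ℝ) :
    ∫ w : ℂ, (16 * deriv cut (‖(4 : ℝ) • w‖ ^ 2)) • f (z - s • w) = cutAvg f z (s * (1 / 4)) := by
  have := Measure.integral_comp_smul (volume : Measure ℂ)
    (fun w => deriv cut (‖w‖ ^ 2) • f (z - (s * (1 / 4)) • w)) (4 : ℝ)
  have e : ∀ w : ℂ, (s * (1 / 4)) • (4 : ℝ) • w = s • w := fun w => by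
    rw [smul_smul]; congr 1; ring
  simp only [e, Complex.finrank_real_complex] at this
  simp only [mul_smul]
  rw [integral_smul, this, smul_smul, cutAvg]
  norm_num

theorem dbar_avg {J0 : E →L[ℝ] E} (hJ : ∀ v, J0 (J0 v) = -v) (f : Hol E) (z : ℂ) (s : ℝ) :
    (avg (contDiff_dker (contDiff_kap J0)).continuous
      (hasCompactSupport_dker (hasCompactSupport_kap J0)) s f z) 1 +
    J0 ((avg (contDiff_dker (contDiff_kap J0)).continuous
      (hasCompactSupport_dker (hasCompactSupport_kap J0)) s f z) Complex.I)
    = (2 / Real.pi) • (cutAvg f z s - cutAvg f z (s * (1 / 4))) := by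
  have hi := integrable_ker (contDiff_dker (contDiff_kap J0)).continuous
    (hasCompactSupport_dker (hasCompactSupport_kap J0)) (f := fun w => f (z - s • w))
    (f.continuous.comp (by fun_prop))
  have hi4 : Integrable fun w : ℂ => (16 * deriv cut (‖(4 : ℝ) • w‖ ^ 2)) • f (z - s • w) := by
    have h := (integrable_cutAvg f z (s * (1 / 4))).comp_smul (R := (4 : ℝ)) (by norm_num)
    have e : ∀ w : ℂ, (s * (1 / 4)) • (4 : ℝ) • w = s • w := fun w => by
      rw [smul_smul]; congr 1; ring
    simp only [e] at h
    have := h.smul (16 : ℝ)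
    simpa only [smul_smul, Pi.smul_def] using this
  let L : (ℂ →L[ℝ] E) →L[ℝ] E := ContinuousLinearMap.apply ℝ E (1 : ℂ) +
    J0.comp (ContinuousLinearMap.apply ℝ E Complex.I)
  have hL : ∀ a : ℂ →L[ℝ] E, a 1 + J0 (a Complex.I) = L a := fun a => rfl
  rw [hL, avg_apply, ← ContinuousLinearMap.integral_comp_comm L hi, ← cutAvg_quarter f z s, cutAvg,
    ← integral_sub (integrable_cutAvg f z s) hi4, ← integral_smul]
  congr 1
  ext1 w
  rw [← hL]
  have := dbar_kap hJ w (f (z - s • w))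
  rw [← sub_smul, smul_smul]
  exact this

theorem dbar_cau {J0 : E →L[ℝ] E} (hJ : ∀ v, J0 (J0 v) = -v) (f : Hol E) (z : ℂ) :
    cau' J0 f z 1 + J0 (cau' J0 f z Complex.I) =
      (2 : ℝ) • f z + (2 / Real.pi) • cutAvg f z 1 := by
  let L : (ℂ →L[ℝ] E) →L[ℝ] E := ContinuousLinearMap.apply ℝ E (1 : ℂ) +
    J0.comp (ContinuousLinearMap.apply ℝ E Complex.I)
  have hs := (summable_avg (contDiff_dker (contDiff_kap J0))
    (hasCompactSupport_dker (hasCompactSupport_kap J0))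
    (integral_dker (contDiff_kap J0) (hasCompactSupport_kap J0)) f z).hasSum
  have h1 := (L.hasSum hs).tendsto_sum_nat
  have h2 : ∀ n : ℕ, ∑ j ∈ Finset.range n, L (avg (contDiff_dker (contDiff_kap J0)).continuous
      (hasCompactSupport_dker (hasCompactSupport_kap J0)) ((1 / 4) ^ j) f z) =
      (2 / Real.pi) • (cutAvg f z 1 - cutAvg f z ((1 / 4) ^ n)) := by
    intro n
    have : ∀ j : ℕ, L (avg (contDiff_dker (contDiff_kap J0)).continuous
      (hasCompactSupport_dker (hasCompactSupport_kap J0)) ((1 / 4) ^ j) f z) =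
      (2 / Real.pi) • (cutAvg f z ((1 / 4) ^ j) - cutAvg f z ((1 / 4) ^ (j + 1))) := by
      intro j
      rw [pow_succ]
      exact dbar_avg hJ f z _
    simp only [this]
    rw [← Finset.smul_sum, Finset.sum_range_sub' (fun j => cutAvg f z ((1 / 4) ^ j)), pow_zero]
  have h3 : Tendsto (fun n : ℕ => (2 / Real.pi) • (cutAvg f z 1 - cutAvg f z ((1 / 4) ^ n))) atTop
      (𝓝 ((2 / Real.pi) • (cutAvg f z 1 - cutAvg f z 0))) := by
    refine Tendsto.const_smul (tendsto_const_nhds.sub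
      (((continuous_cutAvg f z).tendsto 0).comp ?_)) _
    exact tendsto_pow_atTop_nhds_zero_of_lt_one (by norm_num) (by norm_num)
  have h4 := tendsto_nhds_unique h1 (h3.congr fun n => (h2 n).symm)
  have h5 : cau' J0 f z 1 + J0 (cau' J0 f z Complex.I) = L (∑' j : ℕ, avg
      (contDiff_dker (contDiff_kap J0)).continuous
      (hasCompactSupport_dker (hasCompactSupport_kap J0)) ((1 / 4) ^ j) f z) := rfl
  rw [h5, h4, cutAvg_zero]
  have hpi := Real.pi_ne_zero
  rw [smul_sub, smul_smul, show 2 / Real.pi * -Real.pi = -2 by field_simp]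
  module

/-- On a disc containing the support of `f`, the Cauchy transform solves `∂ₓu + J₀ ∂ᵧu = 2 f`. -/
theorem dbar_cau_of_support {J0 : E →L[ℝ] E} (hJ : ∀ v, J0 (J0 v) = -v) (f : Hol E)
    (hf : ∀ x, 2 ≤ ‖x‖ → f x = 0) (z : ℂ) (hz : ‖z‖ < 2) :
    cau' J0 f z 1 + J0 (cau' J0 f z Complex.I) = (2 : ℝ) • f z := by
  rw [dbar_cau hJ, cutAvg, integral_eq_zero_of_ae, smul_zero, add_zero]
  refine Eventually.of_forall fun w => ?_
  simp only [one_smul, Pi.zero_apply]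
  by_cases hw : ‖w‖ < 4
  · rw [deriv_cut_small, zero_smul]
    rw [abs_pow, abs_norm]
    nlinarith [norm_nonneg w]
  · rw [hf, smul_zero]
    have := norm_sub_norm_le w z
    rw [norm_sub_rev] at this
    linarith

end

section

/-! ### Inverse and implicit functions -/

section InverseFunction

variable {X Y Q : Type} [NormedAddCommGroup X] [NormedSpace ℝ X] [CompleteSpace X]
  [NormedAddCommGroup Y] [NormedSpace ℝ Y] [CompleteSpace Y]
  [NormedAddCommGroup Q] [NormedSpace ℝ Q] [CompleteSpace Q]

/-- The inverse function theorem for smooth maps, with an inverse that is smooth on a whole open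
set. -/
theorem smooth_inverse {F : X → Y} {U : Set X} (hU : IsOpen U) {a : X} (ha : a ∈ U)
    (hF : ContDiffOn ℝ (⊤ : ℕ∞) F U) (e : X ≃L[ℝ] Y) (he : HasFDerivAt F (e : X →L[ℝ] Y) a) :
    ∃ h : OpenPartialHomeomorph X Y, a ∈ h.source ∧ h.source ⊆ U ∧ (∀ x, h x = F x) ∧
      ContDiffOn ℝ (⊤ : ℕ∞) h.symm h.target := by
  have hFa : ContDiffAt ℝ (⊤ : ℕ∞) F a := hF.contDiffAt (hU.mem_nhds ha)
  let h0 := hFa.toOpenPartialHomeomorph F he (by simp)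
  let S : Set X := U ∩ fderiv ℝ F ⁻¹' range ((↑) : (X ≃L[ℝ] Y) → X →L[ℝ] Y)
  have hS : IsOpen S := (hF.continuousOn_fderiv_of_isOpen hU (by simp)).isOpen_inter_preimage hU
    ContinuousLinearEquiv.isOpen
  have haS : a ∈ S := ⟨ha, e, he.fderiv.symm⟩
  refine ⟨h0.restrOpen S hS, ⟨hFa.mem_toOpenPartialHomeomorph_source he (by simp), haS⟩,
    fun x hx => hx.2.1, fun x => rfl, fun y hy => ?_⟩
  have hx : (h0.restrOpen S hS).symm y ∈ h0.source ∩ S := (h0.restrOpen S hS).map_target hy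
  obtain ⟨e', he'⟩ := hx.2.2
  have hFx : ContDiffAt ℝ (⊤ : ℕ∞) F ((h0.restrOpen S hS).symm y) :=
    hF.contDiffAt (hU.mem_nhds hx.2.1)
  have hd : HasFDerivAt (h0.restrOpen S hS) (e' : X →L[ℝ] Y) ((h0.restrOpen S hS).symm y) := by
    rw [he']
    exact (hFx.differentiableAt (by simp)).hasFDerivAt
  exact ((h0.restrOpen S hS).contDiffAt_symm hy hd hFx).contDiffWithinAt

/-- Smooth dependence on parameters of the small fixed point of a smooth map which vanishes to
second order at the origin. -/
theorem fixed_point {G : Q × X → X} (hG : ContDiff ℝ (⊤ : ℕ∞) G) (hG0 : G 0 = 0)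
    (hG' : HasFDerivAt G (0 : Q × X →L[ℝ] X) 0) :
    ∃ r > 0, ∃ ρ > 0, ∃ φ : Q → X, φ 0 = 0 ∧ HasFDerivAt φ (0 : Q →L[ℝ] X) 0 ∧
      ContDiffOn ℝ (⊤ : ℕ∞) φ (ball 0 r) ∧
      (∀ q ∈ ball (0 : Q) r, φ q = G (q, φ q) ∧ ‖φ q‖ < ρ) ∧
      ∀ q ∈ ball (0 : Q) r, ∀ f, ‖f‖ < ρ → f = G (q, f) → f = φ q := by
  let H : Q × X → Q × X := fun p => (p.1, p.2 - G p)
  have hH : ContDiff ℝ (⊤ : ℕ∞) H := contDiff_fst.prodMk (contDiff_snd.sub hG)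
  have hH' : HasFDerivAt H ((ContinuousLinearEquiv.refl ℝ (Q × X) : (Q × X) ≃L[ℝ] (Q × X)) :
      (Q × X) →L[ℝ] (Q × X)) 0 := by
    have := (hasFDerivAt_fst (𝕜 := ℝ) (p := (0 : Q × X))).prodMk
      ((hasFDerivAt_snd (𝕜 := ℝ) (p := (0 : Q × X))).sub hG')
    refine this.congr_fderiv ?_
    ext <;> simp
  obtain ⟨h, h0, -, hfun, hsymm⟩ := smooth_inverse isOpen_univ (mem_univ (0 : Q × X))
    hH.contDiffOn _ hH'
  have hh0 : h 0 = 0 := by rw [hfun]; simp [H, hG0]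
  have ht0 : (0 : Q × X) ∈ h.target := by rw [← hh0]; exact h.map_source h0
  have hs0 : h.symm 0 = 0 := by
    have := h.left_inv h0
    rwa [hh0] at this
  obtain ⟨ρ, hρ, hρs⟩ := Metric.isOpen_iff.1 h.open_source 0 h0
  let φ : Q → X := fun q => (h.symm (q, 0)).2
  have hφs : ContDiffOn ℝ (⊤ : ℕ∞) φ ((fun q : Q => (q, (0 : X))) ⁻¹' h.target) :=
    contDiff_snd.comp_contDiffOn (hsymm.comp
      (contDiff_id.prodMk contDiff_const).contDiffOn (fun q hq => hq))
  have hopen : IsOpen ((fun q : Q => (q, (0 : X))) ⁻¹' h.target) :=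
    h.open_target.preimage (by fun_prop)
  have hmem : (0 : Q) ∈ (fun q : Q => (q, (0 : X))) ⁻¹' h.target := ht0
  have hφ0 : φ 0 = 0 := by
    change (h.symm 0).2 = 0
    rw [hs0]; rfl
  have hφc : ContinuousAt φ 0 := (hφs.contDiffAt (hopen.mem_nhds hmem)).continuousAt
  have hev : ∀ᶠ q in 𝓝 (0 : Q), q ∈ (fun q : Q => (q, (0 : X))) ⁻¹' h.target ∧ ‖φ q‖ < ρ ∧
      ‖q‖ < ρ := by
    refine Filter.Eventually.and (hopen.mem_nhds hmem) (Filter.Eventually.and ?_ ?_)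
    · exact hφc.norm.eventually_lt_const (by simpa [hφ0] using hρ)
    · exact continuous_norm.continuousAt.eventually_lt_const (by simpa using hρ)
  obtain ⟨r, hr, hrb⟩ := Metric.eventually_nhds_iff_ball.1 hev
  have hfix : ∀ q ∈ ball (0 : Q) r, φ q = G (q, φ q) := by
    intro q hq
    have hr1 : h (h.symm (q, 0)) = (q, 0) := h.right_inv (hrb q hq).1
    rw [hfun] at hr1
    have e1 : (h.symm (q, 0)).1 = q := congrArg Prod.fst hr1
    have e2 : (h.symm (q, 0)).2 - G (h.symm (q, 0)) = 0 := congrArg Prod.snd hr1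
    have e3 : h.symm (q, 0) = (q, φ q) := Prod.ext e1 rfl
    rw [e3] at e2
    exact sub_eq_zero.1 e2
  refine ⟨r, hr, ρ, hρ, φ, hφ0, ?_, hφs.mono fun q hq => (hrb q hq).1,
    fun q hq => ⟨hfix q hq, (hrb q hq).2.1⟩, ?_⟩
  · have hd : HasFDerivAt φ (fderiv ℝ φ 0) 0 :=
      ((hφs.contDiffAt (hopen.mem_nhds hmem)).differentiableAt (by simp)).hasFDerivAt
    have hG'' : HasFDerivAt G (0 : Q × X →L[ℝ] X) (0, φ 0) := by rw [hφ0]; exact hG'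
    have h2 := hG''.comp (0 : Q) ((hasFDerivAt_id (0 : Q)).prodMk hd)
    rw [ContinuousLinearMap.zero_comp] at h2
    refine h2.congr_of_eventuallyEq ?_
    filter_upwards [ball_mem_nhds 0 hr] with q hq
    exact hfix q hq
  · intro q hq f hf hfG
    have hsrc : (q, f) ∈ h.source := by
      apply hρs
      rw [mem_ball_zero_iff, Prod.norm_def]
      exact max_lt (hrb q hq).2.2 hf
    have e1 : h (q, f) = (q, 0) := by
      rw [hfun]
      simp only [H]
      rw [← hfG, sub_self]
    have e2 := h.left_inv hsrc
    rw [e1] at e2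
    simp only [φ, e2]

end InverseFunction

/-! ### The fixed point equation -/

section Equation

variable {E : Type} [NormedAddCommGroup E] [NormedSpace ℝ E]

/-- A smooth cutoff on the plane, equal to `1` on the disc of radius `3/2` and to `0` off the disc
of radius `2`. -/
def chi : ContDiffBump (0 : ℂ) := ⟨3 / 2, 2, by norm_num, by norm_num⟩

theorem contDiff_chi : ContDiff ℝ (⊤ : ℕ∞) chi := chi.contDiff

theorem chi_one {z : ℂ} (h : ‖z‖ ≤ 3 / 2) : chi z = 1 :=
  chi.one_of_mem_closedBall (by simpa [chi] using h)

theorem chi_zero {z : ℂ} (h : 2 ≤ ‖z‖) : chi z = 0 :=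
  chi.zero_of_le_dist (by simpa [chi] using h)

theorem cs_I_mul {J0 : E →L[ℝ] E} (hJ : ∀ v, J0 (J0 v) = -v) (z : ℂ) (v : E) :
    cs J0 (Complex.I * z) v = J0 (cs J0 z v) := by
  simp [cs_apply, hJ]
  abel

/-- The field of operators taking a list of coefficients to the value at `z` of the polynomial
with these coefficients. -/
def polyField (J0 : E →L[ℝ] E) (m : ℕ) (z : ℂ) : (Fin m → E) →L[ℝ] E :=
  ∑ l : Fin m, (cs J0 (z ^ (l : ℕ))).comp (ContinuousLinearMap.proj l)

theorem polyField_apply (J0 : E →L[ℝ] E) (m : ℕ) (z : ℂ) (c : Fin m → E) :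
    polyField J0 m z c = ∑ l : Fin m, cs J0 (z ^ (l : ℕ)) (c l) := by
  simp [polyField]

theorem contDiff_polyField (J0 : E →L[ℝ] E) (m : ℕ) : ContDiff ℝ (⊤ : ℕ∞) (polyField J0 m) := by
  unfold polyField
  refine ContDiff.sum fun l _ => ?_
  exact ((cs J0).contDiff.comp (contDiff_id.pow _)).clm_comp contDiff_const

/-- Polynomials are holomorphic for the constant structure `J₀`. -/
theorem dbar_polyField {J0 : E →L[ℝ] E} (hJ : ∀ v, J0 (J0 v) = -v) (m : ℕ) (z : ℂ)
    (c : Fin m → E) :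
    fderiv ℝ (polyField J0 m) z 1 c + J0 (fderiv ℝ (polyField J0 m) z Complex.I c) = 0 := by
  have h1 : ∀ l : ℕ, HasFDerivAt (fun z : ℂ => z ^ l)
      (((ContinuousLinearMap.toSpanSingleton ℂ ((l : ℂ) * z ^ (l - 1))) : ℂ →L[ℂ] ℂ).restrictScalars
        ℝ) z := fun l =>
    ((hasDerivAt_pow l z).hasFDerivAt).restrictScalars ℝ
  have h2 : ∀ v : ℂ, HasFDerivAt (fun z => polyField J0 m z c)
      (∑ l : Fin m, (ContinuousLinearMap.apply ℝ E (c l)).comp ((cs J0).comp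
        (((ContinuousLinearMap.toSpanSingleton ℂ (((l : ℕ) : ℂ) * z ^ ((l : ℕ) - 1))) :
          ℂ →L[ℂ] ℂ).restrictScalars ℝ))) z := by
    intro v
    simp only [polyField_apply]
    refine HasFDerivAt.fun_sum fun l _ => ?_
    exact (ContinuousLinearMap.apply ℝ E (c l)).hasFDerivAt.comp z
      ((cs J0).hasFDerivAt.comp z (h1 l))
  have h3 : HasFDerivAt (fun z => polyField J0 m z c)
      ((ContinuousLinearMap.apply ℝ E c).comp (fderiv ℝ (polyField J0 m) z)) z :=
    (ContinuousLinearMap.apply ℝ E c).hasFDerivAt.comp z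
      (((contDiff_polyField J0 m).differentiable (by simp)) z).hasFDerivAt
  have h4 := h3.unique (h2 0)
  have e1 := congrArg (fun L : ℂ →L[ℝ] E => L 1 + J0 (L Complex.I)) h4
  refine e1.trans ?_
  simp only [sum_apply, map_sum]
  rw [← Finset.sum_add_distrib]
  refine Finset.sum_eq_zero fun l _ => ?_
  simp [cs_I_mul hJ, hJ]

/-- The cut off polynomial field. -/
def eField (J0 : E →L[ℝ] E) (m : ℕ) (z : ℂ) : (Fin m → E) →L[ℝ] E := chi z • polyField J0 m z

theorem contDiff_eField (J0 : E →L[ℝ] E) (m : ℕ) : ContDiff ℝ (⊤ : ℕ∞) (eField J0 m) :=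
  contDiff_chi.smul (contDiff_polyField J0 m)

theorem hasCompactSupport_eField (J0 : E →L[ℝ] E) (m : ℕ) : HasCompactSupport (eField J0 m) :=
  chi.hasCompactSupport.smul_right

theorem eField_eventuallyEq (J0 : E →L[ℝ] E) (m : ℕ) {z : ℂ} (hz : ‖z‖ < 3 / 2) :
    eField J0 m =ᶠ[𝓝 z] polyField J0 m := by
  filter_upwards [(isOpen_lt continuous_norm continuous_const).mem_nhds hz] with x hx
  rw [eField, chi_one (le_of_lt hx), one_smul]

/-- The `x`-derivative of the cut off polynomial field. -/
def exField (J0 : E →L[ℝ] E) (m : ℕ) (z : ℂ) : (Fin m → E) →L[ℝ] E := fderiv ℝ (eField J0 m) z 1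

theorem contDiff_exField (J0 : E →L[ℝ] E) (m : ℕ) : ContDiff ℝ (⊤ : ℕ∞) (exField J0 m) :=
  ((contDiff_eField J0 m).fderiv_right (by simp)).clm_apply contDiff_const

theorem hasCompactSupport_exField (J0 : E →L[ℝ] E) (m : ℕ) : HasCompactSupport (exField J0 m) :=
  (hasCompactSupport_eField J0 m).fderiv_apply ℝ 1

theorem isBase_id : Hol.IsBase (fun z : ℂ => z) := fun _ _ => le_rfl

theorem isBase_inl : Hol.IsBase (fun z : ℂ => (z, (0 : E))) := fun x y => by
  simp [Prod.norm_def]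

/-- The map `(t, c) ↦ (z ↦ a(z + t) c)` for a smooth compactly supported field `a`. -/
def shiftField {C : Type} [NormedAddCommGroup C] [NormedSpace ℝ C] {a : ℂ → C →L[ℝ] E}
    (ha : ContDiff ℝ (⊤ : ℕ∞) a) (hc : HasCompactSupport a) (q : ℂ × C) : Hol E :=
  Hol.pairL (Hol.nem isBase_id ha hc (Hol.constL q.1)) (Hol.constL q.2)

theorem contDiff_shiftField {C : Type} [NormedAddCommGroup C] [NormedSpace ℝ C]
    {a : ℂ → C →L[ℝ] E} (ha : ContDiff ℝ (⊤ : ℕ∞) a) (hc : HasCompactSupport a) :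
    ContDiff ℝ (⊤ : ℕ∞) (shiftField ha hc) := by
  have h1 : ContDiff ℝ (⊤ : ℕ∞) fun q : ℂ × C => Hol.nem isBase_id ha hc (Hol.constL q.1) :=
    (Hol.contDiff_nem isBase_id ha hc).comp (Hol.constL.contDiff.comp contDiff_fst)
  have h2 : ContDiff ℝ (⊤ : ℕ∞) fun q : ℂ × C =>
      Hol.pairL (Hol.nem isBase_id ha hc (Hol.constL q.1)) :=
    (Hol.pairL (V := C) (W := E)).contDiff.comp h1
  exact h2.clm_apply (Hol.constL.contDiff.comp contDiff_snd)

theorem shiftField_apply {C : Type} [NormedAddCommGroup C] [NormedSpace ℝ C]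
    {a : ℂ → C →L[ℝ] E} (ha : ContDiff ℝ (⊤ : ℕ∞) a) (hc : HasCompactSupport a) (q : ℂ × C)
    (z : ℂ) : shiftField ha hc q z = a (z + q.1) q.2 := rfl

variable [CompleteSpace E] (J0 : E →L[ℝ] E) (m : ℕ)

/-- The candidate map attached to the shift `t`, the coefficients `c` and the density `f`: a
polynomial plus the Cauchy transform of `f`. -/
def lamOp (p : (ℂ × (Fin m → E)) × Hol E) : Hol E :=
  shiftField (contDiff_eField J0 m) (hasCompactSupport_eField J0 m) p.1 + cau J0 p.2

/-- The `x`-derivative of the candidate map. -/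
def lamxOp (p : (ℂ × (Fin m → E)) × Hol E) : Hol E :=
  shiftField (contDiff_exField J0 m) (hasCompactSupport_exField J0 m) p.1 +
    Hol.postL (ContinuousLinearMap.apply ℝ E (1 : ℂ)) (cau' J0 p.2)

theorem contDiff_lamOp : ContDiff ℝ (⊤ : ℕ∞) (lamOp J0 m) :=
  ((contDiff_shiftField _ _).comp contDiff_fst).add ((cau J0).contDiff.comp contDiff_snd)

theorem contDiff_lamxOp : ContDiff ℝ (⊤ : ℕ∞) (lamxOp J0 m) :=
  ((contDiff_shiftField _ _).comp contDiff_fst).add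
    ((Hol.postL (ContinuousLinearMap.apply ℝ E (1 : ℂ))).contDiff.comp
      ((cau' J0).contDiff.comp contDiff_snd))

theorem lamOp_zero : lamOp J0 m 0 = 0 := by
  have : shiftField (contDiff_eField J0 m) (hasCompactSupport_eField J0 m) 0 = 0 :=
    Hol.ext fun z => by simp [shiftField_apply]
  simp [lamOp, this]

theorem lamxOp_zero : lamxOp J0 m 0 = 0 := by
  have : shiftField (contDiff_exField J0 m) (hasCompactSupport_exField J0 m) 0 = 0 :=
    Hol.ext fun z => by simp [shiftField_apply]
  simp [lamxOp, this]

variable {B : E → E →L[ℝ] E} (hB : ContDiff ℝ (⊤ : ℕ∞) B) (hBc : HasCompactSupport B)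

theorem contDiff_coef (hB : ContDiff ℝ (⊤ : ℕ∞) B) :
    ContDiff ℝ (⊤ : ℕ∞) fun y : ℂ × E => chi y.1 • B y.2 :=
  (contDiff_chi.comp contDiff_fst).smul (hB.comp contDiff_snd)

theorem hasCompactSupport_coef (hBc : HasCompactSupport B) :
    HasCompactSupport fun y : ℂ × E => chi y.1 • B y.2 := by
  refine HasCompactSupport.intro ((isCompact_closedBall (0 : ℂ) 2).prod hBc.isCompact) ?_
  intro y hy
  by_cases h1 : ‖y.1‖ ≤ 2
  · have h2 : y.2 ∉ tsupport B := fun h => hy ⟨by simpa using h1, h⟩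
    rw [image_eq_zero_of_notMem_tsupport h2, smul_zero]
  · rw [chi_zero (by linarith), zero_smul]

/-- The argument of the coefficient `χ(z) B(v)` attached to a shift and a candidate map. -/
def argOp (p : (ℂ × (Fin m → E)) × Hol E) : Hol (ℂ × E) :=
  Hol.postL (ContinuousLinearMap.inl ℝ ℂ E) (Hol.constL p.1.1) +
    Hol.postL (ContinuousLinearMap.inr ℝ ℂ E) (lamOp J0 m p)

theorem contDiff_argOp : ContDiff ℝ (⊤ : ℕ∞) (argOp J0 m) :=
  ((Hol.postL (ContinuousLinearMap.inl ℝ ℂ E)).contDiff.comp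
    (Hol.constL.contDiff.comp (contDiff_fst.comp contDiff_fst))).add
  ((Hol.postL (ContinuousLinearMap.inr ℝ ℂ E)).contDiff.comp (contDiff_lamOp J0 m))

/-- The coefficient operator `χ B(λ)`. -/
def coefOp (p : (ℂ × (Fin m → E)) × Hol E) : Hol (E →L[ℝ] E) :=
  Hol.nem isBase_inl (contDiff_coef hB) (hasCompactSupport_coef hBc) (argOp J0 m p)

theorem coefOp_apply (p : (ℂ × (Fin m → E)) × Hol E) (z : ℂ) :
    coefOp J0 m hB hBc p z = chi (z + p.1.1) • B (lamOp J0 m p z) := by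
  simp [coefOp, argOp]

theorem contDiff_coefOp : ContDiff ℝ (⊤ : ℕ∞) (coefOp J0 m hB hBc) :=
  (Hol.contDiff_nem _ _ _).comp (contDiff_argOp J0 m)

/-- The operator whose fixed points `f` are the densities of `J`-holomorphic maps. -/
def eqOp (p : (ℂ × (Fin m → E)) × Hol E) : Hol E :=
  Hol.pairL (coefOp J0 m hB hBc p) (lamxOp J0 m p)

theorem eqOp_apply (p : (ℂ × (Fin m → E)) × Hol E) (z : ℂ) :
    eqOp J0 m hB hBc p z = chi (z + p.1.1) • B (lamOp J0 m p z) (lamxOp J0 m p z) := by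
  rw [eqOp, Hol.pairL_apply, coefOp_apply]
  rfl

theorem contDiff_eqOp : ContDiff ℝ (⊤ : ℕ∞) (eqOp J0 m hB hBc) := by
  have h : ContDiff ℝ (⊤ : ℕ∞) fun p => Hol.pairL (coefOp J0 m hB hBc p) :=
    (Hol.pairL (V := E) (W := E)).contDiff.comp (contDiff_coefOp J0 m hB hBc)
  exact h.clm_apply (contDiff_lamxOp J0 m)

theorem eqOp_zero : eqOp J0 m hB hBc 0 = 0 := by
  rw [eqOp, lamxOp_zero, map_zero]

theorem hasFDerivAt_eqOp (hB0 : B 0 = 0) :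
    HasFDerivAt (eqOp J0 m hB hBc) (0 : (ℂ × (Fin m → E)) × Hol E →L[ℝ] Hol E) 0 := by
  have hc0 : coefOp J0 m hB hBc 0 = 0 := Hol.ext fun z => by
    rw [coefOp_apply, lamOp_zero]
    simp [hB0]
  have h1 := (((contDiff_coefOp J0 m hB hBc).differentiable (by simp)) 0).hasFDerivAt
  have h2 := (((contDiff_lamxOp J0 m).differentiable (by simp)) 0).hasFDerivAt
  have h3 := (Hol.pairL (V := E) (W := E)).hasFDerivAt_of_bilinear h1 h2
  refine h3.congr_fderiv ?_
  rw [hc0, lamxOp_zero, map_zero, map_zero, zero_apply, zero_add]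

/-- Translation in the plane is compensated by a shift of the parameter. -/
theorem eqOp_trans (t s : ℂ) (c : Fin m → E) (f : Hol E) :
    eqOp J0 m hB hBc ((t + s, c), Hol.transL s f) =
      Hol.transL s (eqOp J0 m hB hBc ((t, c), f)) := by
  have e1 : ∀ z, lamOp J0 m ((t + s, c), Hol.transL s f) z = lamOp J0 m ((t, c), f) (z + s) := by
    intro z
    simp only [lamOp, cau_trans, Hol.add_apply, Hol.transL_apply, shiftField_apply]
    rw [show z + (t + s) = z + s + t by ring]
  have e2 : ∀ z, lamxOp J0 m ((t + s, c), Hol.transL s f) z = lamxOp J0 m ((t, c), f) (z + s) := by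
    intro z
    simp only [lamxOp, cau'_trans, Hol.add_apply, Hol.transL_apply, shiftField_apply,
      Hol.postL_apply]
    rw [show z + (t + s) = z + s + t by ring]
  refine Hol.ext fun z => ?_
  rw [Hol.transL_apply, eqOp_apply, eqOp_apply, e1, e2]
  simp only
  rw [show z + (t + s) = z + s + t by ring]

/-- The solutions of the cut off equation, as a family over the coefficients of the polynomial
part. -/
theorem exists_family {J0 : E →L[ℝ] E} (hJ : ∀ v, J0 (J0 v) = -v)
    (hB : ContDiff ℝ (⊤ : ℕ∞) B) (hBc : HasCompactSupport B) (hB0 : B 0 = 0) (m : ℕ) :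
    ∃ r > 0, ∃ u : (Fin m → E) → Hol E, u 0 = 0 ∧
      (∃ L : (Fin m → E) →L[ℝ] Hol E, HasFDerivAt u L 0 ∧ ∀ c z, L c z = eField J0 m z c) ∧
      ContDiffOn ℝ (⊤ : ℕ∞) (fun p : (Fin m → E) × ℂ => u p.1 p.2) (ball 0 r ×ˢ univ) ∧
      ∀ c ∈ ball (0 : Fin m → E) r, ∀ z : ℂ, ‖z‖ < 3 / 2 →
        fderiv ℝ (u c) z 1 + J0 (fderiv ℝ (u c) z Complex.I) =
          (2 : ℝ) • B (u c z) (fderiv ℝ (u c) z 1) := by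
  obtain ⟨r, hr, ρ, hρ, φ, hφ0, hφ', hφs, hfix, huniq⟩ :=
    fixed_point (contDiff_eqOp J0 m hB hBc) (eqOp_zero J0 m hB hBc)
      (hasFDerivAt_eqOp J0 m hB hBc hB0)
  have hmem : ∀ (t : ℂ) (c : Fin m → E), (t, c) ∈ ball (0 : ℂ × (Fin m → E)) r ↔
      ‖t‖ < r ∧ ‖c‖ < r := fun t c => by
    rw [mem_ball_zero_iff, Prod.norm_def, max_lt_iff]
  -- by uniqueness, shifting the parameter translates the solution
  have hshift : ∀ (t : ℂ) (c : Fin m → E), ‖t‖ < r → ‖c‖ < r →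
      φ (t, c) = Hol.transL t (φ (0, c)) := by
    intro t c ht hc
    have h0 := hfix (0, c) ((hmem 0 c).2 ⟨by simpa using hr, hc⟩)
    refine (huniq (t, c) ((hmem t c).2 ⟨ht, hc⟩) _
      ((Hol.norm_transL_le t _).trans_lt h0.2) ?_).symm
    have h1 := eqOp_trans J0 m hB hBc 0 t c (φ (0, c))
    rw [zero_add, ← h0.1] at h1
    exact h1.symm
  let u : (Fin m → E) → Hol E := fun c => lamOp J0 m ((0, c), φ (0, c))
  have hlam : ∀ (t : ℂ) (c : Fin m → E) (z : ℂ), ‖t‖ < r → ‖c‖ < r →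
      u c (z + t) = lamOp J0 m ((t, c), φ (t, c)) z := by
    intro t c z ht hc
    rw [hshift t c ht hc]
    simp [u, lamOp, cau_trans, shiftField_apply]
  refine ⟨r, hr, u, ?_, ?_, ?_, ?_⟩
  · have : ((0 : ℂ), (0 : Fin m → E)) = 0 := rfl
    simp only [u]
    rw [this, hφ0]
    exact lamOp_zero J0 m
  · let L : (Fin m → E) →L[ℝ] Hol E :=
      (Hol.pairL (Hol.nem isBase_id (contDiff_eField J0 m) (hasCompactSupport_eField J0 m)
        (Hol.constL 0))).comp Hol.constL
    refine ⟨L, ?_, fun c z => ?_⟩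
    · have h1 : HasFDerivAt (fun c : Fin m → E => φ (0, c)) (0 : (Fin m → E) →L[ℝ] Hol E) 0 := by
        have h2 : HasFDerivAt (fun c : Fin m → E => ((0 : ℂ), c))
            (ContinuousLinearMap.inr ℝ ℂ (Fin m → E)) 0 :=
          (ContinuousLinearMap.inr ℝ ℂ (Fin m → E)).hasFDerivAt
        have h3 := HasFDerivAt.comp (0 : Fin m → E) (g := φ) hφ' h2
        rw [ContinuousLinearMap.zero_comp] at h3
        exact h3
      have h2 := L.hasFDerivAt.add ((cau J0).hasFDerivAt.comp (0 : Fin m → E) h1)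
      rw [ContinuousLinearMap.comp_zero, add_zero] at h2
      exact h2
    · simp [L]
  · rw [show (ball (0 : Fin m → E) r ×ˢ (univ : Set ℂ)) = {p | ‖p.1‖ < r} by ext; simp]
    intro p hp
    obtain ⟨c0, z0⟩ := p
    have hp' : ‖c0‖ < r := hp
    refine ContDiffAt.contDiffWithinAt ?_
    have hsm : ContDiffAt ℝ (⊤ : ℕ∞) (fun p : (Fin m → E) × ℂ =>
        lamOp J0 m ((p.2 - z0, p.1), φ (p.2 - z0, p.1)) z0) (c0, z0) := by
      have h1 : ContDiff ℝ (⊤ : ℕ∞) fun p : (Fin m → E) × ℂ => (p.2 - z0, p.1) :=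
        (contDiff_snd.sub contDiff_const).prodMk contDiff_fst
      have h2 : ContDiffAt ℝ (⊤ : ℕ∞) (fun p : (Fin m → E) × ℂ => φ (p.2 - z0, p.1)) (c0, z0) := by
        refine ContDiffAt.comp (c0, z0) (g := φ) ?_ h1.contDiffAt
        refine hφs.contDiffAt (isOpen_ball.mem_nhds ((hmem _ _).2 ⟨?_, hp'⟩))
        simpa using hr
      have h3 : ContDiffAt ℝ (⊤ : ℕ∞) (fun p : (Fin m → E) × ℂ =>
          lamOp J0 m ((p.2 - z0, p.1), φ (p.2 - z0, p.1))) (c0, z0) :=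
        (contDiff_lamOp J0 m).contDiffAt.comp (c0, z0) (h1.contDiffAt.prodMk h2)
      exact (Hol.evalL z0).contDiff.contDiffAt.comp (c0, z0) h3
    refine hsm.congr_of_eventuallyEq ?_
    have hopen : IsOpen {p : (Fin m → E) × ℂ | ‖p.1‖ < r ∧ ‖p.2 - z0‖ < r} :=
      (isOpen_lt (f := fun p : (Fin m → E) × ℂ => ‖p.1‖) (by fun_prop) continuous_const).inter
        (isOpen_lt (f := fun p : (Fin m → E) × ℂ => ‖p.2 - z0‖) (by fun_prop) continuous_const)
    filter_upwards [hopen.mem_nhds ⟨hp', by simpa using hr⟩] with p hp2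
    have := hlam (p.2 - z0) p.1 z0 hp2.2 hp2.1
    rw [add_sub_cancel] at this
    exact this
  · intro c hc z hz
    have hc' : ‖c‖ < r := by simpa using hc
    have h0 := (hfix (0, c) ((hmem 0 c).2 ⟨by simpa using hr, hc'⟩)).1
    set f := φ (0, c) with hf
    have hsupp : ∀ x, 2 ≤ ‖x‖ → f x = 0 := by
      intro x hx
      rw [h0, eqOp_apply]
      simp [chi_zero hx]
    have hd : HasFDerivAt (u c) ((ContinuousLinearMap.apply ℝ E c).comp
        (fderiv ℝ (eField J0 m) z) + cau' J0 f z) z := by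
      have h1 : HasFDerivAt (fun z => eField J0 m z c) ((ContinuousLinearMap.apply ℝ E c).comp
          (fderiv ℝ (eField J0 m) z)) z :=
        (ContinuousLinearMap.apply ℝ E c).hasFDerivAt.comp z
          (((contDiff_eField J0 m).differentiable (by simp)) z).hasFDerivAt
      have h2 := h1.add (hasFDerivAt_cau J0 f z)
      refine h2.congr_of_eventuallyEq (Eventually.of_forall fun x => ?_)
      simp [u, lamOp, shiftField_apply, ← hf]
    rw [hd.fderiv]
    have hx : ((ContinuousLinearMap.apply ℝ E c).comp
        (fderiv ℝ (eField J0 m) z) + cau' J0 f z) 1 = lamxOp J0 m ((0, c), f) z := by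
      simp [lamxOp, shiftField_apply, exField]
    have hu : u c z = lamOp J0 m ((0, c), f) z := rfl
    have hfz : f z = B (u c z) (lamxOp J0 m ((0, c), f) z) := by
      have e := congrArg (fun g : Hol E => g z) h0
      simp only [eqOp_apply] at e
      rw [add_zero, chi_one hz.le, one_smul] at e
      exact e
    have hpoly := dbar_polyField hJ m z c
    rw [← (eField_eventuallyEq J0 m hz).fderiv_eq] at hpoly
    have hcau := dbar_cau_of_support hJ f hsupp z (by linarith)
    rw [hfz, ← hx] at hcau
    rw [← hcau]
    simp only [add_apply, ContinuousLinearMap.comp_apply,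
      ContinuousLinearMap.apply_apply, map_add]
    rw [add_add_add_comm, hpoly, zero_add]

end Equation

end

section

/-! ### Smooth families of maps and their jets -/

section Jets

variable {P Z : Type} [NormedAddCommGroup P] [NormedSpace ℝ P]
  [NormedAddCommGroup Z] [NormedSpace ℝ Z]

theorem hasFDerivAt_slice {Y : Type} [NormedAddCommGroup Y] [NormedSpace ℝ Y] {F : P × Z → Y}
    {c : P} {z : Z} (h : DifferentiableAt ℝ F (c, z)) :
    HasFDerivAt (fun z => F (c, z))
      ((fderiv ℝ F (c, z)).comp (ContinuousLinearMap.inr ℝ P Z)) z :=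
  h.hasFDerivAt.comp z (hasFDerivAt_prodMk_right c z)

theorem hasFDerivAt_slice_left {Y : Type} [NormedAddCommGroup Y] [NormedSpace ℝ Y] {F : P × Z → Y}
    {c : P} {z : Z} (h : DifferentiableAt ℝ F (c, z)) :
    HasFDerivAt (fun c => F (c, z))
      ((fderiv ℝ F (c, z)).comp (ContinuousLinearMap.inl ℝ P Z)) c :=
  h.hasFDerivAt.comp c (hasFDerivAt_prodMk_left c z)

/-- The jets in `z` of a smooth family `F (c, z)` are jointly smooth in `(c, z)`. -/
theorem contDiffOn_jets {W : Set P} (hW : IsOpen W) (j : ℕ) :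
    ∀ {Y : Type} [NormedAddCommGroup Y] [NormedSpace ℝ Y] {F : P × Z → Y},
      ContDiffOn ℝ (⊤ : ℕ∞) F (W ×ˢ univ) →
      ContDiffOn ℝ (⊤ : ℕ∞) (fun p : P × Z => iteratedFDeriv ℝ j (fun z => F (p.1, z)) p.2)
        (W ×ˢ univ) := by
  have hO : IsOpen (W ×ˢ (univ : Set Z)) := hW.prod isOpen_univ
  induction j with
  | zero =>
    intro Y _ _ F hF
    exact ((continuousMultilinearCurryFin0 ℝ Z Y).symm.contDiff.of_le le_top).comp_contDiffOn hF
  | succ j ih =>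
    intro Y _ _ F hF
    have hG : ContDiffOn ℝ (⊤ : ℕ∞) (fun p => (fderiv ℝ F p).comp (ContinuousLinearMap.inr ℝ P Z))
        (W ×ˢ univ) :=
      (hF.fderiv_of_isOpen hO (by simp)).clm_comp contDiffOn_const
    refine ((((continuousMultilinearCurryRightEquiv' ℝ j Z Y).symm.contDiff).of_le
      le_top).comp_contDiffOn (ih hG)).congr fun p hp => ?_
    rw [iteratedFDeriv_succ_eq_comp_right]
    simp only [Function.comp_apply]
    congr 2
    funext z
    have : (p.1, z) ∈ W ×ˢ (univ : Set Z) := ⟨hp.1, mem_univ _⟩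
    exact (hasFDerivAt_slice ((hF.contDiffAt (hO.mem_nhds this)).differentiableAt (by simp))).fderiv

/-- Differentiation in the parameter commutes with iterated differentiation in
a real variable. -/
theorem hasFDerivAt_iteratedDeriv_slice {W : Set P} (hW : IsOpen W) (j : ℕ) {c : P} (hc : c ∈ W) :
    ∀ {Y : Type} [NormedAddCommGroup Y] [NormedSpace ℝ Y] {F : P × ℝ → Y},
      ContDiffOn ℝ (⊤ : ℕ∞) F (W ×ˢ univ) → ∀ x : ℝ, ∃ L : P →L[ℝ] Y,
      HasFDerivAt (fun c => iteratedDeriv j (fun x => F (c, x)) x) L c ∧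
      ∀ v, L v = iteratedDeriv j (fun x => fderiv ℝ F (c, x) (v, 0)) x := by
  have hO : IsOpen (W ×ˢ (univ : Set ℝ)) := hW.prod isOpen_univ
  induction j with
  | zero =>
    intro Y _ _ F hF x
    have hm : (c, x) ∈ W ×ˢ (univ : Set ℝ) := ⟨hc, mem_univ _⟩
    refine ⟨(fderiv ℝ F (c, x)).comp (ContinuousLinearMap.inl ℝ P ℝ), ?_, fun v => ?_⟩
    · simp only [iteratedDeriv_zero]
      exact hasFDerivAt_slice_left ((hF.contDiffAt (hO.mem_nhds hm)).differentiableAt (by simp))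
    · simp
  | succ j ih =>
    intro Y _ _ F hF x
    have hD := hF.fderiv_of_isOpen (m := (⊤ : ℕ∞)) hO (by simp)
    have hG : ContDiffOn ℝ (⊤ : ℕ∞) (fun p => fderiv ℝ F p ((0, 1) : P × ℝ)) (W ×ˢ univ) :=
      hD.clm_apply contDiffOn_const
    obtain ⟨L, hL, hLv⟩ := ih hG x
    have hd : ∀ c' ∈ W, ∀ x', DifferentiableAt ℝ F (c', x') := fun c' hc' x' =>
      (hF.contDiffAt (hO.mem_nhds ⟨hc', mem_univ _⟩)).differentiableAt (by simp)
    refine ⟨L, ?_, fun v => ?_⟩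
    · refine hL.congr_of_eventuallyEq ?_
      filter_upwards [hW.mem_nhds hc] with c' hc'
      rw [iteratedDeriv_succ']
      congr 1
      funext x'
      have := (hasFDerivAt_slice (hd c' hc' x')).hasDerivAt.deriv
      simpa using this
    · rw [hLv, iteratedDeriv_succ']
      congr 1
      funext x'
      have hF' : ContDiffAt ℝ (⊤ : ℕ∞) F (c, x') := hF.contDiffAt (hO.mem_nhds ⟨hc, mem_univ _⟩)
      have hD' : DifferentiableAt ℝ (fderiv ℝ F) (c, x') :=
        (hD.contDiffAt (hO.mem_nhds ⟨hc, mem_univ _⟩)).differentiableAt (by simp)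
      have hsym : IsSymmSndFDerivAt ℝ F (c, x') := hF'.isSymmSndFDerivAt (by
        rw [minSmoothness_of_isRCLikeNormedField]
        exact WithTop.coe_le_coe.2 (le_top : (2 : ℕ∞) ≤ ⊤))
      have e1 : fderiv ℝ (fun p => fderiv ℝ F p ((0, 1) : P × ℝ)) (c, x') (v, 0)
          = fderiv ℝ (fderiv ℝ F) (c, x') (v, 0) (0, 1) := by
        rw [fderiv_clm_apply hD' (by fun_prop)]
        simp
      have e2 := (hasFDerivAt_slice (F := fun p => fderiv ℝ F p ((v, 0) : P × ℝ)) (c := c) (z := x')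
        (hD'.clm_apply (by fun_prop))).hasDerivAt.deriv
      rw [e1, e2, hsym.eq, fderiv_clm_apply hD' (by fun_prop)]
      simp

theorem iteratedFDeriv_one_eq {Y : Type} [NormedAddCommGroup Y] [NormedSpace ℝ Y] {f : ℂ → Y}
    (hf : ContDiff ℝ (⊤ : ℕ∞) f) (l : ℕ) :
    iteratedFDeriv ℝ l f 0 (fun _ => (1 : ℂ)) = iteratedDeriv l (fun x : ℝ => f x) 0 := by
  have := ContinuousLinearMap.iteratedFDeriv_comp_right (i := l) Complex.ofRealCLM
    (f := f) (hf) (0 : ℝ) (by exact_mod_cast le_top)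
  rw [iteratedDeriv_eq_iteratedFDeriv]
  change _ = iteratedFDeriv ℝ l (f ∘ Complex.ofRealCLM) 0 _
  rw [this]
  simp

theorem iteratedDeriv_sum_pow_smul {Y : Type} [NormedAddCommGroup Y] [NormedSpace ℝ Y] (m : ℕ)
    (v : Fin m → Y) (l : Fin m) :
    iteratedDeriv l (fun x : ℝ => ∑ i : Fin m, x ^ (i : ℕ) • v i) 0 = ((l : ℕ).factorial : ℝ) • v l := by
  rw [iteratedDeriv_fun_sum (fun i _ => by fun_prop)]
  rw [Finset.sum_eq_single l]
  · rw [iteratedDeriv_smul_const (by fun_prop)]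
    simp [Nat.descFactorial_self]
  · intro i _ hi
    rw [iteratedDeriv_smul_const (by fun_prop), iteratedDeriv_fun_pow_zero, if_neg, Nat.cast_zero, zero_smul]
    exact fun h => hi (Fin.ext h).symm
  · simp

end Jets

end

section

/-! ### Differentiability into spaces of continuous functions -/

section SupNorm

variable {P Z Y : Type} [NormedAddCommGroup P] [NormedSpace ℝ P]
  [NormedAddCommGroup Z] [NormedSpace ℝ Z] [NormedAddCommGroup Y] [NormedSpace ℝ Y]

/-- A continuous family of linear maps, regarded as a linear map into continuous functions. -/
def swapCLM (K : Type) [TopologicalSpace K] [CompactSpace K] :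
    C(K, P →L[ℝ] Y) →L[ℝ] (P →L[ℝ] C(K, Y)) :=
  LinearMap.mkContinuous₂
    (LinearMap.mk₂ ℝ (fun (g : C(K, P →L[ℝ] Y)) (v : P) =>
        (⟨fun z => g z v, by fun_prop⟩ : C(K, Y)))
      (fun _ _ _ => by ext; simp) (fun _ _ _ => by ext; simp) (fun _ _ _ => by ext; simp)
      (fun _ _ _ => by ext; simp)) 1 (fun g v => by
    rw [one_mul, ContinuousMap.norm_le _ (by positivity)]
    exact fun z => (g z).le_of_opNorm_le (g.norm_coe_le_norm z) v)

theorem swapCLM_apply {K : Type} [TopologicalSpace K] [CompactSpace K] (g : C(K, P →L[ℝ] Y))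
    (v : P) (z : K) : swapCLM K g v z = g z v := rfl

/-- A jointly smooth family over a compact set is `C¹` in the parameter for the sup norm. -/
theorem contDiffOn_one_sup {W : Set P} (hW : IsOpen W) {K : Set Z} [CompactSpace K]
    {F : P × Z → Y} (hF : ContDiffOn ℝ (⊤ : ℕ∞) F (W ×ˢ univ)) (Φ : P → C(K, Y))
    (hΦ : ∀ c ∈ W, ∀ z : K, Φ c z = F (c, z)) : ContDiffOn ℝ 1 Φ W := by
  have hO : IsOpen (W ×ˢ (univ : Set Z)) := hW.prod isOpen_univ
  have hD : ContinuousOn (fun p : P × Z => (fderiv ℝ F p).comp (ContinuousLinearMap.inl ℝ P Z))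
      (W ×ˢ univ) :=
    (hF.continuousOn_fderiv_of_isOpen hO (by simp)).clm_comp continuousOn_const
  have hDsub : Continuous (fun q : W × K => (fderiv ℝ F ((q.1 : P), (q.2 : Z))).comp
      (ContinuousLinearMap.inl ℝ P Z)) :=
    hD.comp_continuous (by fun_prop) fun q => ⟨q.1.2, mem_univ _⟩
  -- the derivative in the parameter, as a continuous map from `W` to the continuous functions
  let Ψ : C(W, C(K, P →L[ℝ] Y)) := ContinuousMap.curry ⟨_, hDsub⟩
  let Ψ' : P → C(K, P →L[ℝ] Y) := fun c => if hc : c ∈ W then Ψ ⟨c, hc⟩ else 0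
  have hΨ'c : ContinuousOn Ψ' W := by
    rw [continuousOn_iff_continuous_domRestrict]
    convert Ψ.continuous using 1
    funext c
    simp [Ψ', c.2]
  have hΨ' : ∀ c ∈ W, ∀ z : K, Ψ' c z =
      (fderiv ℝ F (c, z)).comp (ContinuousLinearMap.inl ℝ P Z) := by
    intro c hc z
    simp only [Ψ', dif_pos hc]
    rfl
  have hd : ∀ c ∈ W, ∀ z : K, HasFDerivAt (fun c => F (c, z)) (Ψ' c z) c := by
    intro c hc z
    rw [hΨ' c hc z]
    exact hasFDerivAt_slice_left
      ((hF.contDiffAt (hO.mem_nhds ⟨hc, mem_univ _⟩)).differentiableAt (by simp))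
  have hder : ∀ c ∈ W, HasFDerivAt Φ (swapCLM K (Ψ' c)) c := by
    intro c hc
    rw [hasFDerivAt_iff_isLittleO, Asymptotics.isLittleO_iff]
    intro ε hε
    have h1 : ∀ᶠ x in 𝓝 c, x ∈ W ∧ dist (Ψ' x) (Ψ' c) < ε :=
      (hW.eventually_mem hc).and
        ((hΨ'c.continuousAt (hW.mem_nhds hc)).eventually (ball_mem_nhds _ hε))
    obtain ⟨r, hr, hball⟩ := Metric.eventually_nhds_iff_ball.1 h1
    filter_upwards [ball_mem_nhds c hr] with x hx
    rw [ContinuousMap.norm_le _ (by positivity)]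
    intro z
    have := (convex_ball c r).norm_image_sub_le_of_norm_hasFDerivWithin_le'
      (f := fun c => F (c, z)) (f' := fun x => Ψ' x z) (φ := Ψ' c z) (C := ε)
      (fun y hy => (hd y (hball y hy).1 z).hasFDerivWithinAt)
      (fun y hy => by
        rw [← dist_eq_norm]
        exact (ContinuousMap.dist_apply_le_dist z).trans (hball y hy).2.le)
      (mem_ball_self hr) hx
    simpa [hΦ c hc, hΦ x (hball x hx).1, swapCLM_apply] using this
  rw [show (1 : WithTop ℕ∞) = 0 + 1 by simp,
    contDiffOn_succ_iff_hasFDerivWithinAt_of_uniqueDiffOn hW.uniqueDiffOn]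
  refine ⟨by simp, fun c => swapCLM K (Ψ' c), ?_, fun c hc => (hder c hc).hasFDerivWithinAt⟩
  exact contDiffOn_zero.2 ((swapCLM K).continuous.comp_continuousOn hΨ'c)

end SupNorm

end

section

/-! ### Discs with prescribed jets -/

section Assembly

variable {E : Type} [NormedAddCommGroup E]

/-- Multiplication of the `l`-th component by `l!`: the linearised jet map. -/
def factEquiv (E : Type) [NormedAddCommGroup E] [NormedSpace ℝ E] (m : ℕ) :
    (Fin m → E) ≃L[ℝ] (Fin m → E) :=
  ContinuousLinearEquiv.equivOfInverse
    (ContinuousLinearMap.pi fun l => ((l : ℕ).factorial : ℝ) • ContinuousLinearMap.proj l)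
    (ContinuousLinearMap.pi fun l => ((l : ℕ).factorial : ℝ)⁻¹ • ContinuousLinearMap.proj l)
    (fun v => by
      funext l
      simp [smul_smul, Nat.factorial_ne_zero])
    (fun v => by
      funext l
      simp [smul_smul, Nat.factorial_ne_zero])

theorem factEquiv_apply [NormedSpace ℝ E] (m : ℕ) (v : Fin m → E) (l : Fin m) :
    factEquiv E m v l = ((l : ℕ).factorial : ℝ) • v l := rfl

/-- The jet at `0`, along the real axis, of a map `ℂ → E`. -/
def jet [NormedSpace ℝ E] (m : ℕ) (f : ℂ → E) (l : Fin m) : E :=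
  iteratedFDeriv ℝ l f 0 fun _ => (1 : ℂ)

/-- At the zero disc, the jet map of a family with first-order term `eField` has derivative
`(v_l) ↦ (l! • v_l)`. -/
theorem hasFDerivAt_jet [NormedSpace ℝ E] {J0 : E →L[ℝ] E} {m : ℕ} {r : ℝ} (hr : 0 < r)
    {u : (Fin m → E) → Hol E} {L : (Fin m → E) →L[ℝ] Hol E} (hL : HasFDerivAt u L 0)
    (hLe : ∀ c z, L c z = eField J0 m z c)
    (hu : ContDiffOn ℝ (⊤ : ℕ∞) (fun p : (Fin m → E) × ℂ => u p.1 p.2) (ball 0 r ×ˢ univ)) :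
    HasFDerivAt (fun c => jet m (u c)) (factEquiv E m : (Fin m → E) →L[ℝ] (Fin m → E)) 0 := by
  have hO : IsOpen (ball (0 : Fin m → E) r ×ˢ (univ : Set ℂ)) := isOpen_ball.prod isOpen_univ
  rw [hasFDerivAt_pi']
  intro l
  let F : (Fin m → E) × ℝ → E := fun p => u p.1 (p.2 : ℂ)
  have hF : ContDiffOn ℝ (⊤ : ℕ∞) F (ball 0 r ×ˢ univ) := by
    refine hu.comp (t := ball (0 : Fin m → E) r ×ˢ (univ : Set ℂ))
      (f := fun p : (Fin m → E) × ℝ => (p.1, (p.2 : ℂ))) ?_ fun p hp => ⟨hp.1, mem_univ _⟩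
    exact (contDiff_fst.prodMk (Complex.ofRealCLM.contDiff.comp contDiff_snd)).contDiffOn
  obtain ⟨D, hD, hDv⟩ := hasFDerivAt_iteratedDeriv_slice isOpen_ball l (mem_ball_self hr) hF 0
  have hsm : ∀ c ∈ ball (0 : Fin m → E) r, ContDiff ℝ (⊤ : ℕ∞) (u c) := fun c hc =>
    contDiff_iff_contDiffAt.2 fun z =>
      (hu.contDiffAt (hO.mem_nhds (x := (c, z)) ⟨hc, mem_univ _⟩)).comp z
        (contDiff_prodMk_right c).contDiffAt
  have hDeq : D = (ContinuousLinearMap.proj l).comp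
      (factEquiv E m : (Fin m → E) →L[ℝ] (Fin m → E)) := by
    ext1 v
    rw [hDv]
    have h1 : ∀ x : ℝ, fderiv ℝ F (0, x) (v, 0) = eField J0 m x v := by
      intro x
      have hd : DifferentiableAt ℝ F (0, x) :=
        (hF.contDiffAt ((isOpen_ball.prod isOpen_univ).mem_nhds
          ⟨mem_ball_self hr, mem_univ _⟩)).differentiableAt (by simp)
      have e1 := hasFDerivAt_slice_left hd
      have e2 : HasFDerivAt (fun c => F (c, x)) ((Hol.evalL (x : ℂ)).comp L) 0 :=
        (Hol.evalL (x : ℂ)).hasFDerivAt.comp (0 : Fin m → E) hL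
      have e3 := congrArg (fun T : (Fin m → E) →L[ℝ] E => T v) (e1.unique e2)
      rw [← hLe]
      simpa using e3
    simp_rw [h1]
    have h2 : (fun x : ℝ => eField J0 m x v) =ᶠ[𝓝 0]
        fun x : ℝ => ∑ i : Fin m, x ^ (i : ℕ) • v i := by
      have h3 : ∀ᶠ x : ℝ in 𝓝 0, eField J0 m (x : ℂ) = polyField J0 m (x : ℂ) := by
        have hc : Tendsto (fun x : ℝ => (x : ℂ)) (𝓝 0) (𝓝 0) := by
          simpa using Complex.continuous_ofReal.tendsto 0
        exact hc.eventually (eField_eventuallyEq J0 m (by simp))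
      filter_upwards [h3] with x hx
      rw [hx, polyField_apply]
      refine Finset.sum_congr rfl fun i _ => ?_
      rw [cs_apply, ← Complex.ofReal_pow, Complex.ofReal_re, Complex.ofReal_im, zero_smul,
        add_zero]
    rw [h2.iteratedDeriv_eq, iteratedDeriv_sum_pow_smul]
    rfl
  rw [← hDeq]
  refine hD.congr_of_eventuallyEq ?_
  filter_upwards [ball_mem_nhds (0 : Fin m → E) hr] with c hc
  exact iteratedFDeriv_one_eq (hsm c hc) l

/-- A globally defined, compactly supported Beltrami-type coefficient for `J`: on a small ball the
equation `∂ₓλ + J(0) ∂_yλ = 2 B(λ) ∂ₓλ` is the Cauchy–Riemann equation for `J`. -/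
theorem exists_coefficient [InnerProductSpace ℝ E] [FiniteDimensional ℝ E] {M : Set E}
    (hM : IsOpen M) (h0 : (0 : E) ∈ M) {J : E → E →L[ℝ] E} (hJ : ContDiffOn ℝ (⊤ : ℕ∞) J M) :
    ∃ ε > 0, ∃ B : E → E →L[ℝ] E, ball 0 ε ⊆ M ∧ ContDiff ℝ (⊤ : ℕ∞) B ∧ HasCompactSupport B ∧
      ∀ v ∈ ball (0 : E) ε, B v = (1 / 2 : ℝ) • (ContinuousLinearMap.id ℝ E + (J 0).comp (J v)) := by
  obtain ⟨ρ, hρ, hball⟩ := Metric.isOpen_iff.1 hM 0 h0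
  let η : ContDiffBump (0 : E) := ⟨ρ / 4, ρ / 2, by positivity, by linarith⟩
  refine ⟨ρ / 4, by positivity, fun v => η v • ((1 / 2 : ℝ) •
    (ContinuousLinearMap.id ℝ E + (J 0).comp (J v))), ?_, ?_, ?_, ?_⟩
  · exact (ball_subset_ball (by linarith)).trans hball
  · rw [contDiff_iff_contDiffAt]
    intro v
    by_cases hv : v ∈ M
    · have hJv := hJ.contDiffAt (hM.mem_nhds hv)
      exact η.contDiff.contDiffAt.fun_smul
        (contDiffAt_const.fun_smul (contDiffAt_const.add (contDiffAt_const.clm_comp hJv)))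
    · have hn : v ∉ tsupport η := by
        rw [η.tsupport_eq]
        exact fun h => hv (hball (closedBall_subset_ball (by simp [η]; linarith) h))
      refine (contDiffAt_const (c := 0)).congr_of_eventuallyEq ?_
      filter_upwards [notMem_tsupport_iff_eventuallyEq.1 hn] with x hx
      simp [hx]
  · exact η.hasCompactSupport.smul_right
  · intro v hv
    have : η v = 1 := η.one_of_mem_closedBall (ball_subset_closedBall hv)
    simp [this]

end Assembly

end

end JDisc

/-- **Proposition (existence of `J`-holomorphic discs with prescribed jets).**
For `0 ∈ M ⊆ ℝ^{2n}` and `k, k' ≥ 1`: for all `v₀, v₁, …, v_k` close enough to `0`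
there is a `J`-holomorphic disc `λ : 𝔻 → M` with `λ(0) = v₀` and
`∂^l λ/∂x^l(0) = v_l` for `l = 1, …, k`; moreover `λ` can be chosen with `C¹`
dependence on the parameters `(v₀, …, v_k)`, where `J`-holomorphic discs are
considered with the `C^{k'}` norm (on the closed unit disc). -/
theorem jholomorphic_discs_with_jets
    {n : ℕ} {M : Set (ESp n)} (hM : IsOpen M) (h0 : (0 : ESp n) ∈ M) (S : ACStruct n M)
    (k k' : ℕ) (hk : 1 ≤ k) (hk' : 1 ≤ k') :
    ∃ δ : ℝ, 0 < δ ∧ ∃ Λ : (Fin (k + 1) → ESp n) → ℂ → ESp n,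
      (∀ v : Fin (k + 1) → ESp n, (∀ l, ‖v l‖ < δ) →
        ContDiff ℝ (⊤ : ℕ∞) (Λ v) ∧ IsJHoloDisc S (Λ v) ∧
        Λ v 0 = v 0 ∧
        ∀ l : ℕ, 1 ≤ l → ∀ hl : l ≤ k,
          (iteratedFDeriv ℝ l (Λ v) 0) (fun _ => (1 : ℂ)) = v ⟨l, by omega⟩) ∧
      -- `C¹` dependence on the parameters, in the `C^{k'}` norm on the closed disc:
      ∃ Φ : ∀ j : ℕ, (Fin (k + 1) → ESp n) →
          C(Metric.closedBall (0 : ℂ) 1, ContinuousMultilinearMap ℝ (fun _ : Fin j => ℂ) (ESp n)),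
        (∀ (j : ℕ) (v : Fin (k + 1) → ESp n) (z : Metric.closedBall (0 : ℂ) 1),
          Φ j v z = iteratedFDeriv ℝ j (Λ v) (z : ℂ)) ∧
        ∀ j : ℕ, j ≤ k' → ContDiffOn ℝ 1 (Φ j) {v | ∀ l, ‖v l‖ < δ} := by
  obtain ⟨ε, hε, B, hεM, hB, hBc, hBv⟩ := JDisc.exists_coefficient hM h0 S.smooth
  have hJ0 : ∀ v, S.J 0 (S.J 0 v) = -v := S.sq 0 h0
  have hB0 : B 0 = 0 := by
    rw [hBv 0 (mem_ball_self hε)]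
    ext1 v
    simp [hJ0 v]
  obtain ⟨r, hr, u, hu0, ⟨L, hL, hLe⟩, hu, hCR⟩ :=
    JDisc.exists_family hJ0 hB hBc hB0 (k + 1)
  -- parameters so small that the discs stay in the ball where `B` encodes `J`
  obtain ⟨r', hr', hsmall⟩ : ∃ r' > 0, ∀ c ∈ ball (0 : Fin (k + 1) → ESp n) r',
      c ∈ ball (0 : Fin (k + 1) → ESp n) r ∧ ‖u c‖ < ε := by
    have hc : ∀ᶠ c in 𝓝 (0 : Fin (k + 1) → ESp n), ‖u c‖ < ε := by
      have := hL.continuousAt.norm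
      refine this.eventually (gt_mem_nhds ?_)
      simpa [hu0] using hε
    exact Metric.eventually_nhds_iff_ball.1
      ((isOpen_ball.eventually_mem (mem_ball_self hr)).and hc)
  have hsub : ball (0 : Fin (k + 1) → ESp n) r' ⊆ ball 0 r := fun c hc => (hsmall c hc).1
  have hu' : ContDiffOn ℝ (⊤ : ℕ∞) (fun p : (Fin (k + 1) → ESp n) × ℂ => u p.1 p.2)
      (ball 0 r' ×ˢ univ) := hu.mono (prod_mono hsub subset_rfl)
  have hjets : ContDiffOn ℝ (⊤ : ℕ∞) (fun c => JDisc.jet (k + 1) (u c)) (ball 0 r') := by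
    rw [contDiffOn_pi]
    intro l
    have h1 := (JDisc.contDiffOn_jets isOpen_ball (l : ℕ) hu').comp
      (s := ball (0 : Fin (k + 1) → ESp n) r') (f := fun c => (c, (0 : ℂ)))
      (contDiff_prodMk_left (0 : ℂ)).contDiffOn (fun c hc => ⟨hc, mem_univ _⟩)
    exact ((ContinuousMultilinearMap.apply ℝ (fun _ : Fin (l : ℕ) => ℂ) (ESp n)
      (fun _ => (1 : ℂ))).contDiff).comp_contDiffOn h1
  obtain ⟨h, h0s, hsrc, hh, hsymm⟩ := JDisc.smooth_inverse isOpen_ball (mem_ball_self hr') hjets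
    (JDisc.factEquiv (ESp n) (k + 1)) (JDisc.hasFDerivAt_jet hr hL hLe hu)
  have hjet0 : h 0 = 0 := by
    rw [hh, hu0]
    funext l
    have : ((0 : JDisc.Hol (ESp n)) : ℂ → ESp n) = fun _ => 0 := rfl
    simp only [JDisc.jet]
    rw [this, iteratedFDeriv_fun_zero]
    rfl
  have h0t : (0 : Fin (k + 1) → ESp n) ∈ h.target := hjet0 ▸ h.map_source h0s
  obtain ⟨δ, hδ, hδt⟩ := Metric.isOpen_iff.1 h.open_target 0 h0t
  have hset : {v : Fin (k + 1) → ESp n | ∀ l, ‖v l‖ < δ} = ball 0 δ := by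
    ext v
    rw [mem_ball_zero_iff, pi_norm_lt_iff hδ]
    rfl
  let Λ : (Fin (k + 1) → ESp n) → ℂ → ESp n :=
    fun v => if v ∈ ball (0 : Fin (k + 1) → ESp n) δ then u (h.symm v) else 0
  have hΛ : ∀ v ∈ ball (0 : Fin (k + 1) → ESp n) δ, Λ v = u (h.symm v) := fun v hv => if_pos hv
  have hpar : ∀ v ∈ ball (0 : Fin (k + 1) → ESp n) δ, h.symm v ∈ ball 0 r' := fun v hv =>
    hsrc (h.map_target (hδt hv))
  have hjoint : ContDiffOn ℝ (⊤ : ℕ∞) (fun p : (Fin (k + 1) → ESp n) × ℂ => Λ p.1 p.2)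
      (ball 0 δ ×ˢ univ) := by
    have h1 : ContDiffOn ℝ (⊤ : ℕ∞) (fun p : (Fin (k + 1) → ESp n) × ℂ => (h.symm p.1, p.2))
        (ball 0 δ ×ˢ univ) :=
      ((hsymm.mono hδt).comp contDiffOn_fst fun p hp => hp.1).prodMk contDiffOn_snd
    refine (hu'.comp h1 fun p hp => ⟨hpar _ hp.1, mem_univ _⟩).congr fun p hp => ?_
    simp only [hΛ p.1 hp.1, Function.comp_apply]
  have hsm : ∀ v, ContDiff ℝ (⊤ : ℕ∞) (Λ v) := by
    intro v
    by_cases hv : v ∈ ball (0 : Fin (k + 1) → ESp n) δ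
    · refine contDiff_iff_contDiffAt.2 fun z => ?_
      have hO : IsOpen (ball (0 : Fin (k + 1) → ESp n) δ ×ˢ (univ : Set ℂ)) :=
        isOpen_ball.prod isOpen_univ
      exact (hjoint.contDiffAt (hO.mem_nhds (x := (v, z)) ⟨hv, mem_univ _⟩)).comp z
        (contDiff_prodMk_right v).contDiffAt
    · have : Λ v = fun _ => 0 := if_neg hv
      rw [this]
      exact contDiff_const
  have hjetΛ : ∀ v ∈ ball (0 : Fin (k + 1) → ESp n) δ, ∀ l : Fin (k + 1),
      iteratedFDeriv ℝ l (Λ v) 0 (fun _ => (1 : ℂ)) = v l := by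
    intro v hv l
    have h1 := h.right_inv (hδt hv)
    rw [hh] at h1
    rw [hΛ v hv]
    exact congrFun h1 l
  refine ⟨δ, hδ, Λ, fun v hv => ?_, fun j v =>
    ⟨fun z => iteratedFDeriv ℝ j (Λ v) z, ?_⟩, fun j v z => rfl, fun j _ => ?_⟩
  · have hv' : v ∈ ball (0 : Fin (k + 1) → ESp n) δ := hset ▸ hv
    have hin : ∀ z, Λ v z ∈ ball (0 : ESp n) ε := by
      intro z
      rw [hΛ v hv', mem_ball_zero_iff]
      exact (JDisc.Hol.norm_apply_le _ z).trans_lt (hsmall _ (hpar v hv')).2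
    refine ⟨hsm v, ⟨fun z _ => (hsm v).contDiffAt, fun z _ => hεM (hin z), fun z hz => ?_⟩, ?_,
      fun l _ hl => hjetΛ v hv' ⟨l, by omega⟩⟩
    · have hz1 : ‖z‖ < 1 := by simpa [unitDisc] using hz
      have e := hCR _ (hsub (hpar v hv')) z (by linarith)
      rw [← hΛ v hv', hBv _ (hin z)] at e
      simp only [smul_apply, add_apply, ContinuousLinearMap.id_apply,
        ContinuousLinearMap.comp_apply, smul_smul] at e
      norm_num at e
      -- `J(0)` is injective, since its square is `-id`
      have e2 := congrArg (S.J 0) e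
      rw [hJ0, hJ0] at e2
      exact neg_injective e2
    · exact hjetΛ v hv' 0
  · exact ((hsm v).continuous_iteratedFDeriv (by exact_mod_cast le_top)).comp
      continuous_subtype_val
  · rw [hset]
    exact JDisc.contDiffOn_one_sup isOpen_ball (JDisc.contDiffOn_jets isOpen_ball j hjoint) _
      fun c hc z => rfl
end
end

section
/- Let 𝔻 ⊂ ℂ be the unit disc and D ⋐ 𝔻. If u, v are subharmonic on 𝔻 with u ≤ v ≤ 0 and u ∈ W^{1,2}(𝔻), then v ∈ W^{1,2}(D) and ‖v‖_{W^{1,2}(D)} ≤ C‖u‖_{W^{1,2}(𝔻)}, where the constant C depends only on D. -/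
/-!
The estimate is a Caccioppoli inequality with an obstacle. Suppose first that `u` and `v` are
smooth, and let `η` be a cut-off function equal to `1` on a disc containing `D` and compactly
supported in `𝔻`. Since `Δv ≥ 0` and `v - u ≥ 0`, testing with `η² (v - u)` and integrating by
parts gives `∫ ∇(η² (v - u)) · ∇v ≤ 0`. As `u ≤ v ≤ 0` implies `0 ≤ v - u ≤ |u|`, Young's
inequality turns this into `∫ η² |∇v|² ≤ 2 ∫ (η² |∇u|² + 4 u² |∇η|²)` (`caccioppoli`), while
`v² ≤ u²` takes care of the zeroth order part of the norm.

In general both functions are extended by zero outside `𝔻` and mollified (`moll`).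
Mollification preserves `u ≤ v ≤ 0`, does not increase `L²` norms (`moll_sq_integral`), turns the
weak gradient of `u` into a classical one (`moll_fderiv_weak`), and preserves the sub-mean value
inequality over discs (`moll_submean`), which for a smooth function forces a nonnegative Laplacian
(`laplacian_nonneg`). This gives a bound on the gradients of the mollifications of `v` in
`L²(D)` that is uniform in the mollification parameter (`gradient_bound`). By weak compactness
of balls in `L²(D)` the gradients have a weak cluster point (`weak_limit`), which satisfies the
same bound and is the weak gradient of `v` (`weak_deriv_of_bound`).

With `|∇η| ≤ K`, the constant obtained is `C = √(1 + 4 (1 + 8 K²))`.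
-/


open MeasureTheory Metric Filter Topology Set
open scoped Classical

noncomputable section

/-- `(g₁, g₂)` is a weak (distributional) gradient of `u` on the open set `Ω ⊆ ℂ`. -/
def HasWeakGradOnC (u g₁ g₂ : ℂ → ℝ) (Ω : Set ℂ) : Prop :=
  LocallyIntegrableOn u Ω volume ∧ LocallyIntegrableOn g₁ Ω volume ∧
  LocallyIntegrableOn g₂ Ω volume ∧
  ∀ φ : ℂ → ℝ, ContDiff ℝ (⊤ : ℕ∞) φ → HasCompactSupport φ → tsupport φ ⊆ Ω →
    ((∫ z in Ω, u z * fderiv ℝ φ z 1) = -∫ z in Ω, φ z * g₁ z) ∧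
    ((∫ z in Ω, u z * fderiv ℝ φ z Complex.I) = -∫ z in Ω, φ z * g₂ z)

/-- The `W^{1,2}` norm of `u` (with weak gradient `(g₁, g₂)`) on `A ⊆ ℂ`. -/
def W12normC (u g₁ g₂ : ℂ → ℝ) (A : Set ℂ) : ℝ :=
  Real.sqrt (∫ z in A, ((u z) ^ 2 + (g₁ z) ^ 2 + (g₂ z) ^ 2))


open scoped Convolution ContDiff

/-! ### Smooth functions satisfying the sub-mean value inequality -/

open Asymptotics in
lemma taylor_two {f : ℂ → ℝ} (hf : ContDiff ℝ ∞ f) (z : ℂ) :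
    (fun t : ℂ => f (z + t) - f z - fderiv ℝ f z t - (1/2) * fderiv ℝ (fderiv ℝ f) z t t)
      =o[𝓝 0] (fun t : ℂ => ‖t‖ ^ 2) := by
  set B := fderiv ℝ (fderiv ℝ f) z with hB
  have hd : HasFDerivAt (fderiv ℝ f) B z :=
    ((hf.fderiv_right (m := ∞) (by simp)).differentiable (by simp) z).hasFDerivAt
  have hsymm : ∀ a b, B a b = B b a :=
    second_derivative_symmetric (fun y => (hf.differentiable (by simp) y).hasFDerivAt) hd
  have hfd : ∀ t : ℂ, HasFDerivAt
      (fun t : ℂ => f (z + t) - f z - fderiv ℝ f z t - (1/2) * B t t)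
      (fderiv ℝ f (z + t) - fderiv ℝ f z - B t) t := by
    intro t
    have h1 : HasFDerivAt (fun t : ℂ => f (z + t)) (fderiv ℝ f (z + t)) t := by
      have := (hf.differentiable (by simp) (z + t)).hasFDerivAt
      exact (hasFDerivAt_comp_add_left z).2 this
    have h2 : HasFDerivAt (fun t : ℂ => B t t) (B t + B.flip t) t := by
      have := (B.hasFDerivAt (x := t)).clm_apply (hasFDerivAt_id t)
      exact this.congr_fderiv (by ext a; simp)
    have h3 := ((h1.sub_const (f z)).sub ((fderiv ℝ f z).hasFDerivAt (x := t))).sub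
      (h2.const_mul (1/2 : ℝ))
    refine h3.congr_fderiv ?_
    ext a
    simp [hsymm a t]
    ring
  rw [isLittleO_iff]
  intro c hc
  have h4 := (hasFDerivAt_iff_isLittleO_nhds_zero.1 hd)
  rw [isLittleO_iff] at h4
  have h5 := h4 hc
  obtain ⟨δ, hδ, h6⟩ := Metric.eventually_nhds_iff.1 h5
  filter_upwards [Metric.ball_mem_nhds (0:ℂ) hδ] with t ht
  have ht' : ‖t‖ < δ := by simpa using ht
  have := (convex_closedBall (0:ℂ) ‖t‖).norm_image_sub_le_of_norm_hasFDerivWithin_le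
    (f := fun t : ℂ => f (z + t) - f z - fderiv ℝ f z t - (1/2) * B t t)
    (C := c * ‖t‖) (x := 0) (y := t)
    (fun x _ => (hfd x).hasFDerivWithinAt) (by
      intro x hx
      have hx' : ‖x‖ ≤ ‖t‖ := by simpa using hx
      refine (h6 (by simpa using hx'.trans_lt ht')).trans ?_
      gcongr) (by simp) (by simp)
  simp only [add_zero, sub_self, map_zero, mul_zero, sub_zero] at this
  rw [Real.norm_of_nonneg (by positivity : (0:ℝ) ≤ ‖t‖^2)]
  calc _ ≤ _ := this
    _ = _ := by ring

lemma fderiv_fderiv_apply {f : ℂ → ℝ} (hf : ContDiff ℝ ∞ f) (z a b : ℂ) :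
    fderiv ℝ (fun y => fderiv ℝ f y a) z b = fderiv ℝ (fderiv ℝ f) z b a := by
  have hd := ((hf.fderiv_right (m := ∞) (by simp)).differentiable (by simp) z)
  rw [fderiv_clm_apply hd (differentiableAt_const a)]
  simp

open Asymptotics in
/-- A smooth function satisfying the area sub-mean value inequality on all small discs centred at
`z` has nonnegative Laplacian at `z`. Averaging the second order Taylor expansion over the
rotations `t, it, -t, -it` removes the linear term and leaves the trace of the Hessian. -/
lemma laplacian_nonneg {f : ℂ → ℝ} (hf : ContDiff ℝ ∞ f) (z : ℂ) (r₀ : ℝ) (hr₀ : 0 < r₀)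
    (h : ∀ r, 0 < r → r < r₀ → 0 ≤ ∫ t in ball (0:ℂ) r, (f (z + t) - f z)) :
    0 ≤ fderiv ℝ (fun y => fderiv ℝ f y 1) z 1
      + fderiv ℝ (fun y => fderiv ℝ f y Complex.I) z Complex.I := by
  rw [fderiv_fderiv_apply hf, fderiv_fderiv_apply hf]
  set B := fderiv ℝ (fderiv ℝ f) z with hB
  by_contra! hneg
  set L := B 1 1 + B Complex.I Complex.I with hL
  have hT := taylor_two hf z
  rw [isLittleO_iff] at hT
  obtain ⟨δ, hδ, h6⟩ := Metric.eventually_nhds_iff.1 (hT (c := -L / 8) (by linarith))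
  -- The factor `-L / 8` makes the four Taylor remainders together at most `-L / 2 * ‖t‖ ^ 2`,
  -- half the size of the quadratic term `L * ‖t‖ ^ 2`.
  set g : ℂ → ℝ := fun t => (f (z + t) - f z) + (f (z + Complex.I * t) - f z)
      + (f (z + -t) - f z) + (f (z + Complex.I * -t) - f z) with hg
  have hgle : ∀ t : ℂ, ‖t‖ < δ → g t ≤ L / 2 * ‖t‖ ^ 2 := by
    intro t ht
    have e : ∀ s : ℂ, ‖s‖ = ‖t‖ → f (z + s) - f z ≤
        fderiv ℝ f z s + (1/2) * B s s - L / 8 * ‖t‖ ^ 2 := by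
      intro s hs
      have := h6 (y := s) (by simpa [hs] using ht)
      rw [Real.norm_of_nonneg (by positivity : (0:ℝ) ≤ ‖s‖^2), hs] at this
      have := (le_abs_self _).trans this
      linarith
    have e1 := e t rfl
    have e2 := e (Complex.I * t) (by simp)
    have e3 := e (-t) (by simp)
    have e4 := e (Complex.I * -t) (by simp)
    have hBt : B t t + B (Complex.I * t) (Complex.I * t) = L * ‖t‖ ^ 2 := by
      have h1 : t = t.re • (1:ℂ) + t.im • Complex.I := by
        apply Complex.ext <;> simp
      have h2 : Complex.I * t = (-t.im) • (1:ℂ) + t.re • Complex.I := by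
        apply Complex.ext <;> simp
      have h3 : ‖t‖ ^ 2 = t.re ^ 2 + t.im ^ 2 := by
        rw [← Complex.normSq_eq_norm_sq, Complex.normSq_apply]; ring
      rw [h2, h3]
      conv_lhs => rw [h1]
      simp only [map_add, map_smul, add_apply, smul_apply, smul_eq_mul, hL]
      simp
      ring
    simp only [mul_neg, map_neg, neg_apply, neg_neg] at e1 e2 e3 e4
    simp only [hg, mul_neg]
    linarith
  have hcont := hf.continuous
  set r := min δ r₀ / 2 with hr
  have hrpos : 0 < r := by positivity
  have hrr : r < r₀ := by
    have := min_le_right δ r₀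
    linarith
  have hrδ : r < δ := by
    have := min_le_left δ r₀
    linarith
  have hInt : ∀ G : ℂ → ℝ, Continuous G → IntegrableOn G (ball (0:ℂ) r) := fun G hG =>
    (hG.continuousOn.integrableOn_compact (isCompact_closedBall (0:ℂ) r)).mono_set
      ball_subset_closedBall
  -- Rotations preserve the integral over a centred disc.
  have hrot : ∀ a : ℂ, ‖a‖ = 1 → ∀ G : ℂ → ℝ,
      ∫ t in ball (0:ℂ) r, G (a * t) = ∫ t in ball (0:ℂ) r, G t := by
    intro a ha G
    let e : ℂ ≃ₗᵢ[ℝ] ℂ := rotation ⟨a, by simpa [Submonoid.unitSphere] using ha⟩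
    have he : ∀ t, e t = a * t := fun t => rfl
    have hp : e ⁻¹' ball (0:ℂ) r = ball 0 r := by
      ext t; simp
    have := e.measurePreserving.setIntegral_preimage_emb
      e.toHomeomorph.measurableEmbedding G (ball (0:ℂ) r)
    rw [hp] at this
    simpa [he] using this
  have hFc : Continuous (fun t => f (z + t) - f z) := by fun_prop
  have h0 := h r hrpos hrr
  have hgi : ∫ t in ball (0:ℂ) r, g t = 4 * ∫ t in ball (0:ℂ) r, (f (z + t) - f z) := by
    have r1 := hrot Complex.I (by simp) (fun t => f (z + t) - f z)
    have r2 := hrot (-1) (by simp) (fun t => f (z + t) - f z)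
    have r3 := hrot (-Complex.I) (by simp) (fun t => f (z + t) - f z)
    simp only [neg_mul, one_mul] at r1 r2 r3
    simp only [hg, mul_neg]
    rw [integral_add (hInt _ (by fun_prop)) (hInt _ (by fun_prop)),
      integral_add (hInt _ (by fun_prop)) (hInt _ (by fun_prop)),
      integral_add (hInt _ (by fun_prop)) (hInt _ (by fun_prop)), r1, r2, r3]
    ring
  have hgneg : ∫ t in ball (0:ℂ) r, g t < 0 := by
    have hpos : 0 < ∫ t in ball (0:ℂ) r, ‖t‖ ^ 2 := by
      rw [setIntegral_pos_iff_support_of_nonneg_ae (ae_of_all _ fun t => by positivity) (hInt _ (by fun_prop))]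
      have : Function.support (fun t : ℂ => ‖t‖ ^ 2) ∩ ball 0 r = ball 0 r \ {0} := by
        ext t; simp; tauto
      rw [this, measure_sdiff_null (by simp)]
      exact measure_ball_pos _ _ hrpos
    calc ∫ t in ball (0:ℂ) r, g t ≤ ∫ t in ball (0:ℂ) r, L / 2 * ‖t‖ ^ 2 := by
          refine setIntegral_mono_on (hInt _ (by fun_prop)) (hInt _ (by fun_prop)) measurableSet_ball ?_
          intro t ht
          exact hgle t ((by simpa using ht : ‖t‖ < r).trans hrδ)
      _ = L / 2 * ∫ t in ball (0:ℂ) r, ‖t‖ ^ 2 := integral_const_mul _ _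
      _ < 0 := mul_neg_of_neg_of_pos (by linarith) hpos
  linarith

/-! ### The energy estimate for smooth functions -/

/-- Caccioppoli inequality for a subharmonic `f` between `w` and `0`: obtained by testing `Δf ≥ 0`
against `η² (f - w) ≥ 0`. The right-hand side involves `f` only through the bound
`(f - w)² ≤ w²`. -/
lemma caccioppoli {f w η : ℂ → ℝ} (hf : ContDiff ℝ ∞ f) (hw : ContDiff ℝ ∞ w)
    (hη : ContDiff ℝ ∞ η) (hηc : HasCompactSupport η)
    (hwf : ∀ z ∈ tsupport η, w z ≤ f z) (hf0 : ∀ z ∈ tsupport η, f z ≤ 0)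
    (hΔ : ∀ z ∈ tsupport η, 0 ≤ fderiv ℝ (fun y => fderiv ℝ f y 1) z 1
      + fderiv ℝ (fun y => fderiv ℝ f y Complex.I) z Complex.I) :
    ∫ z, η z ^ 2 * (fderiv ℝ f z 1 ^ 2 + fderiv ℝ f z Complex.I ^ 2) ≤
      2 * ∫ z, (η z ^ 2 * (fderiv ℝ w z 1 ^ 2 + fderiv ℝ w z Complex.I ^ 2)
        + 4 * w z ^ 2 * (fderiv ℝ η z 1 ^ 2 + fderiv ℝ η z Complex.I ^ 2)) := by
  have sm : ∀ {g : ℂ → ℝ}, ContDiff ℝ ∞ g → ∀ e : ℂ, ContDiff ℝ ∞ (fun z => fderiv ℝ g z e) :=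
    fun hg e => (hg.fderiv_right (m := ∞) (by simp)).clm_apply contDiff_const
  have cη := hη.continuous
  have cf := hf.continuous
  have cw := hw.continuous
  have cη' := fun e => (sm hη e).continuous
  have cf' := fun e => (sm hf e).continuous
  have cw' := fun e => (sm hw e).continuous
  have cf'' := fun e e' => (sm (sm hf e) e').continuous
  have hη'0 : ∀ z ∉ tsupport η, fderiv ℝ η z = 0 := fun z hz =>
    image_eq_zero_of_notMem_tsupport (fun h => hz (tsupport_fderiv_subset ℝ h))
  have hη0 : ∀ z ∉ tsupport η, η z = 0 := fun z hz => image_eq_zero_of_notMem_tsupport hz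
  set ψ : ℂ → ℝ := fun z => η z ^ 2 * (f z - w z) with hψ
  have hψs : ContDiff ℝ ∞ ψ := (hη.pow 2).mul (hf.sub hw)
  have hψ' : ∀ z e, fderiv ℝ ψ z e = 2 * η z * fderiv ℝ η z e * (f z - w z)
      + η z ^ 2 * (fderiv ℝ f z e - fderiv ℝ w z e) := by
    intro z e
    have h1 := (hη.differentiable (by simp) z).hasFDerivAt
    have h2 := (hf.differentiable (by simp) z).hasFDerivAt
    have h3 := (hw.differentiable (by simp) z).hasFDerivAt
    have := ((h1.pow 2).mul (h2.sub h3)).fderiv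
    have e1 : fderiv ℝ ψ z = _ := this
    rw [e1]
    simp
    ring
  have int : ∀ {G : ℂ → ℝ}, Continuous G → (∀ z ∉ tsupport η, G z = 0) → Integrable G :=
    fun hG h0 => hG.integrable_of_hasCompactSupport (HasCompactSupport.intro hηc (fun z hz => h0 z hz))
  have ibp : ∀ e, ∫ z, ψ z * fderiv ℝ (fun y => fderiv ℝ f y e) z e
      = - ∫ z, fderiv ℝ ψ z e * fderiv ℝ f z e := by
    intro e
    refine integral_mul_fderiv_eq_neg_fderiv_mul_of_integrable ?_ ?_ ?_ ?_ ?_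
    · refine int ((sm hψs e).continuous.mul (cf' e)) (fun z hz => ?_)
      simp [hψ', hη0 z hz]
    · refine int (hψs.continuous.mul (cf'' e e)) (fun z hz => ?_)
      simp [hψ, hη0 z hz]
    · refine int (hψs.continuous.mul (cf' e)) (fun z hz => ?_)
      simp [hψ, hη0 z hz]
    · exact fun z _ => hψs.differentiable (by simp) z
    · exact fun z _ => (sm hf e).differentiable (by simp) z
  have i1 : ∀ e, Integrable (fun z => fderiv ℝ ψ z e * fderiv ℝ f z e) := fun e => by
    refine int ((sm hψs e).continuous.mul (cf' e)) (fun z hz => ?_)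
    simp [hψ', hη0 z hz]
  have i2 : ∀ e, Integrable (fun z => ψ z * fderiv ℝ (fun y => fderiv ℝ f y e) z e) := fun e => by
    refine int (hψs.continuous.mul (cf'' e e)) (fun z hz => ?_)
    simp [hψ, hη0 z hz]
  have key : ∫ z, (fderiv ℝ ψ z 1 * fderiv ℝ f z 1
      + fderiv ℝ ψ z Complex.I * fderiv ℝ f z Complex.I) ≤ 0 := by
    have h1 := ibp 1
    have h2 := ibp Complex.I
    rw [integral_add (i1 _) (i1 _)]
    have h3 : 0 ≤ ∫ z, (ψ z * fderiv ℝ (fun y => fderiv ℝ f y 1) z 1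
        + ψ z * fderiv ℝ (fun y => fderiv ℝ f y Complex.I) z Complex.I) := by
      refine integral_nonneg fun z => ?_
      by_cases hz : z ∈ tsupport η
      · have := mul_nonneg (mul_nonneg (sq_nonneg (η z)) (sub_nonneg.2 (hwf z hz))) (hΔ z hz)
        simp only [Pi.zero_apply, hψ]
        linarith
      · simp [hψ, hη0 z hz]
    rw [integral_add (i2 _) (i2 _)] at h3
    linarith
  have iA : Integrable (fun z => η z ^ 2 * (fderiv ℝ f z 1 ^ 2 + fderiv ℝ f z Complex.I ^ 2)) :=
    int (by have := cf' 1; have := cf' Complex.I; fun_prop) (fun z hz => by simp [hη0 z hz])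
  have iB : Integrable (fun z => η z ^ 2 * (fderiv ℝ w z 1 ^ 2 + fderiv ℝ w z Complex.I ^ 2)
        + 4 * w z ^ 2 * (fderiv ℝ η z 1 ^ 2 + fderiv ℝ η z Complex.I ^ 2)) :=
    int (by have := cw' 1; have := cw' Complex.I; have := cη' 1; have := cη' Complex.I; fun_prop)
      (fun z hz => by simp [hη0 z hz, hη'0 z hz])
  have hle : ∫ z, ((1/2) * (η z ^ 2 * (fderiv ℝ f z 1 ^ 2 + fderiv ℝ f z Complex.I ^ 2)) -
      (η z ^ 2 * (fderiv ℝ w z 1 ^ 2 + fderiv ℝ w z Complex.I ^ 2)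
        + 4 * w z ^ 2 * (fderiv ℝ η z 1 ^ 2 + fderiv ℝ η z Complex.I ^ 2))) ≤
      ∫ z, (fderiv ℝ ψ z 1 * fderiv ℝ f z 1
      + fderiv ℝ ψ z Complex.I * fderiv ℝ f z Complex.I) := by
    refine integral_mono ((iA.const_mul _).sub iB) ((i1 _).add (i1 _)) fun z => ?_
    by_cases hz : z ∈ tsupport η
    · have h1 : (f z - w z) ^ 2 ≤ w z ^ 2 := by
        have := hwf z hz
        have := hf0 z hz
        nlinarith
      -- Young's inequality for one partial derivative, with `a`, `b`, `c`, `n` standing for the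
      -- derivatives of `f`, `w`, `η` and for the value of `η`.
      have young : ∀ a b c n : ℝ,
          (1/2) * (n ^ 2 * a ^ 2) - (n ^ 2 * b ^ 2 + 4 * w z ^ 2 * c ^ 2) ≤
          (2 * n * c * (f z - w z) + n ^ 2 * (a - b)) * a := by
        intro a b c n
        have h2 := mul_le_mul_of_nonneg_left h1 (sq_nonneg c)
        nlinarith [sq_nonneg (n * a / 2 - n * b), sq_nonneg (n * a / 2 + 2 * c * (f z - w z))]
      have y1 := young (fderiv ℝ f z 1) (fderiv ℝ w z 1) (fderiv ℝ η z 1) (η z)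
      have y2 := young (fderiv ℝ f z Complex.I) (fderiv ℝ w z Complex.I)
        (fderiv ℝ η z Complex.I) (η z)
      simp only [hψ']
      linarith
    · simp [hψ', hη0 z hz, hη'0 z hz]
  rw [integral_sub (iA.const_mul _) iB, integral_const_mul] at hle
  linarith

/-! ### Mollification -/

/-- The convolution of `V` with the normalised bump function `φ`. For `V` integrable on the whole
plane it is a smooth function; functions on the disc are extended by zero before being
mollified. -/
def moll (φ : ContDiffBump (0 : ℂ)) (V : ℂ → ℝ) (z : ℂ) : ℝ :=
  ∫ t, φ.normed volume t * V (z - t)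

lemma moll_eq_conv (φ : ContDiffBump (0 : ℂ)) (V : ℂ → ℝ) :
    moll φ V = (φ.normed volume ⋆[ContinuousLinearMap.lsmul ℝ ℝ, volume] V) := rfl

lemma moll_contDiff (φ : ContDiffBump (0 : ℂ)) {V : ℂ → ℝ} (hV : Integrable V) :
    ContDiff ℝ ∞ (moll φ V) := by
  rw [moll_eq_conv]
  exact φ.hasCompactSupport_normed.contDiff_convolution_left _ φ.contDiff_normed
    hV.locallyIntegrable

lemma moll_swap (φ : ContDiffBump (0 : ℂ)) (V : ℂ → ℝ) (z : ℂ) :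
    moll φ V z = ∫ y, φ.normed volume (z - y) * V y := by
  rw [moll, ← integral_sub_left_eq_self _ _ z]
  simp

lemma moll_integrable (φ : ContDiffBump (0 : ℂ)) {V : ℂ → ℝ} (hV : Integrable V) (z : ℂ) :
    Integrable (fun t => φ.normed volume t * V (z - t)) :=
  φ.hasCompactSupport_normed.convolutionExists_left (ContinuousLinearMap.lsmul ℝ ℝ)
    φ.continuous_normed hV.locallyIntegrable z

lemma moll_mono (φ : ContDiffBump (0 : ℂ)) {U V : ℂ → ℝ} (hU : Integrable U) (hV : Integrable V)
    (h : ∀ z, U z ≤ V z) (z : ℂ) : moll φ U z ≤ moll φ V z :=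
  integral_mono (moll_integrable φ hU z) (moll_integrable φ hV z) fun _ =>
    mul_le_mul_of_nonneg_left (h _) (φ.nonneg_normed _)

lemma moll_nonpos (φ : ContDiffBump (0 : ℂ)) {V : ℂ → ℝ}
    (h : ∀ z, V z ≤ 0) (z : ℂ) : moll φ V z ≤ 0 :=
  integral_nonpos fun _ => mul_nonpos_of_nonneg_of_nonpos (φ.nonneg_normed _) (h _)

/-- Jensen's inequality for the probability density `φ.normed volume`. -/
lemma moll_sq_le (φ : ContDiffBump (0 : ℂ)) {V : ℂ → ℝ} (hV : Integrable V)
    (hV2 : Integrable (fun z => V z ^ 2)) (z : ℂ) :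
    moll φ V z ^ 2 ≤ moll φ (fun z => V z ^ 2) z := by
  set m := moll φ V z with hm
  have h1 := moll_integrable φ hV z
  have h2 := moll_integrable φ hV2 z
  have h3 : Integrable (φ.normed volume : ℂ → ℝ) := φ.integrable_normed
  have h0 : 0 ≤ ∫ t, φ.normed volume t * (V (z - t) - m) ^ 2 :=
    integral_nonneg fun t => mul_nonneg (φ.nonneg_normed _) (sq_nonneg _)
  have e : ∀ t, φ.normed volume t * (V (z - t) - m) ^ 2 = φ.normed volume t * V (z - t) ^ 2
      - (2 * m) * (φ.normed volume t * V (z - t)) + m ^ 2 * φ.normed volume t := fun t => by ring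
  simp_rw [e] at h0
  rw [integral_add (f := fun t => φ.normed volume t * V (z - t) ^ 2
      - (2 * m) * (φ.normed volume t * V (z - t))) (h2.sub (h1.const_mul _)) (h3.const_mul _),
    integral_sub h2 (h1.const_mul _),
    integral_const_mul, integral_const_mul, φ.integral_normed] at h0
  have : moll φ (fun z => V z ^ 2) z = ∫ t, φ.normed volume t * V (z - t) ^ 2 := rfl
  have : m = ∫ t, φ.normed volume t * V (z - t) := rfl
  rw [← this] at h0
  nlinarith

/-- Mollification is a contraction on `L²`. -/
lemma moll_sq_integral (φ : ContDiffBump (0 : ℂ)) {V : ℂ → ℝ} (hV : Integrable V)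
    (hV2 : Integrable (fun z => V z ^ 2)) :
    Integrable (fun z => moll φ V z ^ 2) ∧ ∫ z, moll φ V z ^ 2 ≤ ∫ z, V z ^ 2 := by
  have hI : Integrable (moll φ (fun z => V z ^ 2)) := by
    rw [moll_eq_conv]
    exact φ.integrable_normed.integrable_convolution _ hV2
  have h1 : Integrable (fun z => moll φ V z ^ 2) := by
    refine hI.mono' ((moll_contDiff φ hV).continuous.pow 2).aestronglyMeasurable
      (ae_of_all _ fun z => ?_)
    rw [Real.norm_of_nonneg (sq_nonneg _)]
    exact moll_sq_le φ hV hV2 z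
  refine ⟨h1, (integral_mono h1 hI (moll_sq_le φ hV hV2)).trans_eq ?_⟩
  rw [moll_eq_conv, integral_convolution _ φ.integrable_normed hV2, φ.integral_normed]
  simp

lemma moll_fderiv (φ : ContDiffBump (0 : ℂ)) {V : ℂ → ℝ} (hV : Integrable V) (z e : ℂ) :
    fderiv ℝ (moll φ V) z e = ∫ y, fderiv ℝ (φ.normed volume) (z - y) e * V y := by
  have h := (φ.hasCompactSupport_normed (μ := volume)).hasFDerivAt_convolution_left (μ := volume)
    (ContinuousLinearMap.lsmul ℝ ℝ) φ.contDiff_normed hV.locallyIntegrable z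
  rw [moll_eq_conv, h.fderiv, convolution_def, ContinuousLinearMap.integral_apply]
  · rw [← integral_sub_left_eq_self _ _ z]
    simp [ContinuousLinearMap.precompL_apply]
  · exact (φ.hasCompactSupport_normed.fderiv ℝ).convolutionExists_left _
      ((φ.contDiff_normed (n := 1)).continuous_fderiv (by simp)) hV.locallyIntegrable z

/-- At points whose `φ.rOut`-neighbourhood lies in the disc, the gradient of the mollification is
the mollification of the weak gradient: `y ↦ φ (z - y)` is an admissible test function there. -/
lemma moll_fderiv_weak (φ : ContDiffBump (0 : ℂ)) {u g₁ g₂ : ℂ → ℝ}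
    (h : HasWeakGradOnC u g₁ g₂ unitDisc) (hu : IntegrableOn u unitDisc)
    {z : ℂ} (hz : closedBall z φ.rOut ⊆ unitDisc) :
    fderiv ℝ (moll φ (unitDisc.indicator u)) z 1 = moll φ (unitDisc.indicator g₁) z ∧
    fderiv ℝ (moll φ (unitDisc.indicator u)) z Complex.I = moll φ (unitDisc.indicator g₂) z := by
  have hm : MeasurableSet unitDisc := measurableSet_ball
  set ψ : ℂ → ℝ := fun y => φ.normed volume (z - y) with hψ
  have hψs : ContDiff ℝ ∞ ψ := φ.contDiff_normed.comp (contDiff_const.sub contDiff_id)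
  have hsupp : ∀ y ∉ closedBall z φ.rOut, ψ y = 0 := by
    intro y hy
    by_contra hne
    have : z - y ∈ Function.support (φ.normed volume) := hne
    rw [φ.support_normed_eq] at this
    apply hy
    rw [mem_closedBall, dist_comm, dist_eq_norm]
    exact (by simpa using this : ‖z - y‖ < φ.rOut).le
  have hts : tsupport ψ ⊆ closedBall z φ.rOut :=
    closure_minimal (fun y hy => by_contra fun hne => hy (hsupp y hne)) isClosed_closedBall
  have hψc : HasCompactSupport ψ := HasCompactSupport.intro (isCompact_closedBall _ _) hsupp
  have hψd : ∀ y e, fderiv ℝ ψ y e = - fderiv ℝ (φ.normed volume) (z - y) e := by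
    intro y e
    have h1 : HasFDerivAt (fun y : ℂ => z - y) (-ContinuousLinearMap.id ℝ ℂ) y :=
      (hasFDerivAt_id y).const_sub z
    have h2 := ((φ.contDiff_normed (μ := volume) (n := 1)).differentiable (by simp)
      (z - y)).hasFDerivAt
    have := (h2.comp y h1).fderiv
    have e1 : fderiv ℝ ψ y = _ := this
    rw [e1]; simp
  have hw := h.2.2.2 ψ hψs hψc (hts.trans hz)
  have main : ∀ e g, (∫ z in unitDisc, u z * fderiv ℝ ψ z e) = -∫ z in unitDisc, ψ z * g z →
      fderiv ℝ (moll φ (unitDisc.indicator u)) z e = moll φ (unitDisc.indicator g) z := by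
    intro e g heq
    rw [moll_fderiv φ (hu.integrable_indicator hm), moll_swap]
    have a1 : ∀ y, fderiv ℝ (φ.normed volume) (z - y) e * unitDisc.indicator u y
        = unitDisc.indicator (fun y => -(u y * fderiv ℝ ψ y e)) y := by
      intro y
      by_cases hy : y ∈ unitDisc
      · simp [hy, hψd]; ring
      · simp [hy]
    have a2 : ∀ y, φ.normed volume (z - y) * unitDisc.indicator g y
        = unitDisc.indicator (fun y => ψ y * g y) y := by
      intro y
      by_cases hy : y ∈ unitDisc
      · simp [hy, hψ]
      · simp [hy]
    simp_rw [a1, a2]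
    rw [integral_indicator hm, integral_indicator hm, integral_neg, heq, neg_neg]
  exact ⟨main _ _ hw.1, main _ _ hw.2⟩

/-- The area sub-mean value inequality passes to mollifications, which are averages of
translates. -/
lemma moll_submean (φ : ContDiffBump (0 : ℂ)) {V : ℂ → ℝ} (hV : Integrable V) {Ω : Set ℂ}
    (hsub : ∀ c r, closedBall c r ⊆ Ω → 0 ≤ ∫ t in ball (0:ℂ) r, (V (c + t) - V c))
    {z : ℂ} {r : ℝ} (hz : closedBall z (φ.rOut + r) ⊆ Ω) :
    0 ≤ ∫ t in ball (0:ℂ) r, (moll φ V (z + t) - moll φ V z) := by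
  have h1 : ∀ t, moll φ V (z + t) - moll φ V z
      = ∫ w, φ.normed volume w * (V (z - w + t) - V (z - w)) := by
    intro t
    rw [moll, moll, ← integral_sub (moll_integrable φ hV _) (moll_integrable φ hV _)]
    congr 1; ext w
    rw [← mul_sub]; congr 3; ring
  simp_rw [h1]
  rw [integral_integral_swap]
  · refine integral_nonneg fun w => ?_
    simp only [Pi.zero_apply]
    rw [integral_const_mul]
    by_cases hw : w ∈ ball (0:ℂ) φ.rOut
    · refine mul_nonneg (φ.nonneg_normed _) (hsub _ _ (subset_trans ?_ hz))
      refine closedBall_subset_closedBall' ?_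
      have : ‖w‖ < φ.rOut := by simpa using hw
      rw [dist_eq_norm]; simp; linarith
    · rw [← φ.support_normed_eq (μ := volume), Function.notMem_support] at hw
      simp [hw]
  · have a1 : Integrable (fun p : ℂ × ℂ => φ.normed volume p.2 * V (z + (p.1 - p.2)))
        (volume.prod volume) :=
      Integrable.convolution_integrand (ContinuousLinearMap.lsmul ℝ ℝ)
        φ.integrable_normed (hV.comp_add_left z)
    have a2 : Integrable (fun p : ℂ × ℂ => φ.normed volume p.2 * V (z - p.2))
        ((volume.restrict (ball (0:ℂ) r)).prod volume) := by
      have : IsFiniteMeasure (volume.restrict (ball (0:ℂ) r)) :=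
        ⟨by rw [Measure.restrict_apply_univ]; exact measure_ball_lt_top⟩
      exact (moll_integrable φ hV z).comp_snd _
    have a1' : Integrable (fun p : ℂ × ℂ => φ.normed volume p.2 * V (z + (p.1 - p.2)))
        ((volume.restrict (ball (0:ℂ) r)).prod volume) := by
      refine a1.mono_measure ?_
      exact Measure.prod_mono Measure.restrict_le_self le_rfl
    refine (a1'.sub a2).congr (ae_of_all _ fun p => ?_)
    simp only [Function.uncurry, Pi.sub_apply]
    rw [← mul_sub]; congr 3; ring

/-! ### From circle means to area means -/

lemma measurable_indicator_of_usc {f : ℂ → ℝ} {U : Set ℂ} (hU : MeasurableSet U)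
    (hf : UpperSemicontinuousOn f U) : Measurable (U.indicator f) := by
  refine measurable_of_restrict_of_restrict_compl hU ?_ ?_
  · have : U.domRestrict (U.indicator f) = U.domRestrict f := by
      ext x
      exact indicator_of_mem x.2 f
    rw [this]
    exact (upperSemicontinuousOn_iff_restrict.2 hf).measurable
  · have : Uᶜ.domRestrict (U.indicator f) = fun _ => 0 := by
      ext x
      exact indicator_of_notMem x.2 f
    rw [this]
    exact measurable_const

lemma polar_integrable {F : ℂ → ℝ} (hm : Measurable F) (hF : Integrable F) :
    IntegrableOn (fun p : ℝ × ℝ => p.1 * F (Complex.polarCoord.symm p)) polarCoord.target := by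
  have hc : Measurable (fun p : ℝ × ℝ => F (Complex.polarCoord.symm p)) := by
    simp_rw [Complex.polarCoord_symm_apply]
    exact hm.comp (by fun_prop)
  refine ⟨(measurable_fst.mul hc).aestronglyMeasurable, ?_⟩
  have h := Complex.lintegral_comp_polarCoord_symm (fun z => ‖F z‖ₑ)
  have h2 : ∫⁻ z, ‖F z‖ₑ < ⊤ := hF.2
  rw [← h] at h2
  refine lt_of_le_of_lt (le_of_eq ?_) h2
  refine setLIntegral_congr_fun polarCoord.open_target.measurableSet fun p hp => ?_
  have hp1 : 0 < p.1 := by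
    rw [polarCoord_target] at hp; exact hp.1
  simp only [enorm_mul, smul_eq_mul]
  rw [Real.enorm_of_nonneg hp1.le]

/-- The sub-mean value inequality in the parametrisation of polar coordinates, with `v c` moved
under the integral. If `v` is not integrable on the circle, the integrand on the right is not
integrable either and the integral is `0` by convention, so the inequality still holds. -/
lemma circle_submean {v : ℂ → ℝ} {Ω : Set ℂ} (hv : SubhOn v Ω) {c : ℂ} {s : ℝ} (hs : 0 < s)
    (hc : closedBall c s ⊆ Ω) :
    0 ≤ ∫ θ in Ioo (-Real.pi) Real.pi, (v (c + s * Complex.exp (θ * Complex.I)) - v c) := by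
  have hpi := Real.pi_pos
  by_cases hI : IntegrableOn (fun θ : ℝ => v (c + s * Complex.exp (θ * Complex.I)))
      (Ioo (-Real.pi) Real.pi)
  · have hper : Function.Periodic (fun θ : ℝ => v (c + s * Complex.exp (θ * Complex.I)))
        (2 * Real.pi) := by
      intro θ
      have : Complex.exp (((θ + 2 * Real.pi : ℝ) : ℂ) * Complex.I)
          = Complex.exp (θ * Complex.I) := by
        push_cast
        rw [add_mul]; exact Complex.exp_periodic _
      simp only [this]
    have h1 := hper.intervalIntegral_add_eq (-Real.pi) 0
    have h2 := hv.submean c s hs hc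
    rw [integral_sub hI (integrableOn_const (by simp))]
    rw [show -Real.pi + 2 * Real.pi = Real.pi by ring, zero_add,
      intervalIntegral.integral_of_le (by linarith), integral_Ioc_eq_integral_Ioo] at h1
    rw [circAvg, ← h1] at h2
    rw [h1] at h2 ⊢
    rw [setIntegral_const]
    simp only [Measure.real, Real.volume_Ioo, smul_eq_mul]
    rw [ENNReal.toReal_ofReal (by linarith)]
    have h3 := mul_le_mul_of_nonneg_left h2 (by positivity : 0 ≤ 2 * Real.pi)
    rw [← mul_assoc, mul_inv_cancel₀ (by positivity), one_mul] at h3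
    linarith
  · rw [integral_undef]
    intro h
    apply hI
    have h' : IntegrableOn (fun _ : ℝ => v c) (Ioo (-Real.pi) Real.pi) :=
      integrableOn_const (by simp)
    refine (h.add h').congr (ae_of_all _ fun θ => ?_)
    simp

/-- The area sub-mean value inequality for a subharmonic function, by integrating
`circle_submean` over the radius. -/
lemma area_submean {v : ℂ → ℝ} {Ω : Set ℂ} (hΩ : MeasurableSet Ω) (hv : SubhOn v Ω)
    (hV : Integrable (Ω.indicator v)) (c : ℂ) (r : ℝ) (hc : closedBall c r ⊆ Ω) :
    0 ≤ ∫ t in ball (0:ℂ) r, (Ω.indicator v (c + t) - Ω.indicator v c) := by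
  have hm := measurable_indicator_of_usc hΩ hv.usc
  set V := Ω.indicator v with hVd
  rw [← integral_indicator measurableSet_ball]
  set F : ℂ → ℝ := (ball (0:ℂ) r).indicator (fun t => V (c + t) - V c) with hF
  have hFm : Measurable F :=
    ((hm.comp (measurable_const_add c)).sub measurable_const).indicator measurableSet_ball
  have hFi : Integrable F := by
    refine IntegrableOn.integrable_indicator ?_ measurableSet_ball
    exact (hV.comp_add_left c).integrableOn.sub (integrableOn_const measure_ball_lt_top.ne)
  rw [← Complex.integral_comp_polarCoord_symm]
  have hi := polar_integrable hFm hFi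
  simp only [smul_eq_mul]
  rw [polarCoord_target] at hi ⊢
  rw [Measure.volume_eq_prod] at hi ⊢
  rw [setIntegral_prod _ hi]
  refine setIntegral_nonneg measurableSet_Ioi fun s hs => ?_
  have hs : 0 < s := hs
  simp only
  rw [integral_const_mul]
  refine mul_nonneg hs.le ?_
  have hn : ∀ θ : ℝ, ‖(Complex.polarCoord.symm (s, θ) : ℂ)‖ = s := fun θ => by
    rw [Complex.norm_polarCoord_symm, abs_of_pos hs]
  by_cases hsr : s < r
  · have hcs : closedBall c s ⊆ Ω := (closedBall_subset_closedBall hsr.le).trans hc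
    have e : ∀ θ : ℝ, F (Complex.polarCoord.symm (s, θ))
        = v (c + s * Complex.exp (θ * Complex.I)) - v c := by
      intro θ
      have h1 : Complex.polarCoord.symm (s, θ) ∈ ball (0:ℂ) r := by
        rw [mem_ball_zero_iff, hn]; exact hsr
      have h2 : Complex.polarCoord.symm (s, θ) = s * Complex.exp (θ * Complex.I) := by
        rw [Complex.polarCoord_symm_apply, Complex.exp_mul_I]
        simp
      have h3 : c + Complex.polarCoord.symm (s, θ) ∈ Ω := hcs (by
        rw [mem_closedBall, dist_eq_norm, add_sub_cancel_left, hn])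
      have h4 : c ∈ Ω := hcs (by simp [hs.le])
      rw [hF, indicator_of_mem h1, hVd, indicator_of_mem h3, indicator_of_mem h4, h2]
    simp_rw [e]
    exact circle_submean hv hs hcs
  · have e : ∀ θ : ℝ, F (Complex.polarCoord.symm (s, θ)) = 0 := by
      intro θ
      have h1 : Complex.polarCoord.symm (s, θ) ∉ ball (0:ℂ) r := by
        rw [mem_ball_zero_iff, hn]; exact hsr
      rw [hF, indicator_of_notMem h1]
    simp_rw [e]
    simp

/-! ### Weak limits -/

/-- Weak compactness of balls in `L²`: a bounded sequence has a weak cluster point `h` (its limit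
along a nonprincipal ultrafilter, by Banach-Alaoglu and Riesz representation). Hence `h` computes
every limit of integrals against a fixed `L²` function that exists along the whole sequence. -/
lemma weak_limit {μ : Measure ℂ} {F : ℕ → ℂ → ℝ} {M : ℝ} (hF : ∀ n, MemLp (F n) 2 μ)
    (hM : ∀ n, ∫ z, F n z ^ 2 ∂μ ≤ M) :
    ∃ h : ℂ → ℝ, MemLp h 2 μ ∧ ∫ z, h z ^ 2 ∂μ ≤ M ∧
      ∀ ψ : ℂ → ℝ, MemLp ψ 2 μ → ∀ L : ℝ,
        Tendsto (fun n => ∫ z, ψ z * F n z ∂μ) atTop (𝓝 L) → L = ∫ z, ψ z * h z ∂μ := by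
  have hM0 : 0 ≤ M := (integral_nonneg fun z => sq_nonneg (F 0 z)).trans (hM 0)
  have hinner : ∀ f g : Lp ℝ 2 μ, inner ℝ f g = ∫ z, g z * f z ∂μ := fun f g => by
    rw [L2.inner_def]; simp
  have hnorm : ∀ f : Lp ℝ 2 μ, ‖f‖ ^ 2 = ∫ z, f z ^ 2 ∂μ := fun f => by
    rw [← real_inner_self_eq_norm_sq, hinner]; simp_rw [pow_two]
  let f : ℕ → Lp ℝ 2 μ := fun n => (hF n).toLp
  have hf : ∀ n, ‖f n‖ ≤ √M := fun n => by
    refine Real.le_sqrt_of_sq_le ?_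
    rw [hnorm]
    refine (integral_congr_ae ?_).trans_le (hM n)
    filter_upwards [(hF n).coeFn_toLp] with z hz
    simp only [f, hz]
  let T : ℕ → WeakDual ℝ (Lp ℝ 2 μ) :=
    fun n => WeakDual.toStrongDual.symm (InnerProductSpace.toDual ℝ (Lp ℝ 2 μ) (f n))
  have hK := WeakDual.isCompact_closedBall (0 : StrongDual ℝ (Lp ℝ 2 μ)) (√M)
  obtain ⟨S, hS, hlim⟩ := hK.ultrafilter_le_nhds ((hyperfilter ℕ).map T) (by
    rw [le_principal_iff, Ultrafilter.mem_coe, Ultrafilter.mem_map]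
    refine Filter.univ_mem' fun n => ?_
    simpa [T] using hf n)
  let h : Lp ℝ 2 μ := (InnerProductSpace.toDual ℝ (Lp ℝ 2 μ)).symm (WeakDual.toStrongDual S)
  have hSh : ∀ g : Lp ℝ 2 μ, S g = inner ℝ h g := fun g => by
    simp only [h, InnerProductSpace.toDual_symm_apply]; rfl
  refine ⟨h, Lp.memLp h, ?_, ?_⟩
  · rw [← hnorm]
    have : ‖h‖ ≤ √M := by
      simpa [h] using hS
    calc ‖h‖ ^ 2 ≤ √M ^ 2 := by gcongr
      _ = M := Real.sq_sqrt hM0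
  · intro ψ hψ L hL
    have h1 : Tendsto (fun n => T n hψ.toLp) (hyperfilter ℕ) (𝓝 (S hψ.toLp)) := by
      have : Tendsto T (hyperfilter ℕ) (𝓝 S) := hlim
      exact ((WeakDual.eval_continuous hψ.toLp).tendsto S).comp this
    have h2 : ∀ n, T n hψ.toLp = ∫ z, ψ z * F n z ∂μ := by
      intro n
      have : T n hψ.toLp = inner ℝ (f n) hψ.toLp := rfl
      rw [this, hinner]
      refine integral_congr_ae ?_
      filter_upwards [(hF n).coeFn_toLp, hψ.coeFn_toLp] with z hz hz'
      simp only [f, hz, hz']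
    have h3 : S hψ.toLp = ∫ z, ψ z * h z ∂μ := by
      rw [hSh, hinner]
      refine integral_congr_ae ?_
      filter_upwards [hψ.coeFn_toLp] with z hz'
      simp only [hz']
    simp_rw [h2] at h1
    rw [← h3]
    exact tendsto_nhds_unique (hL.mono_left Nat.hyperfilter_le_atTop) h1

/-- Mollification is symmetric because bump functions are even. -/
lemma moll_adjoint (φ : ContDiffBump (0 : ℂ)) {V ψ : ℂ → ℝ} (hV : Integrable V)
    (hψ : Continuous ψ) (hψc : HasCompactSupport ψ) :
    ∫ z, moll φ V z * ψ z = ∫ y, V y * moll φ ψ y := by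
  obtain ⟨K, hK⟩ := hψ.bounded_above_of_compact_support hψc
  have h1 : ∀ z, moll φ V z * ψ z = ∫ y, V y * φ.normed volume (z - y) * ψ z := fun z => by
    rw [moll_swap, ← integral_mul_const]
    congr 1; ext y; ring
  have h2 : ∀ y, V y * moll φ ψ y = ∫ z, V y * φ.normed volume (z - y) * ψ z := fun y => by
    rw [moll_swap, ← integral_const_mul]
    congr 1; ext z
    rw [← φ.normed_neg (z - y), neg_sub, mul_assoc]
  simp_rw [h1, h2]
  refine integral_integral_swap ?_
  have a1 : Integrable (fun p : ℂ × ℂ => V p.2 * φ.normed volume (p.1 - p.2))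
      (volume.prod volume) :=
    Integrable.convolution_integrand (ContinuousLinearMap.lsmul ℝ ℝ) hV φ.integrable_normed
  exact a1.mul_bdd (c := K) (hψ.comp continuous_fst).aestronglyMeasurable (ae_of_all _ fun p => hK p.1)

lemma moll_tendsto {φ : ℕ → ContDiffBump (0 : ℂ)}
    (hφ : Tendsto (fun n => (φ n).rOut) atTop (𝓝 0)) {V ψ : ℂ → ℝ} (hV : Integrable V)
    (hψ : Continuous ψ) (hψc : HasCompactSupport ψ) :
    Tendsto (fun n => ∫ z, moll (φ n) V z * ψ z) atTop (𝓝 (∫ z, V z * ψ z)) := by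
  simp_rw [moll_adjoint _ hV hψ hψc]
  obtain ⟨K, hK⟩ := hψ.bounded_above_of_compact_support hψc
  have hψi : Integrable ψ := hψ.integrable_of_hasCompactSupport hψc
  refine tendsto_integral_of_dominated_convergence (fun z => ‖V z‖ * K) ?_ (hV.norm.mul_const K)
    ?_ ?_
  · exact fun n => hV.1.mul (moll_contDiff (φ n) hψi).continuous.aestronglyMeasurable
  · refine fun n => ae_of_all _ fun z => ?_
    rw [norm_mul]
    refine mul_le_mul_of_nonneg_left ?_ (norm_nonneg _)
    calc ‖moll (φ n) ψ z‖ ≤ ∫ t, (φ n).normed volume t * K := by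
          refine norm_integral_le_of_norm_le ((φ n).integrable_normed.mul_const K)
            (ae_of_all _ fun t => ?_)
          rw [norm_mul, Real.norm_of_nonneg ((φ n).nonneg_normed _)]
          exact mul_le_mul_of_nonneg_left (hK _) ((φ n).nonneg_normed _)
      _ = K := by rw [integral_mul_const, (φ n).integral_normed, one_mul]
  · refine ae_of_all _ fun z => ?_
    exact (ContDiffBump.convolution_tendsto_right_of_continuous hφ hψ z).const_mul _

/-- If the derivatives in direction `e` of the mollifications of `V` are bounded in `L²(D)`, then
`V` has a weak derivative in direction `e` on `D`, obeying the same bound. -/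
lemma weak_deriv_of_bound {V : ℂ → ℝ} (hV : Integrable V) {D : Set ℂ}
    {φ : ℕ → ContDiffBump (0 : ℂ)}
    (hφ : Tendsto (fun n => (φ n).rOut) atTop (𝓝 0)) (e : ℂ) {M : ℝ}
    (hi : ∀ n, IntegrableOn (fun z => fderiv ℝ (moll (φ n) V) z e ^ 2) D)
    (hb : ∀ n, ∫ z in D, fderiv ℝ (moll (φ n) V) z e ^ 2 ≤ M) :
    ∃ h : ℂ → ℝ, MemLp h 2 (volume.restrict D) ∧ ∫ z in D, h z ^ 2 ≤ M ∧
      ∀ ψ : ℂ → ℝ, ContDiff ℝ ∞ ψ → HasCompactSupport ψ → tsupport ψ ⊆ D →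
        ∫ z in D, V z * fderiv ℝ ψ z e = -∫ z in D, ψ z * h z := by
  have hs : ∀ n, ContDiff ℝ ∞ (moll (φ n) V) := fun n => moll_contDiff _ hV
  have hc : ∀ n, Continuous (fun z => fderiv ℝ (moll (φ n) V) z e) := fun n =>
    (((hs n).fderiv_right (m := ∞) (by simp)).clm_apply contDiff_const).continuous
  obtain ⟨h, h1, h2, h3⟩ := weak_limit (μ := volume.restrict D)
    (F := fun n z => fderiv ℝ (moll (φ n) V) z e) (M := M)
    (fun n => (memLp_two_iff_integrable_sq (hc n).aestronglyMeasurable).2 (hi n)) hb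
  refine ⟨h, h1, h2, fun ψ hψ hψc hψD => ?_⟩
  have hψ' : Continuous (fun z => fderiv ℝ ψ z e) :=
    ((hψ.fderiv_right (m := ∞) (by simp)).clm_apply contDiff_const).continuous
  have hψ'0 : ∀ z ∉ tsupport ψ, fderiv ℝ ψ z e = 0 := fun z hz => by
    have : fderiv ℝ ψ z = 0 :=
      image_eq_zero_of_notMem_tsupport (fun h => hz (tsupport_fderiv_subset ℝ h))
    simp [this]
  have hψ0 : ∀ z ∉ tsupport ψ, ψ z = 0 := fun z hz => image_eq_zero_of_notMem_tsupport hz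
  have hψ'c : HasCompactSupport (fun z => fderiv ℝ ψ z e) := HasCompactSupport.intro hψc hψ'0
  have int : ∀ {G : ℂ → ℝ}, Continuous G → (∀ z ∉ tsupport ψ, G z = 0) → Integrable G :=
    fun hG h0 => hG.integrable_of_hasCompactSupport (HasCompactSupport.intro hψc (fun z hz => h0 z hz))
  have hψL : MemLp ψ 2 (volume.restrict D) :=
    (hψ.continuous.memLp_of_hasCompactSupport hψc).restrict D
  have hlim := (moll_tendsto hφ hV hψ' hψ'c).neg
  have heq : ∀ n, -∫ z, moll (φ n) V z * fderiv ℝ ψ z e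
      = ∫ z in D, ψ z * fderiv ℝ (moll (φ n) V) z e := by
    intro n
    rw [setIntegral_eq_integral_of_forall_compl_eq_zero
      (fun z hz => by simp [hψ0 z (fun h => hz (hψD h))])]
    rw [integral_mul_fderiv_eq_neg_fderiv_mul_of_integrable]
    · rw [neg_neg]
      simp_rw [mul_comm]
    · exact int ((hc n).mul hψ.continuous) (fun z hz => by simp [hψ0 z hz])
    · exact int ((hs n).continuous.mul hψ') (fun z hz => by simp [hψ'0 z hz])
    · exact int ((hs n).continuous.mul hψ.continuous) (fun z hz => by simp [hψ0 z hz])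
    · exact fun z _ => (hs n).differentiable (by simp) z
    · exact fun z _ => hψ.differentiable (by simp) z
  simp_rw [heq] at hlim
  have := h3 ψ hψL _ hlim
  rw [← this, neg_neg]
  exact setIntegral_eq_integral_of_forall_compl_eq_zero
    (fun z hz => by simp [hψ'0 z (fun h => hz (hψD h))])

/-! ### The uniform gradient bound and the conclusion -/

lemma sq_integrable_facts {μ : Measure ℂ} [IsFiniteMeasure μ] {f F : ℂ → ℝ}
    (hf : AEStronglyMeasurable f μ) (hF : Integrable F μ) (h : ∀ᵐ z ∂μ, f z ^ 2 ≤ F z) :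
    Integrable (fun z => f z ^ 2) μ ∧ Integrable f μ := by
  have h1 : Integrable (fun z => f z ^ 2) μ := by
    refine hF.mono' (hf.pow 2) (h.mono fun z hz => ?_)
    rwa [Real.norm_of_nonneg (sq_nonneg _)]
  exact ⟨h1, ((memLp_two_iff_integrable_sq hf).2 h1).integrable one_le_two⟩

lemma indicator_sq (f : ℂ → ℝ) (s : Set ℂ) :
    (fun z => s.indicator f z ^ 2) = s.indicator (fun z => f z ^ 2) := by
  ext z
  by_cases hz : z ∈ s <;> simp [hz]

/-- The gradient of a mollification of `v` on the disc of radius `R`, bounded independently of the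
mollifier. The cut-off `η` is supported in the disc of radius `(1 + R) / 2`, so that discs of
radius below `(1 - R) / 4` around points of its support, fattened by `φ.rOut ≤ (1 - R) / 4`,
remain in the unit disc. -/
lemma gradient_bound {R K : ℝ} (η φ : ContDiffBump (0 : ℂ))
    (hηR : η.rIn = R) (hηR' : η.rOut = (1 + R) / 2)
    (hK : ∀ z, ‖fderiv ℝ η z‖ ≤ K) (hφ : φ.rOut ≤ (1 - R) / 4)
    {u v g₁ g₂ : ℂ → ℝ} (hv : SubhOn v unitDisc)
    (huv : ∀ z ∈ unitDisc, u z ≤ v z) (hv0 : ∀ z ∈ unitDisc, v z ≤ 0)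
    (hg : HasWeakGradOnC u g₁ g₂ unitDisc)
    (hu : IntegrableOn u unitDisc) (hvi : IntegrableOn v unitDisc)
    (hu2 : IntegrableOn (fun z => u z ^ 2) unitDisc)
    (h1 : IntegrableOn g₁ unitDisc) (h12 : IntegrableOn (fun z => g₁ z ^ 2) unitDisc)
    (h2 : IntegrableOn g₂ unitDisc) (h22 : IntegrableOn (fun z => g₂ z ^ 2) unitDisc) :
    IntegrableOn (fun z => fderiv ℝ (moll φ (unitDisc.indicator v)) z 1 ^ 2
        + fderiv ℝ (moll φ (unitDisc.indicator v)) z Complex.I ^ 2) (ball 0 R) ∧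
    ∫ z in ball 0 R, (fderiv ℝ (moll φ (unitDisc.indicator v)) z 1 ^ 2
        + fderiv ℝ (moll φ (unitDisc.indicator v)) z Complex.I ^ 2)
      ≤ 2 * (1 + 8 * K ^ 2) * ∫ z in unitDisc, (u z ^ 2 + g₁ z ^ 2 + g₂ z ^ 2) := by
  have hR1 : R < 1 := by
    have := φ.rOut_pos
    linarith
  have hm : MeasurableSet unitDisc := measurableSet_ball
  have sq : ∀ {f : ℂ → ℝ}, IntegrableOn (fun z => f z ^ 2) unitDisc →
      Integrable (fun z => unitDisc.indicator f z ^ 2) := fun {f} hf => by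
    rw [indicator_sq]; exact hf.integrable_indicator hm
  have sqi : ∀ f : ℂ → ℝ, ∫ z, unitDisc.indicator f z ^ 2 = ∫ z in unitDisc, f z ^ 2 := fun f => by
    rw [indicator_sq, integral_indicator hm]
  have hU := hu.integrable_indicator hm
  have hV := hvi.integrable_indicator hm
  have hG1 := h1.integrable_indicator hm
  have hG2 := h2.integrable_indicator hm
  have sU := moll_sq_integral φ hU (sq hu2)
  have sG1 := moll_sq_integral φ hG1 (sq h12)
  have sG2 := moll_sq_integral φ hG2 (sq h22)
  have hball : ∀ z ∈ tsupport η, ∀ r < (1 - R) / 4, closedBall z (φ.rOut + r) ⊆ unitDisc := by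
    intro z hz r hr
    rw [η.tsupport_eq, mem_closedBall_zero_iff, hηR'] at hz
    intro y hy
    rw [mem_closedBall, dist_eq_norm] at hy
    rw [unitDisc, mem_ball_zero_iff]
    have := norm_le_norm_add_norm_sub z y
    rw [norm_sub_rev] at this
    linarith
  have hwd : ∀ z ∈ tsupport η, _ := fun z hz => moll_fderiv_weak φ hg hu
    (z := z) (by simpa using hball z hz 0 (by linarith))
  have hfs := moll_contDiff φ hV
  have hws := moll_contDiff φ hU
  have hcac := caccioppoli hfs hws η.contDiff η.hasCompactSupport
    (fun z _ => moll_mono φ hU hV (fun z => by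
      by_cases hz : z ∈ unitDisc
      · simpa [hz] using huv z hz
      · simp [hz]) z)
    (fun z _ => moll_nonpos φ (fun z => by
      by_cases hz : z ∈ unitDisc
      · simpa [hz] using hv0 z hz
      · simp [hz]) z)
    (fun z hz => laplacian_nonneg hfs z ((1 - R) / 4) (by linarith) (fun r _ hr =>
      moll_submean φ hV (fun c r hc => area_submean hm hv hV c r hc) (hball z hz r hr)))
  set f := moll φ (unitDisc.indicator v) with hf
  set w := moll φ (unitDisc.indicator u) with hw
  have cf' : ∀ e, Continuous (fun z => fderiv ℝ f z e) := fun e =>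
    ((hfs.fderiv_right (m := ∞) (by simp)).clm_apply contDiff_const).continuous
  have cf1 := cf' 1
  have cf2 := cf' Complex.I
  have hInt : IntegrableOn (fun z => fderiv ℝ f z 1 ^ 2 + fderiv ℝ f z Complex.I ^ 2)
      (ball 0 R) :=
    (ContinuousOn.integrableOn_compact (isCompact_closedBall (0:ℂ) R) (by fun_prop)).mono_set
      ball_subset_closedBall
  have hηint : Integrable
      (fun z => η z ^ 2 * (fderiv ℝ f z 1 ^ 2 + fderiv ℝ f z Complex.I ^ 2)) := by
    refine Continuous.integrable_of_hasCompactSupport ?_ ?_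
    · have := η.continuous
      fun_prop
    · refine HasCompactSupport.intro η.hasCompactSupport fun z hz => ?_
      rw [image_eq_zero_of_notMem_tsupport hz]; simp
  refine ⟨hInt, ?_⟩
  have hKsq : ∀ z, fderiv ℝ η z 1 ^ 2 + fderiv ℝ η z Complex.I ^ 2 ≤ 2 * K ^ 2 := by
    intro z
    have b : ∀ e : ℂ, ‖e‖ = 1 → fderiv ℝ η z e ^ 2 ≤ K ^ 2 := by
      intro e he
      have := (fderiv ℝ η z).le_opNorm e
      rw [he, mul_one] at this
      exact sq_le_sq' (by linarith [neg_abs_le (fderiv ℝ η z e), hK z, Real.norm_eq_abs (fderiv ℝ η z e)])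
        ((le_abs_self _).trans (this.trans (hK z)))
    have := b 1 (by simp)
    have := b Complex.I (by simp)
    linarith
  calc ∫ z in ball 0 R, (fderiv ℝ f z 1 ^ 2 + fderiv ℝ f z Complex.I ^ 2)
      = ∫ z in ball 0 R, η z ^ 2 * (fderiv ℝ f z 1 ^ 2 + fderiv ℝ f z Complex.I ^ 2) := by
        refine setIntegral_congr_fun measurableSet_ball fun z hz => ?_
        have : η z = 1 := η.one_of_mem_closedBall (by
          rw [hηR]; exact ball_subset_closedBall hz)
        simp [this]
    _ ≤ ∫ z, η z ^ 2 * (fderiv ℝ f z 1 ^ 2 + fderiv ℝ f z Complex.I ^ 2) :=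
        setIntegral_le_integral hηint (ae_of_all _ fun z => by positivity)
    _ ≤ _ := hcac
    _ ≤ 2 * ∫ z, (8 * K ^ 2 * w z ^ 2 + moll φ (unitDisc.indicator g₁) z ^ 2
          + moll φ (unitDisc.indicator g₂) z ^ 2) := by
        refine mul_le_mul_of_nonneg_left ?_ (by norm_num)
        refine integral_mono_of_nonneg (ae_of_all _ fun z => by positivity)
          (((sU.1.const_mul _).add sG1.1).add sG2.1) (ae_of_all _ fun z => ?_)
        by_cases hz : z ∈ tsupport η
        · have e := hwd z hz
          simp only [e.1, e.2]
          have n1 : η z ^ 2 ≤ 1 := pow_le_one₀ η.nonneg η.le_one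
          have n2 := mul_le_mul_of_nonneg_left (hKsq z)
            (by positivity : 0 ≤ 4 * w z ^ 2)
          have n3 := mul_le_mul_of_nonneg_right n1 (by positivity :
            0 ≤ moll φ (unitDisc.indicator g₁) z ^ 2 + moll φ (unitDisc.indicator g₂) z ^ 2)
          linarith
        · have z1 : η z = 0 := image_eq_zero_of_notMem_tsupport hz
          have z2 : fderiv ℝ η z = 0 :=
            image_eq_zero_of_notMem_tsupport (fun h => hz (tsupport_fderiv_subset ℝ h))
          simp only [z1, z2]
          simp
          positivity
    _ = 2 * (8 * K ^ 2 * ∫ z, w z ^ 2) + 2 * (∫ z, moll φ (unitDisc.indicator g₁) z ^ 2)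
          + 2 * ∫ z, moll φ (unitDisc.indicator g₂) z ^ 2 := by
        rw [integral_add (f := fun z => 8 * K ^ 2 * w z ^ 2
          + moll φ (unitDisc.indicator g₁) z ^ 2) ((sU.1.const_mul _).add sG1.1) sG2.1,
          integral_add (sU.1.const_mul _) sG1.1, integral_const_mul]
        ring
    _ ≤ 2 * (8 * K ^ 2 * ∫ z in unitDisc, u z ^ 2) + 2 * (∫ z in unitDisc, g₁ z ^ 2)
          + 2 * ∫ z in unitDisc, g₂ z ^ 2 := by
        have := sU.2
        have := sG1.2
        have := sG2.2
        rw [sqi] at *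
        gcongr
    _ ≤ _ := by
        rw [integral_add (f := fun z => u z ^ 2 + g₁ z ^ 2) (Integrable.add hu2 h12) h22,
          integral_add hu2 h12]
        have p1 : 0 ≤ ∫ z in unitDisc, u z ^ 2 := integral_nonneg fun z => sq_nonneg _
        have p2 : 0 ≤ ∫ z in unitDisc, g₁ z ^ 2 := integral_nonneg fun z => sq_nonneg _
        have p3 : 0 ≤ ∫ z in unitDisc, g₂ z ^ 2 := integral_nonneg fun z => sq_nonneg _
        have p4 := mul_nonneg (sq_nonneg K) p2
        have p5 := mul_nonneg (sq_nonneg K) p3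
        nlinarith

/-- **Lemma (Błocki).** Let `D ⋐ 𝔻`.  If `u, v` are subharmonic on `𝔻` with
`u ≤ v ≤ 0` and `u ∈ W^{1,2}(𝔻)`, then `v ∈ W^{1,2}(D)` and
`‖v‖_{W^{1,2}(D)} ≤ C ‖u‖_{W^{1,2}(𝔻)}`, where `C` depends only on `D`. -/
theorem subharmonic_w12_estimate
    (D : Set ℂ) (hD : IsOpen D) (hDsub : closure D ⊆ unitDisc) :
    ∃ C : ℝ, 0 < C ∧
      ∀ u v g₁ g₂ : ℂ → ℝ,
        SubhOn u unitDisc → SubhOn v unitDisc →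
        (∀ z ∈ unitDisc, u z ≤ v z) → (∀ z ∈ unitDisc, v z ≤ 0) →
        HasWeakGradOnC u g₁ g₂ unitDisc →
        IntegrableOn (fun z => (u z) ^ 2 + (g₁ z) ^ 2 + (g₂ z) ^ 2) unitDisc volume →
        ∃ h₁ h₂ : ℂ → ℝ, HasWeakGradOnC v h₁ h₂ D ∧
          IntegrableOn (fun z => (v z) ^ 2 + (h₁ z) ^ 2 + (h₂ z) ^ 2) D volume ∧
          W12normC v h₁ h₂ D ≤ C * W12normC u g₁ g₂ unitDisc := by
  obtain ⟨R, ⟨hR0, hR1⟩, hDR⟩ := exists_pos_lt_subset_ball one_pos isClosed_closure hDsub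
  replace hDR : D ⊆ ball 0 R := subset_closure.trans hDR
  have hDu : D ⊆ unitDisc := subset_closure.trans hDsub
  -- `η` is a cut-off equal to `1` on the disc of radius `R`, which contains `D`.
  let η : ContDiffBump (0 : ℂ) := ⟨R, (1 + R) / 2, hR0, by linarith⟩
  obtain ⟨K, hK⟩ := ((η.contDiff (n := 1)).continuous_fderiv (by simp)).bounded_above_of_compact_support
    (η.hasCompactSupport.fderiv ℝ)
  set M₀ : ℝ := 2 * (1 + 8 * K ^ 2) with hM₀
  refine ⟨√(1 + 2 * M₀), by positivity, ?_⟩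
  intro u v g₁ g₂ _ hv huv hv0 hg hInt
  have hm : MeasurableSet unitDisc := measurableSet_ball
  have : IsFiniteMeasure (volume.restrict unitDisc) :=
    ⟨by rw [Measure.restrict_apply_univ]; exact measure_ball_lt_top⟩
  have fu := sq_integrable_facts hg.1.aestronglyMeasurable hInt
    (ae_of_all _ fun z => by nlinarith [sq_nonneg (g₁ z), sq_nonneg (g₂ z)])
  have f1 := sq_integrable_facts hg.2.1.aestronglyMeasurable hInt
    (ae_of_all _ fun z => by nlinarith [sq_nonneg (u z), sq_nonneg (g₂ z)])
  have f2 := sq_integrable_facts hg.2.2.1.aestronglyMeasurable hInt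
    (ae_of_all _ fun z => by nlinarith [sq_nonneg (u z), sq_nonneg (g₁ z)])
  have hvu : ∀ z ∈ unitDisc, v z ^ 2 ≤ u z ^ 2 := fun z hz => by
    nlinarith [huv z hz, hv0 z hz]
  have hvm : AEStronglyMeasurable v (volume.restrict unitDisc) :=
    (aestronglyMeasurable_indicator_iff hm).1
      (measurable_indicator_of_usc hm hv.usc).aestronglyMeasurable
  have fv := sq_integrable_facts hvm fu.1 ((ae_restrict_mem hm).mono hvu)
  set E := ∫ z in unitDisc, (u z ^ 2 + g₁ z ^ 2 + g₂ z ^ 2) with hE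
  have hE0 : 0 ≤ E := integral_nonneg fun z => by positivity
  -- Mollifiers with radii `(1 - R) / (4 (n + 1))`.
  let φ : ℕ → ContDiffBump (0 : ℂ) := fun n =>
    ⟨(1 - R) / 4 / (n + 1) / 2, (1 - R) / 4 / (n + 1),
      by have : 0 < 1 - R := by linarith
         positivity,
      half_lt_self (by have : 0 < 1 - R := by linarith
                       positivity)⟩
  have hφ0 : Tendsto (fun n => (φ n).rOut) atTop (𝓝 0) :=
    tendsto_const_nhds.div_atTop (tendsto_natCast_atTop_atTop.atTop_add tendsto_const_nhds)
  have hφ1 : ∀ n, (φ n).rOut ≤ (1 - R) / 4 := fun n =>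
    div_le_self (by linarith) (by have : (0:ℝ) ≤ n := n.cast_nonneg
                                  linarith)
  have hbd := fun n => gradient_bound η (φ n) rfl rfl hK (hφ1 n) hv huv hv0 hg fu.2 fv.2
    fu.1 f1.2 f1.1 f2.2 f2.1
  have hV := IntegrableOn.integrable_indicator (f := v) fv.2 hm
  have dir : ∀ e : ℂ, (e = 1 ∨ e = Complex.I) →
      ∃ h : ℂ → ℝ, MemLp h 2 (volume.restrict D) ∧ ∫ z in D, h z ^ 2 ≤ M₀ * E ∧
      ∀ ψ : ℂ → ℝ, ContDiff ℝ (⊤ : ℕ∞) ψ → HasCompactSupport ψ → tsupport ψ ⊆ D →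
        ∫ z in D, unitDisc.indicator v z * fderiv ℝ ψ z e = -∫ z in D, ψ z * h z := by
    intro e he
    have hle : ∀ n z, fderiv ℝ (moll (φ n) (unitDisc.indicator v)) z e ^ 2 ≤
        fderiv ℝ (moll (φ n) (unitDisc.indicator v)) z 1 ^ 2
        + fderiv ℝ (moll (φ n) (unitDisc.indicator v)) z Complex.I ^ 2 := by
      intro n z
      rcases he with rfl | rfl
      · linarith [sq_nonneg (fderiv ℝ (moll (φ n) (unitDisc.indicator v)) z Complex.I)]
      · linarith [sq_nonneg (fderiv ℝ (moll (φ n) (unitDisc.indicator v)) z 1)]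
    have hc : ∀ n, Continuous (fun z => fderiv ℝ (moll (φ n) (unitDisc.indicator v)) z e) :=
      fun n => (((moll_contDiff (φ n) hV).fderiv_right (m := ∞) (by simp)).clm_apply
        contDiff_const).continuous
    have hi : ∀ n, IntegrableOn
        (fun z => fderiv ℝ (moll (φ n) (unitDisc.indicator v)) z e ^ 2) (ball 0 R) := fun n => by
      refine (hbd n).1.mono' ((hc n).pow 2).aestronglyMeasurable (ae_of_all _ fun z => ?_)
      rw [Real.norm_of_nonneg (sq_nonneg _)]
      exact hle n z
    refine weak_deriv_of_bound hV hφ0 e (fun n => (hi n).mono_set hDR) fun n => ?_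
    calc _ ≤ ∫ z in ball 0 R, fderiv ℝ (moll (φ n) (unitDisc.indicator v)) z e ^ 2 :=
          setIntegral_mono_set (hi n) (ae_of_all _ fun z => sq_nonneg _) hDR.eventuallyLE
      _ ≤ _ := integral_mono (hi n) (hbd n).1 (hle n)
      _ ≤ _ := (hbd n).2
  obtain ⟨h₁, m1, b1, w1⟩ := dir 1 (Or.inl rfl)
  obtain ⟨h₂, m2, b2, w2⟩ := dir Complex.I (Or.inr rfl)
  have : IsFiniteMeasure (volume.restrict D) :=
    ⟨by rw [Measure.restrict_apply_univ]
        exact (measure_mono hDR).trans_lt measure_ball_lt_top⟩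
  have q1 := m1.integrable_sq
  have q2 := m2.integrable_sq
  have qv : IntegrableOn (fun z => v z ^ 2) D := IntegrableOn.mono_set fv.1 hDu
  have hVv : ∀ ψ : ℂ → ℝ, ∫ z in D, unitDisc.indicator v z * ψ z = ∫ z in D, v z * ψ z :=
    fun ψ => setIntegral_congr_fun hD.measurableSet fun z hz => by simp [hDu hz]
  refine ⟨h₁, h₂, ⟨(IntegrableOn.mono_set fv.2 hDu).locallyIntegrableOn,
    IntegrableOn.locallyIntegrableOn (m1.integrable one_le_two),
    IntegrableOn.locallyIntegrableOn (m2.integrable one_le_two), fun ψ hψ hψc hψD => ?_⟩,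
    Integrable.add (Integrable.add qv q1) q2, ?_⟩
  · have a1 := w1 ψ hψ hψc hψD
    have a2 := w2 ψ hψ hψc hψD
    rw [hVv] at a1 a2
    exact ⟨a1, a2⟩
  · rw [W12normC, W12normC, ← Real.sqrt_mul (by positivity)]
    refine Real.sqrt_le_sqrt ?_
    rw [integral_add (f := fun z => v z ^ 2 + h₁ z ^ 2) (Integrable.add qv q1) q2, integral_add qv q1]
    have hvE : ∫ z in D, v z ^ 2 ≤ E :=
      calc ∫ z in D, v z ^ 2 ≤ ∫ z in unitDisc, v z ^ 2 :=
            setIntegral_mono_set fv.1 (ae_of_all _ fun z => sq_nonneg _) hDu.eventuallyLE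
        _ ≤ E := setIntegral_mono_on fv.1 hInt hm fun z hz => by
            nlinarith [hvu z hz, sq_nonneg (g₁ z), sq_nonneg (g₂ z)]
    linarith
end
end
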